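/- arXiv:2303.08160 — 3 statements merged into one kernel-verified Lean document; each statement's English description precedes it below -/
import Mathlib

section
/- The edge ideal I(K_V^t) of a complete t-spread d-partite hypergraph has linear quotients; more precisely, if the minimal monomial generators u_1, ..., u_r of I(K_V^t) are ordered decreasingly with respect to the lexicographic order induced by x_1 > x_2 > ... > x_n, then for every i = 2, ..., r the colon ideal (u_1, ..., u_{i-1}) : (u_i) is generated by variables. -/
/-!
Let `u`, `u'` be the monomials of edges `e`, `e'` with `u` lexicographically smaller than `u'`,
and let `v` be the first variable at which the exponents differ. Then `v` is a vertex of `e'` but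
not of `e`, say `v = e' k`. Every vertex of `e'` below `v` is also a vertex of `e`
and conversely, so (the parts being ordered and disjoint) `e` and `e'` agree in position `k - 1`
while `v < e k`. Replacing `e k` by `v` in `e` therefore only enlarges the gap to the right and
copies the gap of `e'` to the left: the result `e''` is again an edge (`exists_exchange`). Its
monomial is lexicographically larger than `u`, so `x_v * u = x_{e k} * u''` shows that `x_v` lies in
the colon ideal, and `x_v` divides `u' / gcd(u, u')`. Since all ideals involved are monomial,
the colon ideal is generated by the variables `x_v` arising from such exchanges.
-/

open MvPolynomial

/-- `e : Fin d → Fin n` encodes a `𝐭`-spread edge of the complete `𝐭`-spread `d`-partite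
hypergraph with vertex partition `V`: the `j`-th vertex `e j` lies in the `j`-th part `V j`,
and consecutive vertices are at least `t j` apart. -/
def IsSpreadEdge (n d : ℕ) (V : Fin d → Finset (Fin n)) (t : ℕ → ℕ) (e : Fin d → Fin n) :
    Prop :=
  (∀ j, e j ∈ V j) ∧
    ∀ (j : ℕ) (h : j + 1 < d),
      (e ⟨j, Nat.lt_of_succ_lt h⟩ : ℕ) + t j ≤ (e ⟨j + 1, h⟩ : ℕ)

/-- The set of minimal monomial generators of the edge ideal of the complete `𝐭`-spread
`d`-partite hypergraph: the squarefree monomials `∏_{j ∈ E} x_j` over all `𝐭`-spread edges. -/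
def spreadGens (K : Type) [Field K] (n d : ℕ) (V : Fin d → Finset (Fin n)) (t : ℕ → ℕ) :
    Set (MvPolynomial (Fin n) K) :=
  {m | ∃ e : Fin d → Fin n, IsSpreadEdge n d V t e ∧ m = ∏ j, X (e j)}

/-- The edge ideal `I(K_V^𝐭)`. -/
noncomputable def edgeIdeal (K : Type) [Field K] (n d : ℕ) (V : Fin d → Finset (Fin n))
    (t : ℕ → ℕ) : Ideal (MvPolynomial (Fin n) K) :=
  Ideal.span (spreadGens K n d V t)

/-- The exponent vector of the squarefree monomial `∏ j, x_{e j}` attached to an edge `e`.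
Comparing these in the `Finsupp.Lex` order is exactly the lexicographic order on monomials
induced by `x_1 > x_2 > ⋯ > x_n`. -/
noncomputable def expOf {n d : ℕ} (e : Fin d → Fin n) : Fin n →₀ ℕ :=
  ∑ j, Finsupp.single (e j) 1

lemma prod_X_eq_monomial_expOf (K : Type) [Field K] {n d : ℕ} (e : Fin d → Fin n) :
    (∏ j, X (e j) : MvPolynomial (Fin n) K) = monomial (expOf e) 1 := by
  rw [expOf, monomial_sum_one]
  rfl

lemma expOf_pos_iff {n d : ℕ} (e : Fin d → Fin n) (v : Fin n) :
    0 < expOf e v ↔ ∃ j, e j = v := by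
  simp [expOf, Finsupp.finsetSum_apply, Nat.pos_iff_ne_zero, Finsupp.single_apply]

lemma expOf_update_add {n d : ℕ} (e : Fin d → Fin n) (k : Fin d) (v : Fin n) :
    expOf (Function.update e k v) + Finsupp.single (e k) 1 = expOf e + Finsupp.single v 1 := by
  have h : ∑ j ∈ Finset.univ.erase k, Finsupp.single (Function.update e k v j) 1 =
      ∑ j ∈ Finset.univ.erase k, (Finsupp.single (e j) 1 : Fin n →₀ ℕ) :=
    Finset.sum_congr rfl fun j hj => by
      rw [Function.update_of_ne (Finset.ne_of_mem_erase hj)]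
  rw [expOf, expOf, ← Finset.sum_erase_add _ _ (Finset.mem_univ k), h,
    ← Finset.sum_erase_add _ (fun j => Finsupp.single (e j) 1) (Finset.mem_univ k),
    Function.update_self]
  abel

/-- Replacing a vertex by a smaller one makes the monomial lexicographically larger. -/
lemma expOf_lt_update {n d : ℕ} (e : Fin d → Fin n) (k : Fin d) (v : Fin n) (hv : v < e k) :
    toLex (expOf e) < toLex (expOf (Function.update e k v)) := by
  have key : ∀ w, expOf (Function.update e k v) w + (Finsupp.single (e k) 1 : Fin n →₀ ℕ) w =
      expOf e w + (Finsupp.single v 1 : Fin n →₀ ℕ) w :=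
    fun w => DFunLike.congr_fun (expOf_update_add e k v) w
  refine Finsupp.Lex.lt_iff.2 ⟨v, fun w hw => ?_, ?_⟩
  · have := key w
    rw [Finsupp.single_eq_of_ne (hw.trans hv).ne, Finsupp.single_eq_of_ne hw.ne] at this
    simpa using this.symm
  · have := key v
    rw [Finsupp.single_eq_of_ne hv.ne, Finsupp.single_eq_same] at this
    simp only [ofLex_toLex]
    omega

/-- The exchange property behind linear quotients: if the monomial of `e'` is lexicographically
larger than that of `e`, then some vertex `v` of `e'` not in `e` can replace a larger vertex
of `e`. -/
lemma exists_exchange {n d : ℕ} {V : Fin d → Finset (Fin n)} {t : ℕ → ℕ}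
    (hV : ∀ i j : Fin d, i < j → ∀ p ∈ V i, ∀ q ∈ V j, (p : ℕ) < (q : ℕ))
    {e e' : Fin d → Fin n} (he : IsSpreadEdge n d V t e) (he' : IsSpreadEdge n d V t e')
    (hlt : toLex (expOf e) < toLex (expOf e')) :
    ∃ k v, v < e k ∧ IsSpreadEdge n d V t (Function.update e k v) ∧ expOf e v < expOf e' v := by
  have part : ∀ i j v, v ∈ V i → v ∈ V j → i = j := by
    intro i j v hi hj
    rcases lt_trichotomy i j with h | h | h
    · exact absurd (hV i j h v hi v hj) (lt_irrefl _)
    · exact h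
    · exact absurd (hV j i h v hj v hi) (lt_irrefl _)
  obtain ⟨v, heq, hv⟩ := Finsupp.Lex.lt_iff.1 hlt
  simp only [ofLex_toLex] at heq hv
  obtain ⟨k, hk⟩ := (expOf_pos_iff e' v).1 (by omega)
  have hvk : v ∈ V k := hk ▸ he'.1 k
  -- below `v`, `e` and `e'` have the same vertices; the parts fix their positions
  have agree : ∀ j, e j < v → e' j = e j := by
    intro j hj
    obtain ⟨l, hl⟩ := (expOf_pos_iff e' (e j)).1 (heq _ hj ▸ (expOf_pos_iff e _).2 ⟨j, rfl⟩)
    obtain rfl := part j l (e j) (he.1 j) (hl ▸ he'.1 l)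
    exact hl
  have hinj : ∀ i j, e i = e j → i = j := fun i j h => part i j (e i) (he.1 i) (h ▸ he.1 j)
  have hinj' : ∀ i j, e' i = e' j → i = j :=
    fun i j h => part i j (e' i) (he'.1 i) (h ▸ he'.1 j)
  have hne : e k ≠ v := by
    intro h
    have h1 : expOf e v = 1 := by
      simp only [expOf, Finsupp.finsetSum_apply, Finsupp.single_apply]
      rw [Finset.sum_eq_single k] <;> grind
    have h2 : expOf e' v = 1 := by
      simp only [expOf, Finsupp.finsetSum_apply, Finsupp.single_apply]
      rw [Finset.sum_eq_single k] <;> grind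
    omega
  have hvlt : v < e k := by
    refine lt_of_le_of_ne (le_of_not_gt fun h => hne ?_) hne.symm
    rw [← agree k h, hk]
  refine ⟨k, v, hvlt, ⟨fun j => ?_, fun j hj => ?_⟩, hv⟩
  · rcases eq_or_ne j k with rfl | h
    · rwa [Function.update_self]
    · rw [Function.update_of_ne h]
      exact he.1 j
  · have h1 := he.2 j hj
    have h2 := he'.2 j hj
    have hj' : j < d := Nat.lt_of_succ_lt hj
    by_cases ha : (⟨j, hj'⟩ : Fin d) = k
    · have hb : (⟨j + 1, hj⟩ : Fin d) ≠ k := by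
        rintro rfl
        simp at ha
      rw [ha] at h1 ⊢
      rw [Function.update_self, Function.update_of_ne hb]
      have : (v : ℕ) < e k := hvlt
      omega
    · rw [Function.update_of_ne ha]
      by_cases hb : (⟨j + 1, hj⟩ : Fin d) = k
      · have hlt' : e ⟨j, hj'⟩ < v :=
          hV ⟨j, hj'⟩ k (by rw [← hb]; simp [Fin.lt_def]) _ (he.1 _) _ hvk
        rw [hb, hk, agree _ hlt'] at h2
        rwa [hb, Function.update_self]
      · rwa [Function.update_of_ne hb]

/-- **Theorem (linear quotients).**  If the minimal generators of `I(K_V^𝐭)` are ordered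
decreasingly in the lexicographic order induced by `x_1 > ⋯ > x_n`, then each colon ideal of
the span of the earlier (lex-larger) generators by a generator `u = ∏ j, x_{e j}` is generated
by variables. -/
theorem edgeIdeal_has_linear_quotients
    (K : Type) [Field K] (n d : ℕ) (hd : 0 < d)
    (V : Fin d → Finset (Fin n)) (t : ℕ → ℕ)
    (ht : ∀ i, 1 ≤ t i)
    (hV : ∀ i j : Fin d, i < j → ∀ p ∈ V i, ∀ q ∈ V j, (p : ℕ) < (q : ℕ))
    (hne : ∀ j, (V j).Nonempty)
    (hiso : ∀ (j : Fin d), ∀ v ∈ V j, ∃ e, IsSpreadEdge n d V t e ∧ e j = v)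
    (e : Fin d → Fin n) (he : IsSpreadEdge n d V t e) :
    ∃ T : Set (Fin n),
      Submodule.colon
          (Ideal.span {m : MvPolynomial (Fin n) K |
            ∃ e' : Fin d → Fin n, IsSpreadEdge n d V t e' ∧
              toLex (expOf e) < toLex (expOf e') ∧ m = ∏ j, X (e' j)})
          (Ideal.span {(∏ j, X (e j) : MvPolynomial (Fin n) K)}) =
        Ideal.span ((fun i => (X i : MvPolynomial (Fin n) K)) '' T) := by
  refine ⟨{v | ∃ k, v < e k ∧ IsSpreadEdge n d V t (Function.update e k v)}, ?_⟩
  have hset : {m : MvPolynomial (Fin n) K | ∃ e' : Fin d → Fin n, IsSpreadEdge n d V t e' ∧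
      toLex (expOf e) < toLex (expOf e') ∧ m = ∏ j, X (e' j)} =
      (fun s => monomial s (1 : K)) '' {s | ∃ e' : Fin d → Fin n, IsSpreadEdge n d V t e' ∧
        toLex (expOf e) < toLex (expOf e') ∧ s = expOf e'} := by
    ext m
    simp only [prod_X_eq_monomial_expOf, Set.mem_ofPred_eq, Set.mem_image]
    constructor
    · rintro ⟨e', h1, h2, rfl⟩
      exact ⟨_, ⟨e', h1, h2, rfl⟩, rfl⟩
    · rintro ⟨_, ⟨e', h1, h2, rfl⟩, rfl⟩
      exact ⟨e', h1, h2, rfl⟩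
  rw [show Ideal.span {(∏ j, X (e j) : MvPolynomial (Fin n) K)} =
    Submodule.span _ {(∏ j, X (e j) : MvPolynomial (Fin n) K)} from rfl, Submodule.colon_span]
  apply le_antisymm
  · intro f hf
    rw [Submodule.mem_colon_singleton, smul_eq_mul, prod_X_eq_monomial_expOf, hset,
      mem_ideal_span_monomial_image] at hf
    rw [mem_ideal_span_X_image]
    intro m hm
    obtain ⟨_, ⟨e', he', hlt, rfl⟩, hle⟩ := hf (m + expOf e) (by
      rw [mem_support_iff, coeff_mul_monomial, mul_one]
      exact mem_support_iff.1 hm)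
    obtain ⟨k, v, hv, hedge, hexp⟩ := exists_exchange hV he he' hlt
    have := hle v
    rw [Finsupp.add_apply] at this
    exact ⟨v, ⟨k, hv, hedge⟩, by omega⟩
  · rw [Ideal.span_le]
    rintro _ ⟨v, ⟨k, hv, hedge⟩, rfl⟩
    rw [SetLike.mem_coe, Submodule.mem_colon_singleton, smul_eq_mul]
    -- `x_v * u = x_{e k} * u''`, where `u''` is the monomial of the exchanged edge
    have hswap : (X v * ∏ j, X (e j) : MvPolynomial (Fin n) K) =
        X (e k) * ∏ j, X (Function.update e k v j) := by
      rw [prod_X_eq_monomial_expOf, prod_X_eq_monomial_expOf, X, X, monomial_mul, monomial_mul,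
        add_comm, ← expOf_update_add e k v, add_comm]
    rw [hswap]
    exact Ideal.mul_mem_left _ _
      (Ideal.subset_span ⟨_, hedge, expOf_lt_update e k v hv, rfl⟩)
end

section
/- The toric K-algebra K[I(K_V^t)], generated over the field K by the minimal monomial generators of the edge ideal I(K_V^t) of a complete t-spread d-partite hypergraph, is a Koszul algebra and a Cohen-Macaulay normal domain. -/
/-!
The edges, encoded as increasing vertex tuples, form a finite distributive lattice `L` under
componentwise minimum and maximum, and the generators `x e` of the toric algebra `A` satisfy the
Hibi relations `x e * x f = x (e ⊓ f) * x (e ⊔ f)`. The polynomials in `A` are those whose exponent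
vectors lie in `edgeMonoid`, a monoid cut out by linear conditions: the smallest edge in the
support of a nonzero vector of this monoid can be split off (`exists_min_edge`). Consequently the
ideals `I Ω` generated by the `x e` with `e` in a lower set `Ω` of `L` are monomial ideals, which
can be intersected and divided by generators combinatorially. These properties are collected in
`HibiLike` and established in `hibiLike_toricGen`; the Koszul and Cohen–Macaulay properties depend
on them only.

*Koszul property.* If `a` is maximal in a lower set `Ω`, then `I (Ω \ {a}) : x a = I {y | y ≱ a}`
(`colon_maximal`), so the ideals `I Ω` form a Koszul filtration. Linearity of any minimal graded
free resolution of the residue field follows by a double induction on the homological degree and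
on the size of `Ω` (`koszul_linear`).

*Cohen–Macaulay property.* For every rank of the lattice, let `θ i` be the sum of all generators of
rank `i`. Powers of the `θ i` form a regular sequence (`isWeaklyRegular_paramSeq`, by descending
induction on the rank and Mayer–Vietoris sequences), and `A` is finite over the polynomial ring in
the `θ i` (`finite_param`), which bounds its dimension by their number. At an arbitrary, possibly
inhomogeneous, maximal ideal `p`, the minimal polynomials of the residues of the `θ i` modulo `p`,
evaluated at the `θ i`, lie in `p` and have powers of the `θ i` as leading forms, so they form a
regular sequence of the right length (`isWeaklyRegular_of_leading`, `exists_isRegular`).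

*Normality.* The monoid `edgeMonoid` is saturated, being defined by linear conditions. If all powers
of a polynomial have a common denominator in `A`, its exponents lie in `edgeMonoid`
(`support_subset_of_forall_pow`), hence `A` is integrally closed like the polynomial ring containing
it (`isIntegrallyClosed_of_injective`).
-/

open MvPolynomial

noncomputable section

/-- The index set of the minimal monomial generators of `I(K_V^𝐭)`: the `𝐭`-spread edges. -/
def SpreadEdges (n d : ℕ) (V : Fin d → Finset (Fin n)) (t : ℕ → ℕ) : Type :=
  {e : Fin d → Fin n // IsSpreadEdge n d V t e}

/-- The presentation `φ : T = K[t_u : u ∈ G(I)] → K[I] ⊆ S`, `t_u ↦ u`, of the toric algebra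
generated by the minimal generators of `I(K_V^𝐭)`. -/
def toricMap (K : Type) [Field K] (n d : ℕ) (V : Fin d → Finset (Fin n)) (t : ℕ → ℕ) :
    MvPolynomial (SpreadEdges n d V t) K →ₐ[K] MvPolynomial (Fin n) K :=
  aeval fun e => ∏ j, X (e.1 j)

/-- The defining ideal `P = ker φ` of `K[I(K_V^𝐭)]`. -/
def toricIdeal (K : Type) [Field K] (n d : ℕ) (V : Fin d → Finset (Fin n)) (t : ℕ → ℕ) :
    Ideal (MvPolynomial (SpreadEdges n d V t) K) :=
  RingHom.ker (toricMap K n d V t).toRingHom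

/-- The toric algebra `K[I(K_V^𝐭)] ≅ T / ker φ`, standard graded with each `t_u` in
degree `1`. -/
def toricAlgebra (K : Type) [Field K] (n d : ℕ) (V : Fin d → Finset (Fin n)) (t : ℕ → ℕ) :
    Type :=
  MvPolynomial (SpreadEdges n d V t) K ⧸ toricIdeal K n d V t

instance (K : Type) [Field K] (n d : ℕ) (V : Fin d → Finset (Fin n)) (t : ℕ → ℕ) :
    CommRing (toricAlgebra K n d V t) :=
  Ideal.Quotient.commRing _

/-- A homogeneous element of degree `c` of the standard graded algebra `K[I(K_V^𝐭)] = T/P`: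
the image of a homogeneous polynomial of degree `c` of `T`. -/
def toricHomog (K : Type) [Field K] (n d : ℕ) (V : Fin d → Finset (Fin n)) (t : ℕ → ℕ)
    (c : ℕ) (x : toricAlgebra K n d V t) : Prop :=
  ∃ f : MvPolynomial (SpreadEdges n d V t) K,
    f.IsHomogeneous c ∧ Ideal.Quotient.mk (toricIdeal K n d V t) f = x

/-- The graded maximal ideal of `K[I(K_V^𝐭)]`, generated by the images of the `t_u`. -/
def toricMaxIdeal (K : Type) [Field K] (n d : ℕ) (V : Fin d → Finset (Fin n)) (t : ℕ → ℕ) :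
    Ideal (toricAlgebra K n d V t) :=
  Ideal.span (Set.range fun e : SpreadEdges n d V t =>
    Ideal.Quotient.mk (toricIdeal K n d V t) (X e))

/-- The depth `grade(J, M)` of a module `M` along an ideal `J`. -/
def idealDepth (R : Type) [CommRing R] (J : Ideal R) (M : Type) [AddCommGroup M]
    [Module R M] : ℕ :=
  sSup {k | ∃ rs : List R, rs.length = k ∧ (∀ x ∈ rs, x ∈ J) ∧
    RingTheory.Sequence.IsRegular M rs}

/-- A (Noetherian) ring is Cohen–Macaulay if for every maximal ideal `p`, the depth of `R`
along `p` equals the Krull dimension of the localization `R_p`. -/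
def IsCohenMacaulayRing (R : Type) [CommRing R] : Prop :=
  ∀ (p : Ideal R) (hp : p.IsMaximal),
    letI := hp.isPrime
    ((idealDepth R p R : ℕ∞) : WithBot ℕ∞) = ringKrullDim (Localization.AtPrime p)

/-- `K[I(K_V^𝐭)]` is a *Koszul algebra*: the residue field `K = A/𝔪` has a linear minimal
graded free resolution over `A = K[I(K_V^𝐭)]`, i.e. in any minimal graded free resolution
`⋯ → F_1 → F_0 → K → 0` of `K` over `A` all basis elements in homological degree `i` have
internal degree `i` (`β^A_{i,j}(K) = 0` for `j ≠ i`). -/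
def IsKoszulToricAlgebra (K : Type) [Field K] (n d : ℕ) (V : Fin d → Finset (Fin n))
    (t : ℕ → ℕ) : Prop :=
  ∀ (r : ℕ → ℕ) (dg : (i : ℕ) → Fin (r i) → ℕ)
    (φ : (i : ℕ) → ((Fin (r (i + 1)) → toricAlgebra K n d V t) →ₗ[toricAlgebra K n d V t]
      (Fin (r i) → toricAlgebra K n d V t)))
    (ε : (Fin (r 0) → toricAlgebra K n d V t) →ₗ[toricAlgebra K n d V t]
      (toricAlgebra K n d V t ⧸ toricMaxIdeal K n d V t)),
    -- `(r, dg, φ, ε)` is a minimal graded free resolution of the residue field: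
    Function.Surjective ε →
    LinearMap.ker ε = LinearMap.range (φ 0) →
    (∀ i : ℕ, LinearMap.ker (φ i) = LinearMap.range (φ (i + 1))) →
    (∀ k : Fin (r 0), dg 0 k ≠ 0 → ε (Pi.single k 1) = 0) →
    (∀ (i : ℕ) (k : Fin (r (i + 1))) (j : Fin (r i)),
      φ i (Pi.single k 1) j = 0 ∨
        ∃ c : ℕ, dg (i + 1) k = dg i j + c ∧
          toricHomog K n d V t c (φ i (Pi.single k 1) j)) →
    (∀ (i : ℕ) (k : Fin (r (i + 1))) (j : Fin (r i)),
      φ i (Pi.single k 1) j ∈ toricMaxIdeal K n d V t) →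
    -- then the resolution is linear:
    ∀ (i : ℕ) (k : Fin (r i)), dg i k = i

/-! ### Depth lemmas for weakly regular sequences -/

section Sequences

open RingTheory.Sequence Function
open scoped Pointwise

variable {R : Type} [CommRing R]

theorem quotSMulTop_map_injective {X Y Z : Type} [AddCommGroup X] [AddCommGroup Y]
    [AddCommGroup Z] [Module R X] [Module R Y] [Module R Z] {f : X →ₗ[R] Y} {h : Y →ₗ[R] Z}
    (hf : Injective f) (hfh : Exact f h) {r : R} (hr : IsSMulRegular Z r) :
    Injective (QuotSMulTop.map r f) := by
  have h0 : Exact (0 : PUnit →ₗ[R] X) f := by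
    intro x
    rw [← map_zero f, hf.eq_iff]
    simp [eq_comm]
  have h1 := QuotSMulTop.map_first_exact_on_four_term_exact_of_isSMulRegular_last h0 hfh hr
  rw [injective_iff_map_eq_zero]
  intro a ha
  obtain ⟨b, rfl⟩ := (h1 a).1 ha
  simp

/-- Depth lemma: a sequence that is weakly regular on the middle and right terms of a short exact
sequence is weakly regular on the left term. -/
theorem isWeaklyRegular_left (rs : List R) : ∀ {X Y Z : Type} [AddCommGroup X] [AddCommGroup Y]
    [AddCommGroup Z] [Module R X] [Module R Y] [Module R Z] {f : X →ₗ[R] Y} {h : Y →ₗ[R] Z},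
    Injective f → Exact f h → Surjective h → IsWeaklyRegular Y rs → IsWeaklyRegular Z rs →
    IsWeaklyRegular X rs := by
  induction rs with
  | nil => intros; exact IsWeaklyRegular.nil _ _
  | cons r rs ih =>
    intro X Y Z _ _ _ _ _ _ f h hf hfh hh hY hZ
    rw [isWeaklyRegular_cons_iff] at hY hZ ⊢
    exact ⟨hY.1.of_injective f hf, ih (quotSMulTop_map_injective hf hfh hZ.1)
      (QuotSMulTop.map_exact r hfh hh) (QuotSMulTop.map_surjective r hh) hY.2 hZ.2⟩

/-- Depth lemma: a sequence that is weakly regular on the outer terms of a short exact sequence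
is weakly regular on the middle term. -/
theorem isWeaklyRegular_middle (rs : List R) : ∀ {X Y Z : Type} [AddCommGroup X] [AddCommGroup Y]
    [AddCommGroup Z] [Module R X] [Module R Y] [Module R Z] {f : X →ₗ[R] Y} {h : Y →ₗ[R] Z},
    Injective f → Exact f h → Surjective h → IsWeaklyRegular X rs → IsWeaklyRegular Z rs →
    IsWeaklyRegular Y rs := by
  induction rs with
  | nil => intros; exact IsWeaklyRegular.nil _ _
  | cons r rs ih =>
    intro X Y Z _ _ _ _ _ _ f h hf hfh hh hX hZ
    rw [isWeaklyRegular_cons_iff] at hX hZ ⊢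
    refine ⟨?_, ih (quotSMulTop_map_injective hf hfh hZ.1)
      (QuotSMulTop.map_exact r hfh hh) (QuotSMulTop.map_surjective r hh) hX.2 hZ.2⟩
    exact isSMulRegular_of_range_eq_ker hf (LinearMap.exact_iff.1 hfh).symm hX.1 hZ.1

theorem isWeaklyRegular_prod {X Y : Type} [AddCommGroup X] [AddCommGroup Y] [Module R X]
    [Module R Y] {rs : List R} (hX : IsWeaklyRegular X rs) (hY : IsWeaklyRegular Y rs) :
    IsWeaklyRegular (X × Y) rs :=
  isWeaklyRegular_middle rs (f := LinearMap.inl R X Y) (h := LinearMap.snd R X Y)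
    LinearMap.inl_injective (LinearMap.exact_iff.2 (LinearMap.range_inl R X Y).symm)
    LinearMap.snd_surjective hX hY

/-- Depth lemma with a drop of depth by one on the right: the first element `g` of the sequence
kills the right term, and only the remaining elements are required to be weakly regular there.
The snake lemma gives the exact sequence `0 → Z → X/gX → Y/gY → Z → 0`. -/
theorem isWeaklyRegular_left_of_smul_eq_zero {X Y Z : Type} [AddCommGroup X] [AddCommGroup Y]
    [AddCommGroup Z] [Module R X] [Module R Y] [Module R Z] {f : X →ₗ[R] Y} {h : Y →ₗ[R] Z}
    (hf : Injective f) (hfh : Exact f h) (hh : Surjective h) {g : R} {rs : List R}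
    (hY : IsWeaklyRegular Y (g :: rs)) (hZ : IsWeaklyRegular Z rs) (hg : ∀ z : Z, g • z = 0) :
    IsWeaklyRegular X (g :: rs) := by
  rw [isWeaklyRegular_cons_iff] at hY ⊢
  refine ⟨hY.1.of_injective f hf, ?_⟩
  have hZ' : IsWeaklyRegular (QuotSMulTop g Z) rs := by
    have hbot : (g • ⊤ : Submodule R Z) = ⊥ := by
      rw [eq_bot_iff]
      intro z hz
      obtain ⟨w, -, rfl⟩ := (Submodule.mem_smul_pointwise_iff_exists _ _ _).1 hz
      simpa using hg w
    exact ((Submodule.quotEquivOfEqBot _ hbot).isWeaklyRegular_congr rs).2 hZ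
  have hQ : IsWeaklyRegular (LinearMap.range (QuotSMulTop.map g f)) rs := by
    refine isWeaklyRegular_left rs (f := Submodule.subtype _) (h := QuotSMulTop.map g h)
      (Submodule.subtype_injective _) ?_ (QuotSMulTop.map_surjective g hh) hY.2 hZ'
    rw [LinearMap.exact_iff, Submodule.range_subtype]
    exact LinearMap.exact_iff.1 (QuotSMulTop.map_exact g hfh hh)
  -- the connecting map, defined on `Y` by `y ↦ f⁻¹ (g y)`
  have hmem : ∀ y : Y, (LinearMap.lsmul R Y g) y ∈ LinearMap.range f := fun y => by
    refine (hfh _).1 ?_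
    simp [hg]
  let δ : Y →ₗ[R] QuotSMulTop g X := (Submodule.mkQ _) ∘ₗ
    ((LinearEquiv.ofInjective f hf).symm : LinearMap.range f →ₗ[R] X) ∘ₗ
      (LinearMap.lsmul R Y g).codRestrict _ hmem
  have hδ : ∀ y x, f x = g • y → δ y = Submodule.Quotient.mk x := by
    intro y x hxy
    have : (LinearEquiv.ofInjective f hf).symm
        ((LinearMap.lsmul R Y g).codRestrict _ hmem y) = x := by
      rw [LinearEquiv.symm_apply_eq]
      apply Subtype.ext
      simp [hxy]
    change Submodule.Quotient.mk _ = _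
    rw [← this]
    rfl
  have hex : ∀ y, ∃ x, f x = g • y := fun y => by simpa using hmem y
  have hkerδ : LinearMap.ker h = LinearMap.ker δ := by
    ext y
    obtain ⟨x, hx⟩ := hex y
    rw [LinearMap.mem_ker, LinearMap.mem_ker, hδ y x hx, Submodule.Quotient.mk_eq_zero,
      Submodule.mem_smul_pointwise_iff_exists, hfh y]
    constructor
    · rintro ⟨x', rfl⟩
      exact ⟨x', trivial, hf (by rw [hx, map_smul])⟩
    · rintro ⟨x', -, rfl⟩
      exact ⟨x', hY.1 (by simpa using hx)⟩
  have hrange : LinearMap.range δ = LinearMap.ker (QuotSMulTop.map g f) := by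
    ext q
    obtain ⟨x, rfl⟩ := Submodule.Quotient.mk_surjective _ q
    rw [LinearMap.mem_ker, QuotSMulTop.map_apply_mk, Submodule.Quotient.mk_eq_zero,
      Submodule.mem_smul_pointwise_iff_exists, LinearMap.mem_range]
    constructor
    · rintro ⟨y, hy⟩
      obtain ⟨x', hx'⟩ := hex y
      rw [hδ y x' hx', Submodule.Quotient.eq, Submodule.mem_smul_pointwise_iff_exists] at hy
      obtain ⟨u, -, hu⟩ := hy
      refine ⟨y - f u, trivial, ?_⟩
      rw [smul_sub, ← map_smul, hu, map_sub, hx']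
      abel
    · rintro ⟨y, -, hy⟩
      exact ⟨y, hδ y x hy.symm⟩
  have hZδ : IsWeaklyRegular (LinearMap.range δ) rs :=
    (((h.quotKerEquivOfSurjective hh).symm ≪≫ₗ Submodule.quotEquivOfEq _ _ hkerδ ≪≫ₗ
      δ.quotKerEquivRange).isWeaklyRegular_congr rs).1 hZ
  refine isWeaklyRegular_middle rs (f := Submodule.subtype _)
    (h := (QuotSMulTop.map g f).rangeRestrict) (Submodule.subtype_injective _) ?_
    (LinearMap.surjective_rangeRestrict _) hZδ hQ
  rw [LinearMap.exact_iff, Submodule.range_subtype, LinearMap.ker_rangeRestrict, hrange]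

/-- The first element of a weakly regular sequence may be replaced by a power: the depth lemma is
applied to `0 → N/g^(e+1)N → N/g^(e+2)N → N/gN → 0`, whose first map is multiplication by `g`. -/
theorem isWeaklyRegular_pow_cons {N : Type} [AddCommGroup N] [Module R N] {g : R} {rs : List R}
    (hN : IsWeaklyRegular N (g :: rs)) (e : ℕ) : IsWeaklyRegular N (g ^ (e + 1) :: rs) := by
  rw [isWeaklyRegular_cons_iff] at hN
  obtain ⟨hg, hs⟩ := hN
  rw [isWeaklyRegular_cons_iff]
  refine ⟨hg.pow _, ?_⟩
  induction e with
  | zero => rwa [zero_add, pow_one]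
  | succ e ih =>
    have h1 : (g ^ (e + 1) • ⊤ : Submodule R N) ≤
        (g ^ (e + 1 + 1) • ⊤ : Submodule R N).comap (LinearMap.lsmul R N g) := by
      intro y hy
      obtain ⟨z, -, rfl⟩ := (Submodule.mem_smul_pointwise_iff_exists _ _ _).1 hy
      rw [Submodule.mem_comap, LinearMap.lsmul_apply, smul_smul, ← pow_succ']
      exact Submodule.smul_mem_pointwise_smul _ _ _ trivial
    have h2 : (g ^ (e + 1 + 1) • ⊤ : Submodule R N) ≤
        (g • ⊤ : Submodule R N).comap LinearMap.id := by
      intro y hy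
      obtain ⟨z, -, rfl⟩ := (Submodule.mem_smul_pointwise_iff_exists _ _ _).1 hy
      rw [Submodule.mem_comap, LinearMap.id_apply, pow_succ', mul_smul]
      exact Submodule.smul_mem_pointwise_smul _ _ _ trivial
    refine isWeaklyRegular_middle (X := QuotSMulTop (g ^ (e + 1)) N)
      (Y := QuotSMulTop (g ^ (e + 1 + 1)) N) (Z := QuotSMulTop g N) rs
      (f := Submodule.mapQ _ _ _ h1) (h := Submodule.mapQ _ _ _ h2) ?_ ?_ ?_ ih hs
    · rw [injective_iff_map_eq_zero]
      intro q hq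
      obtain ⟨x, rfl⟩ := Submodule.Quotient.mk_surjective _ q
      rw [Submodule.mapQ_apply, Submodule.Quotient.mk_eq_zero,
        Submodule.mem_smul_pointwise_iff_exists] at hq
      obtain ⟨y, -, hy⟩ := hq
      rw [Submodule.Quotient.mk_eq_zero, Submodule.mem_smul_pointwise_iff_exists]
      refine ⟨y, trivial, hg ?_⟩
      simpa [pow_succ', mul_smul] using hy
    · intro q
      obtain ⟨x, rfl⟩ := Submodule.Quotient.mk_surjective _ q
      rw [Submodule.mapQ_apply, Submodule.Quotient.mk_eq_zero,
        Submodule.mem_smul_pointwise_iff_exists]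
      constructor
      · rintro ⟨y, -, hy⟩
        exact ⟨Submodule.Quotient.mk y, by rw [Submodule.mapQ_apply]; congr 1⟩
      · rintro ⟨q', hq'⟩
        obtain ⟨y, rfl⟩ := Submodule.Quotient.mk_surjective _ q'
        rw [Submodule.mapQ_apply, Submodule.Quotient.eq,
          Submodule.mem_smul_pointwise_iff_exists] at hq'
        obtain ⟨z, -, hz⟩ := hq'
        refine ⟨y - g ^ (e + 1) • z, trivial, ?_⟩
        rw [smul_sub, smul_smul, ← pow_succ', hz]
        simp
    · intro q
      obtain ⟨x, rfl⟩ := Submodule.Quotient.mk_surjective _ q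
      exact ⟨Submodule.Quotient.mk x, rfl⟩

end Sequences

/-! ### Leading forms in graded rings -/

theorem isWeaklyRegular_range_iff {A : Type} [CommRing A] (g : ℕ → A) (m : ℕ) :
    RingTheory.Sequence.IsWeaklyRegular A ((List.range m).map g) ↔
      ∀ k < m, ∀ a, g k * a ∈ Ideal.span (g '' Set.Iio k) → a ∈ Ideal.span (g '' Set.Iio k) := by
  have hI : ∀ k ≤ m, (Ideal.ofList (((List.range m).map g).take k) • ⊤ : Submodule A A) =
      Ideal.span (g '' Set.Iio k) := by
    intro k hk
    rw [smul_eq_mul, Ideal.mul_top, Ideal.ofList]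
    congr 1
    ext y
    simp only [List.mem_take_iff_getElem, List.getElem_map, List.getElem_range, Set.mem_ofPred_eq,
      List.length_map, List.length_range, Set.mem_image, Set.mem_Iio]
    constructor
    · rintro ⟨i, hi, rfl⟩
      exact ⟨i, by omega, rfl⟩
    · rintro ⟨i, hi, rfl⟩
      exact ⟨i, by omega, rfl⟩
  rw [RingTheory.Sequence.isWeaklyRegular_iff]
  constructor
  · intro H k hk a ha
    have h1 := H k (by simpa using hk)
    rw [hI k hk.le, isSMulRegular_quotient_iff_mem_of_smul_mem] at h1
    exact h1 a (by simpa using ha)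
  · intro H k hk
    have hk' : k < m := by simpa using hk
    rw [hI k hk'.le, isSMulRegular_quotient_iff_mem_of_smul_mem]
    intro a ha
    exact H k hk' a (by simpa using ha)

section LeadingForms

open GradedRing

variable {K A : Type} [Field K] [CommRing A] [Algebra K A] (𝒜 : ℕ → Submodule K A)
  [GradedAlgebra 𝒜]

/-- All homogeneous components of `a` have degree at most `s`. -/
def DegLE (a : A) (s : ℕ) : Prop := ∀ c, s < c → proj 𝒜 c a = 0

variable {𝒜}

theorem DegLE.add {a b : A} {s : ℕ} (ha : DegLE 𝒜 a s) (hb : DegLE 𝒜 b s) :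
    DegLE 𝒜 (a + b) s := fun c hc => by rw [map_add, ha c hc, hb c hc, add_zero]

theorem DegLE.sub {a b : A} {s : ℕ} (ha : DegLE 𝒜 a s) (hb : DegLE 𝒜 b s) :
    DegLE 𝒜 (a - b) s := fun c hc => by rw [map_sub, ha c hc, hb c hc, sub_zero]

theorem DegLE.mono {a : A} {s t : ℕ} (ha : DegLE 𝒜 a s) (h : s ≤ t) : DegLE 𝒜 a t :=
  fun c hc => ha c (h.trans_lt hc)

theorem proj_mem (c : ℕ) (a : A) : proj 𝒜 c a ∈ 𝒜 c := by
  rw [proj_apply]; exact SetLike.coe_mem _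

theorem proj_same {c : ℕ} {a : A} (h : a ∈ 𝒜 c) : proj 𝒜 c a = a := by
  rw [proj_apply]; exact DirectSum.decompose_of_mem_same _ h

theorem proj_ne {c c' : ℕ} {a : A} (h : a ∈ 𝒜 c) (hc : c ≠ c') : proj 𝒜 c' a = 0 := by
  rw [proj_apply]; exact DirectSum.decompose_of_mem_ne _ h hc

theorem degLE_of_mem {c : ℕ} {a : A} (h : a ∈ 𝒜 c) : DegLE 𝒜 a c :=
  fun _ hc' => proj_ne h hc'.ne

theorem exists_degLE (a : A) : ∃ s, DegLE 𝒜 a s := by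
  classical
  refine ⟨(DirectSum.decompose 𝒜 a).support.sup id, fun c hc => ?_⟩
  rw [proj_apply]
  by_contra h
  have : c ∈ (DirectSum.decompose 𝒜 a).support := by
    rw [DFinsupp.mem_support_iff]
    intro h'
    exact h (by rw [h']; rfl)
  exact absurd (Finset.le_sup (f := id) this) (not_le.2 hc)

theorem DegLE.sum_eq {a : A} {s : ℕ} (ha : DegLE 𝒜 a s) :
    a = ∑ i ∈ Finset.range (s + 1), proj 𝒜 i a := by
  classical
  conv_lhs => rw [← DirectSum.sum_support_decompose 𝒜 a]
  simp only [← proj_apply]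
  refine Finset.sum_subset (fun i hi => ?_) (fun i _ hi => ?_)
  · by_contra h
    rw [DFinsupp.mem_support_iff] at hi
    refine hi ?_
    have := ha i (by simpa using h)
    rw [proj_apply] at this
    exact Subtype.ext this
  · rw [DFinsupp.notMem_support_iff] at hi
    rw [proj_apply, hi]
    rfl

theorem proj_mul_of_mem {i c : ℕ} {a : A} (h : a ∈ 𝒜 i) (b : A) :
    proj 𝒜 c (a * b) = if i ≤ c then a * proj 𝒜 (c - i) b else 0 := by
  rw [proj_apply]
  split_ifs with hi
  · rw [DirectSum.coe_decompose_mul_of_left_mem_of_le 𝒜 h hi, proj_apply]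
  · exact DirectSum.coe_decompose_mul_of_left_mem_of_not_le 𝒜 h hi

theorem DegLE.mul {a b : A} {s t : ℕ} (ha : DegLE 𝒜 a s) (hb : DegLE 𝒜 b t) :
    DegLE 𝒜 (a * b) (s + t) := by
  intro c hc
  rw [ha.sum_eq, Finset.sum_mul, map_sum]
  refine Finset.sum_eq_zero fun i hi => ?_
  rw [proj_mul_of_mem (proj_mem i a), hb (c - i) (by simp at hi; omega)]
  simp

theorem proj_mul_top {a b : A} {s t : ℕ} (ha : DegLE 𝒜 a s) (hb : DegLE 𝒜 b t) :
    proj 𝒜 (s + t) (a * b) = proj 𝒜 s a * proj 𝒜 t b := by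
  conv_lhs => rw [ha.sum_eq, Finset.sum_mul, map_sum]
  rw [Finset.sum_eq_single s]
  · rw [proj_mul_of_mem (proj_mem s a), if_pos (by omega), Nat.add_sub_cancel_left]
  · intro i hi hne
    rw [proj_mul_of_mem (proj_mem i a), hb (s + t - i) (by simp at hi; omega)]
    simp
  · simp

variable {g h : ℕ → A} {δ : ℕ → ℕ}

/-- Every homogeneous element of the ideal of leading forms lifts to an element of the original
ideal with that leading form. -/
theorem exists_lift_leading (hg : ∀ i, DegLE 𝒜 (g i) (δ i)) (hgh : ∀ i, proj 𝒜 (δ i) (g i) = h i)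
    (k : ℕ) {z : A} (hz : z ∈ Ideal.span (h '' Set.Iio k)) : ∀ N : ℕ,
    ∃ q ∈ Ideal.span (g '' Set.Iio k), DegLE 𝒜 q N ∧ proj 𝒜 N q = proj 𝒜 N z := by
  induction hz using Submodule.span_induction with
  | mem x hx =>
    intro N
    obtain ⟨i, hi, rfl⟩ := hx
    have hmem : h i ∈ 𝒜 (δ i) := hgh i ▸ proj_mem _ _
    by_cases hN : N = δ i
    · refine ⟨g i, Ideal.subset_span ⟨i, hi, rfl⟩, hN ▸ hg i, ?_⟩
      rw [hN, hgh, proj_same hmem]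
    · refine ⟨0, zero_mem _, fun c _ => map_zero _, ?_⟩
      rw [map_zero, proj_ne hmem (Ne.symm hN)]
  | zero => exact fun N => ⟨0, zero_mem _, fun c _ => map_zero _, rfl⟩
  | add x y _ _ hx hy =>
    intro N
    obtain ⟨p, hp, hp1, hp2⟩ := hx N
    obtain ⟨q, hq, hq1, hq2⟩ := hy N
    exact ⟨p + q, add_mem hp hq, hp1.add hq1, by rw [map_add, map_add, hp2, hq2]⟩
  | smul c x _ hx =>
    induction c using DirectSum.Decomposition.inductionOn 𝒜 with
    | zero => exact fun N => ⟨0, zero_mem _, fun c _ => map_zero _, by simp⟩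
    | @homogeneous j c =>
      intro N
      by_cases hj : j ≤ N
      · obtain ⟨q, hq, hq1, hq2⟩ := hx (N - j)
        refine ⟨c * q, Ideal.mul_mem_left _ _ hq, ?_, ?_⟩
        · have := (degLE_of_mem c.2).mul hq1
          rwa [Nat.add_sub_cancel' hj] at this
        · rw [smul_eq_mul, proj_mul_of_mem c.2, if_pos hj, proj_mul_of_mem c.2, if_pos hj, hq2]
      · refine ⟨0, zero_mem _, fun c _ => map_zero _, ?_⟩
        rw [smul_eq_mul, proj_mul_of_mem c.2, if_neg hj, map_zero]
    | add c c' hc hc' =>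
      intro N
      obtain ⟨p, hp, hp1, hp2⟩ := hc N
      obtain ⟨q, hq, hq1, hq2⟩ := hc' N
      exact ⟨p + q, add_mem hp hq, hp1.add hq1, by rw [map_add, add_smul, map_add, hp2, hq2]⟩

theorem span_image_Iio_succ (g : ℕ → A) (k : ℕ) :
    Ideal.span (g '' Set.Iio (k + 1)) = Ideal.span (g '' Set.Iio k) ⊔ Ideal.span {g k} := by
  rw [← Ideal.span_union]
  congr 1
  ext y
  simp only [Set.mem_image, Set.mem_Iio, Set.mem_union, Set.mem_singleton_iff]
  constructor
  · rintro ⟨i, hi, rfl⟩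
    rcases Nat.lt_succ_iff_lt_or_eq.1 hi with hi | rfl
    · exact Or.inl ⟨i, hi, rfl⟩
    · exact Or.inr rfl
  · rintro (⟨i, hi, rfl⟩ | rfl)
    · exact ⟨i, by omega, rfl⟩
    · exact ⟨k, by omega, rfl⟩

/-- As long as the leading forms `h 0, …, h (m - 1)` form a weakly regular sequence, they generate
the ideal of all leading forms of elements of `(g 0, …, g (m - 1))`: no leading form of an element
of this ideal comes from a cancellation. -/
theorem proj_mem_span_leading (hg : ∀ i, DegLE 𝒜 (g i) (δ i))
    (hgh : ∀ i, proj 𝒜 (δ i) (g i) = h i) (m : ℕ)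
    (H : ∀ k < m, ∀ a, h k * a ∈ Ideal.span (h '' Set.Iio k) →
      a ∈ Ideal.span (h '' Set.Iio k)) :
    ∀ k ≤ m, ∀ a ∈ Ideal.span (g '' Set.Iio k), ∀ s, DegLE 𝒜 a s →
      proj 𝒜 s a ∈ Ideal.span (h '' Set.Iio k) := by
  intro k
  induction k with
  | zero =>
    intro _ a ha s _
    have : a = 0 := by simpa using ha
    rw [this, map_zero]
    exact zero_mem _
  | succ k ih =>
    intro hk a ha s has
    rw [span_image_Iio_succ, Submodule.mem_sup] at ha
    obtain ⟨a', ha', b, hb, rfl⟩ := ha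
    obtain ⟨n, rfl⟩ := Ideal.mem_span_singleton'.1 hb
    obtain ⟨N, hN⟩ := exists_degLE (𝒜 := 𝒜) n
    have hbase : ∀ (n a' : A) (N : ℕ), a' ∈ Ideal.span (g '' Set.Iio k) → DegLE 𝒜 n N →
        DegLE 𝒜 (a' + n * g k) s → N + δ k ≤ s →
        proj 𝒜 s (a' + n * g k) ∈ Ideal.span (h '' Set.Iio (k + 1)) := by
      intro n a' N ha' hN has hs
      obtain ⟨M, rfl⟩ : ∃ M, s = M + δ k := ⟨s - δ k, by omega⟩
      have hM : DegLE 𝒜 n M := hN.mono (by omega)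
      have h1 := hM.mul (hg k)
      have h2 : DegLE 𝒜 a' (M + δ k) := by simpa using has.sub h1
      rw [map_add, proj_mul_top hM (hg k), hgh, span_image_Iio_succ]
      exact Submodule.add_mem_sup (ih (by omega) a' ha' _ h2)
        (Ideal.mul_mem_left _ _ (Ideal.mem_span_singleton_self _))
    clear hb
    -- The degree bound `N` of the coefficient `n` is lowered until `N + δ k ≤ s`. Above that, the
    -- leading form of `n * g k` cancels against that of `a'`; by regularity, the leading form of `n`
    -- lies in the ideal of `h 0, …, h (k - 1)`, hence is the leading form of some `q` in the ideal
    -- of `g 0, …, g (k - 1)`, and `n` is replaced by `n - q`.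
    induction N generalizing n a' with
    | zero =>
      by_cases hs : 0 + δ k ≤ s
      · exact hbase n a' 0 ha' hN has hs
      have h1 := hN.mul (hg k)
      have h2 : DegLE 𝒜 a' (0 + δ k) := by
        simpa using (has.mono (by omega : s ≤ 0 + δ k)).sub h1
      have h3 := has (0 + δ k) (by omega)
      rw [map_add, proj_mul_top hN (hg k), hgh] at h3
      have h4 : h k * proj 𝒜 0 n ∈ Ideal.span (h '' Set.Iio k) := by
        rw [mul_comm, ← neg_mem_iff, ← eq_neg_of_add_eq_zero_left h3]
        exact ih (by omega) a' ha' _ h2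
      obtain ⟨q, hq, hq1, hq2⟩ := exists_lift_leading hg hgh k (H k (by omega) _ h4) 0
      have hnq : n - q = 0 := by
        rw [(hN.sub hq1).sum_eq, zero_add, Finset.sum_range_one, map_sub, hq2,
          proj_same (proj_mem 0 n), sub_self]
      have : a' + n * g k = (a' + q * g k) + 0 * g k := by
        rw [sub_eq_zero.1 hnq]; ring
      rw [this] at has ⊢
      rw [zero_mul, add_zero] at has ⊢
      rw [span_image_Iio_succ]
      exact Submodule.mem_sup_left (ih (by omega) _
        (add_mem ha' (Ideal.mul_mem_right _ _ hq)) _ has)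
    | succ N ihN =>
      by_cases hs : N + 1 + δ k ≤ s
      · exact hbase n a' _ ha' hN has hs
      have h1 := hN.mul (hg k)
      have h2 : DegLE 𝒜 a' (N + 1 + δ k) := by
        simpa using (has.mono (by omega : s ≤ N + 1 + δ k)).sub h1
      have h3 := has (N + 1 + δ k) (by omega)
      rw [map_add, proj_mul_top hN (hg k), hgh] at h3
      have h4 : h k * proj 𝒜 (N + 1) n ∈ Ideal.span (h '' Set.Iio k) := by
        rw [mul_comm, ← neg_mem_iff, ← eq_neg_of_add_eq_zero_left h3]
        exact ih (by omega) a' ha' _ h2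
      obtain ⟨q, hq, hq1, hq2⟩ := exists_lift_leading hg hgh k (H k (by omega) _ h4) (N + 1)
      have : a' + n * g k = (a' + q * g k) + (n - q) * g k := by ring
      rw [this] at has ⊢
      refine ihN _ (add_mem ha' (Ideal.mul_mem_right _ _ hq)) _ has fun c hc => ?_
      rcases Nat.lt_or_ge (N + 1) c with hc' | hc'
      · exact (hN.sub hq1) c hc'
      · obtain rfl : c = N + 1 := by omega
        rw [map_sub, hq2, proj_same (proj_mem _ _), sub_self]

/-- A sequence in a graded ring whose leading forms are a weakly regular sequence is itself weakly
regular: if `g k * n` lies in the ideal of the previous elements, then so does the leading form of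
`n` up to an element of lower degree, and induction on the degree of `n` applies. -/
theorem isWeaklyRegular_of_leading (hg : ∀ i, DegLE 𝒜 (g i) (δ i))
    (hgh : ∀ i, proj 𝒜 (δ i) (g i) = h i) (m : ℕ)
    (H : RingTheory.Sequence.IsWeaklyRegular A ((List.range m).map h)) :
    RingTheory.Sequence.IsWeaklyRegular A ((List.range m).map g) := by
  rw [isWeaklyRegular_range_iff] at H ⊢
  intro k hk n hn
  obtain ⟨s, hs⟩ := exists_degLE (𝒜 := 𝒜) n
  -- `DegLE 𝒜 n s` is used in the shifted form `∀ c ≥ s, proj c n = 0`, to start at `n = 0`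
  have hs' : ∀ c, s + 1 ≤ c → proj 𝒜 c n = 0 := fun c hc => hs c (by omega)
  clear hs
  generalize s + 1 = t at hs'
  induction t generalizing n with
  | zero =>
    have : DegLE 𝒜 n 0 := fun c _ => hs' c (by omega)
    rw [this.sum_eq, zero_add, Finset.sum_range_one, hs' 0 le_rfl]
    exact zero_mem _
  | succ t ih =>
    have hd : DegLE 𝒜 n t := fun c hc => hs' c hc
    have h1 := proj_mem_span_leading hg hgh m H k hk.le _ hn _ ((hg k).mul hd)
    rw [proj_mul_top (hg k) hd, hgh] at h1
    obtain ⟨q, hq, hq1, hq2⟩ := exists_lift_leading hg hgh k (H k hk _ h1) t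
    have h2 : n - q ∈ Ideal.span (g '' Set.Iio k) := by
      refine ih _ ?_ fun c hc => ?_
      · rw [mul_sub]
        exact sub_mem hn (Ideal.mul_mem_left _ _ hq)
      · rcases hc.lt_or_eq with hc' | rfl
        · exact (hd.sub hq1) c hc'
        · rw [map_sub, hq2, proj_same (proj_mem _ _), sub_self]
    simpa using add_mem h2 hq

end LeadingForms

/-! ### Ranks in distributive lattices and Hibi-like algebras -/

section Rank

variable {L : Type} [DistribLattice L] [Fintype L]

open Classical in
/-- The rank of an element of a finite distributive lattice, computed in Birkhoff's representation
as the number of join-irreducible elements below it. -/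
def latRank (x : L) : ℕ := (Finset.univ.filter fun p : L => SupIrred p ∧ p ≤ x).card

theorem latRank_mono {x y : L} (h : x ≤ y) : latRank x ≤ latRank y := by
  classical
  refine Finset.card_le_card fun p hp => ?_
  simp only [Finset.mem_filter, Finset.mem_univ, true_and] at hp ⊢
  exact ⟨hp.1, hp.2.trans h⟩

theorem exists_supIrred_le_not_le [OrderBot L] {x y : L} (h : ¬ y ≤ x) : ∃ p, SupIrred p ∧ p ≤ y ∧ ¬ p ≤ x := by
  classical
  by_contra! H
  obtain ⟨s, hs, hs'⟩ := exists_supIrred_decomposition y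
  refine h ?_
  rw [← hs]
  exact Finset.sup_le fun p hp => H p (hs' hp) (hs ▸ Finset.le_sup (f := id) hp)

theorem latRank_strictMono [OrderBot L] : StrictMono (latRank : L → ℕ) := by
  classical
  intro x y h
  obtain ⟨p, hp, hpy, hpx⟩ := exists_supIrred_le_not_le (not_le_of_gt h)
  refine Finset.card_lt_card ⟨fun q hq => ?_, fun H => hpx ?_⟩
  · simp only [Finset.mem_filter, Finset.mem_univ, true_and] at hq ⊢
    exact ⟨hq.1, hq.2.trans h.le⟩
  · have := H (show p ∈ _ by simp [hp, hpy])
    simp only [Finset.mem_filter, Finset.mem_univ, true_and] at this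
    exact this.2

theorem latRank_covBy [OrderBot L] {x y : L} (h : x ⋖ y) : latRank y = latRank x + 1 := by
  classical
  obtain ⟨p0, hp0, hpy0, hpx0⟩ := exists_supIrred_le_not_le (not_le_of_gt h.lt)
  obtain ⟨p, ⟨hp, hpy, hpx⟩, hmin⟩ := (Set.toFinite {p : L | SupIrred p ∧ p ≤ y ∧ ¬ p ≤ x}).exists_minimal
    ⟨p0, hp0, hpy0, hpx0⟩
  have hxp : x ⊔ p = y := by
    rcases h.eq_or_eq le_sup_left (sup_le h.le hpy) with h1 | h1
    · exact absurd (h1 ▸ le_sup_right) hpx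
    · exact h1
  have hnot : p ∉ Finset.univ.filter fun q : L => SupIrred q ∧ q ≤ x := by simp [hpx]
  have : (Finset.univ.filter fun q : L => SupIrred q ∧ q ≤ y) =
      insert p (Finset.univ.filter fun q : L => SupIrred q ∧ q ≤ x) := by
    ext q
    simp only [Finset.mem_filter, Finset.mem_univ, true_and, Finset.mem_insert]
    constructor
    · rintro ⟨hq, hqy⟩
      by_cases hqx : q ≤ x
      · exact Or.inr ⟨hq, hqx⟩
      · have hqp : q ≤ p := by
          rw [← hxp] at hqy
          exact ((supPrime_iff_supIrred.2 hq).le_sup.1 hqy).resolve_left hqx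
        exact Or.inl (le_antisymm hqp (hmin ⟨hq, hqy, hqx⟩ hqp))
    · rintro (rfl | ⟨hq, hqx⟩)
      · exact ⟨hp, hpy⟩
      · exact ⟨hq, hqx.trans h.le⟩
  rw [latRank, latRank, this, Finset.card_insert_of_notMem hnot]

end Rank

/-- The properties of a Hibi ring, that is of the `K`-algebra `A` generated by elements `x a`
indexed by a distributive lattice subject to the relations `x a * x b = x (a ⊓ b) * x (a ⊔ b)`,
on which the arguments below rest. The ideals generated by the `x a`, `a` in a lower set of the
lattice, are closed under intersection and under colons by the `x a`. -/
structure HibiLike {K A L : Type} [Field K] [CommRing A] [Algebra K A] (𝒜 : ℕ → Submodule K A)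
    [GradedAlgebra 𝒜] [DistribLattice L] (x : L → A) : Prop where
  mem_one : ∀ a, x a ∈ 𝒜 1
  mul_eq : ∀ a b, x a * x b = x (a ⊓ b) * x (a ⊔ b)
  inf_le : ∀ Ω Ω' : Set L, IsLowerSet Ω → IsLowerSet Ω' →
    Ideal.span (x '' Ω) ⊓ Ideal.span (x '' Ω') ≤ Ideal.span (x '' (Ω ∩ Ω'))
  colon : ∀ (Ω : Set L) (a : L), IsLowerSet Ω → a ∉ Ω → ∀ f, x a * f ∈ Ideal.span (x '' Ω) →
    f ∈ Ideal.span (x '' {y | a ⊓ y ∈ Ω})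
  one_notMem : (1 : A) ∉ Ideal.span (x '' Set.univ)
  pos_le : ∀ c, 0 < c → ∀ f ∈ 𝒜 c, f ∈ Ideal.span (x '' Set.univ)
  zero_le : ∀ f ∈ 𝒜 0, ∃ k : K, f = algebraMap K A k

/-! ### Regularity of the rank parameters -/

section QuotientSequences

open RingTheory.Sequence Function
open scoped Pointwise

variable {A : Type} [CommRing A]

/-- The lemma `isWeaklyRegular_left_of_smul_eq_zero` for the Mayer–Vietoris sequence
`0 → A/(I ∩ J) → A/I ⊕ A/J → A/(I + J) → 0`. -/
theorem isWeaklyRegular_quotient_inf {I J : Ideal A} {g : A} {rs : List A}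
    (hI : IsWeaklyRegular (A ⧸ I) (g :: rs)) (hJ : IsWeaklyRegular (A ⧸ J) (g :: rs))
    (hIJ : IsWeaklyRegular (A ⧸ (I ⊔ J)) rs) (hg : g ∈ I ⊔ J) :
    IsWeaklyRegular (A ⧸ (I ⊓ J)) (g :: rs) := by
  let f : (A ⧸ (I ⊓ J)) →ₗ[A] (A ⧸ I) × (A ⧸ J) :=
    (Submodule.factor inf_le_left).prod (Submodule.factor inf_le_right)
  let h : (A ⧸ I) × (A ⧸ J) →ₗ[A] (A ⧸ (I ⊔ J)) :=
    (Submodule.factor le_sup_left).coprod (-Submodule.factor le_sup_right)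
  have hf : Injective f := by
    rw [injective_iff_map_eq_zero]
    intro a ha
    obtain ⟨a, rfl⟩ := Submodule.Quotient.mk_surjective _ a
    have h1 : (Submodule.Quotient.mk a : A ⧸ I) = 0 := congrArg Prod.fst ha
    have h2 : (Submodule.Quotient.mk a : A ⧸ J) = 0 := congrArg Prod.snd ha
    rw [Submodule.Quotient.mk_eq_zero] at h1 h2 ⊢
    exact ⟨h1, h2⟩
  have hfh : Exact f h := by
    rintro ⟨a, b⟩
    obtain ⟨a, rfl⟩ := Submodule.Quotient.mk_surjective _ a
    obtain ⟨b, rfl⟩ := Submodule.Quotient.mk_surjective _ b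
    have : h (Submodule.Quotient.mk a, Submodule.Quotient.mk b) =
        (Submodule.Quotient.mk (a - b) : A ⧸ (I ⊔ J)) := by
      simp only [h, LinearMap.coprod_apply, LinearMap.neg_apply, sub_eq_add_neg]
      rfl
    rw [this, Submodule.Quotient.mk_eq_zero]
    constructor
    · intro hab
      obtain ⟨i, hi, j, hj, hij⟩ := Submodule.mem_sup.1 hab
      refine ⟨Submodule.Quotient.mk (a - i), Prod.ext ?_ ?_⟩
      · change (Submodule.Quotient.mk (a - i) : A ⧸ I) = Submodule.Quotient.mk a
        rw [Submodule.Quotient.eq]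
        simpa using hi
      · change (Submodule.Quotient.mk (a - i) : A ⧸ J) = Submodule.Quotient.mk b
        rw [Submodule.Quotient.eq]
        have : a - i - b = j := by rw [eq_comm, ← sub_eq_zero, ← sub_eq_zero.2 hij]; ring
        rwa [this]
    · rintro ⟨c, hc⟩
      obtain ⟨c, rfl⟩ := Submodule.Quotient.mk_surjective _ c
      have h1 : (Submodule.Quotient.mk c : A ⧸ I) = Submodule.Quotient.mk a := congrArg Prod.fst hc
      have h2 : (Submodule.Quotient.mk c : A ⧸ J) = Submodule.Quotient.mk b := congrArg Prod.snd hc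
      rw [Submodule.Quotient.eq] at h1 h2
      have : a - b = (-(c - a)) + (c - b) := by ring
      rw [this]
      exact Submodule.add_mem_sup (neg_mem h1) h2
  have hh : Surjective h := by
    intro c
    obtain ⟨c, rfl⟩ := Submodule.Quotient.mk_surjective _ c
    refine ⟨(Submodule.Quotient.mk c, 0), ?_⟩
    simp only [h, LinearMap.coprod_apply, map_zero, add_zero]
    rfl
  refine isWeaklyRegular_left_of_smul_eq_zero hf hfh hh (isWeaklyRegular_prod hI hJ) hIJ ?_
  intro z
  obtain ⟨z, rfl⟩ := Submodule.Quotient.mk_surjective _ z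
  rw [← Submodule.Quotient.mk_smul, Submodule.Quotient.mk_eq_zero]
  exact Ideal.mul_mem_right _ _ hg

theorem isWeaklyRegular_quotient_cons {I : Ideal A} {g : A} {rs : List A}
    (hI : ∀ a, g * a ∈ I → a ∈ I) (hrs : IsWeaklyRegular (A ⧸ (I ⊔ Ideal.span {g})) rs) :
    IsWeaklyRegular (A ⧸ I) (g :: rs) := by
  rw [isWeaklyRegular_cons_iff]
  refine ⟨(isSMulRegular_quotient_iff_mem_of_smul_mem I g).2 hI, ?_⟩
  let f : (A ⧸ I) →ₗ[A] (A ⧸ (I ⊔ Ideal.span {g})) := Submodule.factor le_sup_left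
  have hf : Surjective f := Submodule.factor_surjective _
  have hker : (g • ⊤ : Submodule A (A ⧸ I)) = LinearMap.ker f := by
    ext a
    obtain ⟨a, rfl⟩ := Submodule.Quotient.mk_surjective _ a
    have : f (Submodule.Quotient.mk a) = Submodule.Quotient.mk a := rfl
    rw [LinearMap.mem_ker, this, Submodule.Quotient.mk_eq_zero, Submodule.mem_sup,
      Submodule.mem_smul_pointwise_iff_exists]
    constructor
    · rintro ⟨b, -, hb⟩
      obtain ⟨b, rfl⟩ := Submodule.Quotient.mk_surjective _ b
      rw [← Submodule.Quotient.mk_smul, eq_comm, Submodule.Quotient.eq] at hb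
      exact ⟨_, hb, g * b, Ideal.mul_mem_right _ _ (Ideal.mem_span_singleton_self g), by
        rw [smul_eq_mul]; ring⟩
    · rintro ⟨i, hi, j, hj, rfl⟩
      obtain ⟨b, rfl⟩ := Ideal.mem_span_singleton'.1 hj
      refine ⟨Submodule.Quotient.mk b, trivial, ?_⟩
      rw [← Submodule.Quotient.mk_smul, eq_comm, Submodule.Quotient.eq, smul_eq_mul]
      convert hi using 1
      ring
  exact (((Submodule.quotEquivOfEq _ _ hker).trans
    (f.quotKerEquivOfSurjective hf)).isWeaklyRegular_congr rs).2 hrs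

theorem span_union_eq {L : Type} (x : L → A) (Ω Ω' : Set L) :
    Ideal.span (x '' (Ω ∪ Ω')) = Ideal.span (x '' Ω) ⊔ Ideal.span (x '' Ω') := by
  rw [Set.image_union, Ideal.span_union]

end QuotientSequences

namespace HibiLike

open RingTheory.Sequence

variable {K A L : Type} [Field K] [CommRing A] [Algebra K A] {𝒜 : ℕ → Submodule K A}
    [GradedAlgebra 𝒜] [DistribLattice L] {x : L → A}

theorem isLowerSet_not_le (a : L) : IsLowerSet {y : L | ¬ a ≤ y} :=
  fun _ _ h hy h' => hy (h'.trans h)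

theorem isLowerSet_forall_not_le (S : Finset L) : IsLowerSet {y : L | ∀ a ∈ S, ¬ a ≤ y} :=
  fun _ _ h hy a ha h' => hy a ha (h'.trans h)

theorem span_inter_eq (hx : HibiLike 𝒜 x) {Ω Ω' : Set L} (h : IsLowerSet Ω) (h' : IsLowerSet Ω') :
    Ideal.span (x '' (Ω ∩ Ω')) = Ideal.span (x '' Ω) ⊓ Ideal.span (x '' Ω') :=
  le_antisymm (le_inf (Ideal.span_mono (Set.image_mono Set.inter_subset_left))
    (Ideal.span_mono (Set.image_mono Set.inter_subset_right))) (hx.inf_le _ _ h h')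

variable [Fintype L]

/-- The sum of all generators of a given rank; these sums form a linear system of parameters. -/
def param (x : L → A) (i : ℕ) : A := by
  classical exact ∑ a with latRank a = i, x a

/-- Modulo the generators not above `a`, the parameter of the rank of `a` is `x a`. -/
theorem param_sub_mem [OrderBot L] (x : L → A) (a : L) :
    param x (latRank a) - x a ∈ Ideal.span (x '' {y | ¬ a ≤ y}) := by
  classical
  rw [param, ← Finset.add_sum_erase _ _ (show a ∈ _ by simp), add_sub_cancel_left]
  refine sum_mem fun b hb => Ideal.subset_span ⟨b, fun hab => ?_, rfl⟩
  simp only [Finset.mem_erase, Finset.mem_filter, Finset.mem_univ, true_and] at hb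
  exact (latRank_strictMono (lt_of_le_of_ne hab (Ne.symm hb.1))).ne hb.2.symm

variable (x) in
/-- Powers of the parameters of ranks `r, …, r + m - 1`. -/
def paramSeq (e : ℕ → ℕ) (r m : ℕ) : List A :=
  (List.range' r m).map fun i => param x i ^ (e i + 1)

/-- The inductive core of the Cohen–Macaulay property: powers of the parameters of rank at least
`rk a` form a regular sequence modulo the ideal of all generators `x y` with `y ≱ a`, and those of rank at
least `rk a + 1` form one modulo the ideal of all `x y` with `y` above no element of `S`, for a
nonempty set `S` of upper covers of `a`. -/
theorem isWeaklyRegular_paramSeq [BoundedOrder L] (hx : HibiLike 𝒜 x) (e : ℕ → ℕ) : ∀ m : ℕ,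
    (∀ a : L, latRank a + m = latRank (⊤ : L) + 1 →
      IsWeaklyRegular (A ⧸ Ideal.span (x '' {y | ¬ a ≤ y})) (paramSeq x e (latRank a) m)) ∧
    (∀ (a : L) (S : Finset L), S.Nonempty → (∀ b ∈ S, a ⋖ b) →
      latRank a + 1 + m = latRank (⊤ : L) + 1 →
      IsWeaklyRegular (A ⧸ Ideal.span (x '' {y | ∀ b ∈ S, ¬ b ≤ y}))
        (paramSeq x e (latRank a + 1) m)) := by
  classical
  intro m
  induction m with
  | zero =>
    exact ⟨fun _ _ => IsWeaklyRegular.nil _ _, fun _ _ _ _ _ => IsWeaklyRegular.nil _ _⟩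
  | succ m ih =>
    have key : ∀ a : L, latRank a + (m + 1) = latRank (⊤ : L) + 1 →
        IsWeaklyRegular (A ⧸ Ideal.span (x '' {y | ¬ a ≤ y}))
          (paramSeq x e (latRank a) (m + 1)) := by
      intro a ha
      rw [paramSeq, List.range'_succ, List.map_cons]
      -- Modulo `I {y | ¬ a ≤ y}` the parameter of rank `rk a` is `x a`. It is a nonzerodivisor, and
      -- adding it to the ideal gives the ideal belonging to the set of all upper covers of `a`.
      refine isWeaklyRegular_pow_cons (isWeaklyRegular_quotient_cons ?_ ?_) _
      · intro f hf
        have h1 : x a * f ∈ Ideal.span (x '' {y | ¬ a ≤ y}) := by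
          have := sub_mem hf (Ideal.mul_mem_right f _ (param_sub_mem x a))
          convert this using 1
          ring
        have h2 := hx.colon _ a (isLowerSet_not_le a) (by simp) f h1
        convert h2 using 4
        simp
      · rcases Nat.eq_zero_or_pos m with rfl | hm
        · exact IsWeaklyRegular.nil _ _
        have hS : (Finset.univ.filter fun b => a ⋖ b).Nonempty := by
          have hlt : a < ⊤ := lt_top_iff_ne_top.2 (by rintro rfl; omega)
          obtain ⟨b, hb, -⟩ := exists_covBy_le_of_lt hlt
          exact ⟨b, by simpa using hb⟩
        have h3 := ih.2 a _ hS (by simp) (by omega)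
        have hI : Ideal.span (x '' {y | ¬ a ≤ y}) ⊔ Ideal.span {param x (latRank a)} =
            Ideal.span (x '' {y | ∀ b ∈ (Finset.univ.filter fun b => a ⋖ b), ¬ b ≤ y}) := by
          have hset : {y | ∀ b ∈ (Finset.univ.filter fun b => a ⋖ b), ¬ b ≤ y} =
              {y | ¬ a ≤ y} ∪ {a} := by
            ext y
            simp only [Finset.mem_filter, Finset.mem_univ, true_and, Set.mem_ofPred_eq,
              Set.mem_union, Set.mem_singleton_iff]
            constructor
            · intro H
              by_contra! H'
              obtain ⟨b, hb, hby⟩ := exists_covBy_le_of_lt (lt_of_le_of_ne H'.1 (Ne.symm H'.2))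
              exact H b hb hby
            · rintro (H | rfl) b hb hby
              · exact H (hb.le.trans hby)
              · exact hb.lt.not_ge hby
          rw [hset, span_union_eq, Set.image_singleton]
          have hp := param_sub_mem x a
          refine le_antisymm (sup_le le_sup_left ?_) (sup_le le_sup_left ?_)
          · rw [Ideal.span_singleton_le_iff_mem]
            have := Submodule.add_mem_sup hp (Ideal.mem_span_singleton_self (x a))
            rwa [sub_add_cancel] at this
          · rw [Ideal.span_singleton_le_iff_mem]
            have := Submodule.add_mem_sup (neg_mem hp)
              (Ideal.mem_span_singleton_self (param x (latRank a)))
            convert this using 1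
            ring
        rw [hI]
        exact h3
    refine ⟨key, fun a S hS => ?_⟩
    induction hS using Finset.Nonempty.cons_induction with
    | singleton b =>
      intro hb hm
      have hab := latRank_covBy (hb b (by simp))
      have := key b (by omega)
      have hset : {y | ∀ c ∈ ({b} : Finset L), ¬ c ≤ y} = {y | ¬ b ≤ y} := by
        ext y
        simp
      rwa [hset, ← hab]
    | cons b S hbS hS ihS =>
      intro hb hm
      have hab : a ⋖ b := hb b (by simp)
      have hSa : ∀ c ∈ S, a ⋖ c := fun c hc => hb c (by simp [hc])
      have h1 := key b (by have := latRank_covBy hab; omega)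
      have h2 := ihS hSa hm
      rw [latRank_covBy hab] at h1
      have hset : {y | ∀ c ∈ Finset.cons b S hbS, ¬ c ≤ y} =
          {y | ¬ b ≤ y} ∩ {y | ∀ c ∈ S, ¬ c ≤ y} := by
        ext y
        simp
      rw [hset, hx.span_inter_eq (isLowerSet_not_le b) (isLowerSet_forall_not_le S)]
      rw [paramSeq, List.range'_succ, List.map_cons] at h1 h2 ⊢
      -- The sum of the ideals of `b` and of `S` belongs to the set of upper covers `b ⊔ c` of `b`,
      -- where `c` runs through `S`, so that the induction hypothesis for `b` applies.
      refine isWeaklyRegular_quotient_inf h1 h2 ?_ ?_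
      · rw [← span_union_eq]
        have hcov : ∀ c ∈ S, b ⋖ b ⊔ c := by
          intro c hc
          have hac := hSa c hc
          have hbc : b ⊓ c = a := by
            rcases hab.eq_or_eq (le_inf hab.le hac.le) inf_le_left with h | h
            · exact h
            · have hle : b ≤ c := inf_eq_left.1 h
              rcases hac.eq_or_eq hab.le hle with h' | h'
              · exact absurd h' hab.lt.ne'
              · exact absurd (h' ▸ hc) hbS
          exact covBy_sup_of_inf_covBy_of_inf_covBy_left (hbc ▸ hab) (hbc ▸ hac)
        have h3 := ih.2 b (S.image (b ⊔ ·)) (hS.image _)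
          (by simpa using hcov) (by have := latRank_covBy hab; omega)
        rw [latRank_covBy hab] at h3
        have hset' : {y | ¬ b ≤ y} ∪ {y | ∀ c ∈ S, ¬ c ≤ y} =
            {y | ∀ c ∈ S.image (b ⊔ ·), ¬ c ≤ y} := by
          ext y
          simp only [Set.mem_union, Set.mem_ofPred_eq, Finset.mem_image, forall_exists_index,
            and_imp, forall_apply_eq_imp_iff₂, sup_le_iff, not_and]
          constructor
          · rintro (H | H) c hc hby
            · exact absurd hby H
            · exact H c hc
          · intro H
            by_cases hby : b ≤ y
            · exact Or.inr fun c hc => H c hc hby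
            · exact Or.inl hby
        rw [hset']
        exact h3
      · -- Every generator of rank `rk a + 1` lies in the sum, for an element of that rank above both
        -- `b` and some `c ∈ S` would be equal to both of them.
        rw [← span_union_eq, ← latRank_covBy hab, param]
        refine Ideal.pow_mem_of_mem _ ?_ _ (Nat.succ_pos _)
        refine sum_mem fun y hy => Ideal.subset_span (Set.mem_image_of_mem x ?_)
        simp only [Finset.mem_filter, Finset.mem_univ, true_and] at hy
        by_contra! H
        simp only [Set.mem_union, Set.mem_ofPred_eq, not_or, not_not, not_forall] at H
        obtain ⟨hby, c, hc, hcy⟩ := H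
        have hbeq : b = y := by
          by_contra hne
          exact (latRank_strictMono (lt_of_le_of_ne hby hne)).ne hy.symm
        have hceq : c = y := by
          by_contra hne
          have := (latRank_strictMono (lt_of_le_of_ne hcy hne)).ne
          rw [latRank_covBy (hSa c hc), hy, latRank_covBy hab] at this
          exact this rfl
        exact hbS (hbeq ▸ hceq ▸ hc)

/-- Powers of the parameters form a regular sequence. -/
theorem isWeaklyRegular_param [BoundedOrder L] (hx : HibiLike 𝒜 x) (e : ℕ → ℕ) :
    IsWeaklyRegular A ((List.range (latRank (⊤ : L) + 1)).map fun i => param x i ^ (e i + 1)) := by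
  classical
  have h0 : latRank (⊥ : L) = 0 := by
    rw [latRank, Finset.card_eq_zero, Finset.filter_eq_empty_iff]
    rintro p - ⟨hp, hle⟩
    obtain rfl := le_bot_iff.1 hle
    exact hp.1 isMin_bot
  have h1 := (hx.isWeaklyRegular_paramSeq e (latRank (⊤ : L) + 1)).1 ⊥ (by omega)
  have h2 : Ideal.span (x '' {y | ¬ ⊥ ≤ y}) = ⊥ := by simp
  rw [h0, paramSeq, ← List.range_eq_range'] at h1
  exact ((Submodule.quotEquivOfEqBot _ h2).isWeaklyRegular_congr _).1 h1

end HibiLike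

/-! ### Finiteness, dimension and regular sequences at maximal ideals -/

section LinearForms

variable {K A : Type} [Field K] [CommRing A] [Algebra K A] {𝒜 : ℕ → Submodule K A}
  [GradedAlgebra 𝒜]

/-- A homogeneous element in an ideal generated by linear forms is a combination of these linear
forms with homogeneous coefficients. -/
theorem mem_iSup_of_mem_span {ι : Type} [Finite ι] {y : ι → A} (hy : ∀ i, y i ∈ 𝒜 1) {c : ℕ}
    {f : A} (hf : f ∈ 𝒜 (c + 1)) (hfy : f ∈ Ideal.span (Set.range y)) :
    f ∈ ⨆ i, (𝒜 c).map (LinearMap.mulLeft K (y i)) := by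
  cases nonempty_fintype ι
  obtain ⟨g, hg⟩ := (Ideal.mem_span_range_iff_exists_fun).1 hfy
  have : f = ∑ i, y i * GradedRing.proj 𝒜 c (g i) := by
    conv_lhs => rw [← proj_same hf, ← hg, map_sum]
    refine Finset.sum_congr rfl fun i _ => ?_
    rw [mul_comm, proj_mul_of_mem (hy i), if_pos (by omega), Nat.add_sub_cancel]
  rw [this]
  exact sum_mem fun i _ => Submodule.mem_iSup_of_mem i ⟨_, proj_mem c (g i), rfl⟩

end LinearForms

namespace HibiLike

open RingTheory.Sequence

variable {K A L : Type} [Field K] [CommRing A] [Algebra K A] {𝒜 : ℕ → Submodule K A}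
    [GradedAlgebra 𝒜] [DistribLattice L] {x : L → A} [Fintype L]

theorem fg_component (hx : HibiLike 𝒜 x) (c : ℕ) : (𝒜 c).FG := by
  induction c with
  | zero =>
    have : 𝒜 0 = Submodule.span K {1} := by
      refine le_antisymm (fun f hf => ?_) ?_
      · obtain ⟨k, rfl⟩ := hx.zero_le f hf
        exact Submodule.mem_span_singleton.2 ⟨k, (Algebra.algebraMap_eq_smul_one k).symm⟩
      · rw [Submodule.span_singleton_le_iff_mem]
        exact SetLike.GradedOne.one_mem
    rw [this]
    exact Submodule.fg_span_singleton 1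
  | succ c ih =>
    have : 𝒜 (c + 1) = ⨆ a, (𝒜 c).map (LinearMap.mulLeft K (x a)) := by
      refine le_antisymm (fun f hf => mem_iSup_of_mem_span hx.mem_one hf ?_) (iSup_le fun a => ?_)
      · rw [← Set.image_univ]
        exact hx.pos_le _ (Nat.succ_pos c) f hf
      · rintro _ ⟨f, hf, rfl⟩
        rw [add_comm]
        exact SetLike.GradedMul.mul_mem (hx.mem_one a) hf
    rw [this]
    exact Submodule.fg_iSup _ fun a => ih.map _

theorem component_le_pow (hx : HibiLike 𝒜 x) (c : ℕ) :
    ∀ f ∈ 𝒜 c, f ∈ Ideal.span (Set.range x) ^ c := by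
  induction c with
  | zero => intro f _; simp
  | succ c ih =>
    intro f hf
    have h1 := mem_iSup_of_mem_span hx.mem_one hf (by
      rw [← Set.image_univ]
      exact hx.pos_le _ (Nat.succ_pos c) f hf)
    have h2 : (⨆ a, (𝒜 c).map (LinearMap.mulLeft K (x a))) ≤
        (Ideal.span (Set.range x) ^ (c + 1)).restrictScalars K := by
      refine iSup_le fun a => ?_
      rintro _ ⟨g, hg, rfl⟩
      change x a * g ∈ _
      rw [pow_succ']
      exact Ideal.mul_mem_mul (Ideal.subset_span ⟨a, rfl⟩) (ih g hg)
    exact h2 h1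

theorem param_mem (hx : HibiLike 𝒜 x) (i : ℕ) : param x i ∈ 𝒜 1 :=
  sum_mem fun a _ => hx.mem_one a

variable [BoundedOrder L]

/-- The irrelevant ideal is, up to radical, generated by the parameters: by induction on the rank,
since `x a ^ 2 = x a * θ - ∑ x (a ⊓ b) * x (a ⊔ b)`, the sum being over the `b ≠ a` of the same
rank as `a`. -/
theorem mem_radical_param (hx : HibiLike 𝒜 x) (a : L) :
    x a ∈ (Ideal.span (Set.range fun i : Fin (latRank (⊤ : L) + 1) => param x i)).radical := by
  classical
  induction h : latRank a using Nat.strong_induction_on generalizing a with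
  | _ r ih =>
    set I := (Ideal.span (Set.range fun i : Fin (latRank (⊤ : L) + 1) => param x i)).radical
    have hθ : param x r ∈ I := by
      refine Ideal.le_radical (Ideal.subset_span ⟨⟨r, ?_⟩, rfl⟩)
      have := latRank_mono (le_top : a ≤ ⊤)
      omega
    have h1 : x a ^ 2 ∈ I := by
      have h2 : param x r = x a + ∑ b ∈ (Finset.univ.filter fun b => latRank b = r).erase a, x b := by
        rw [param, Finset.add_sum_erase _ _ (show a ∈ _ by simp [h])]
      have h3 : x a ^ 2 = x a * param x r -
          ∑ b ∈ (Finset.univ.filter fun b => latRank b = r).erase a, x (a ⊓ b) * x (a ⊔ b) := by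
        rw [h2, mul_add, Finset.mul_sum, Finset.sum_congr rfl fun b _ => hx.mul_eq a b]
        ring
      rw [h3]
      refine sub_mem (Ideal.mul_mem_left _ _ hθ) (sum_mem fun b hb => Ideal.mul_mem_right _ _ ?_)
      simp only [Finset.mem_erase, Finset.mem_filter, Finset.mem_univ, true_and] at hb
      refine ih _ ?_ (a ⊓ b) rfl
      rw [← h]
      refine latRank_strictMono (lt_of_le_of_ne inf_le_left fun hab => ?_)
      have hlt : a < b := lt_of_le_of_ne (inf_eq_left.1 hab) (Ne.symm hb.1)
      have := latRank_strictMono hlt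
      omega
    exact (Ideal.radical_isRadical _) ⟨2, h1⟩

/-- The ring is a finite module over the polynomial ring in the parameters. -/
theorem finite_param (hx : HibiLike 𝒜 x) :
    (aeval (R := K) fun i : Fin (latRank (⊤ : L) + 1) => param x i).toRingHom.Finite := by
  classical
  set φ := aeval (R := K) fun i : Fin (latRank (⊤ : L) + 1) => param x i with hφ
  obtain ⟨N, hN⟩ : ∃ N, Ideal.span (Set.range x) ^ N ≤
      Ideal.span (Set.range fun i : Fin (latRank (⊤ : L) + 1) => param x i) := by
    refine Ideal.exists_pow_le_of_le_radical_of_fg ?_ ⟨Finset.univ.image x, by simp⟩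
    rw [Ideal.span_le]
    rintro _ ⟨a, rfl⟩
    exact hx.mem_radical_param a
  let _ := φ.toRingHom.toAlgebra
  have hsmul : ∀ (r : MvPolynomial (Fin (latRank (⊤ : L) + 1)) K) (a : A), r • a = φ r * a :=
    fun _ _ => rfl
  have : IsScalarTower K (MvPolynomial (Fin (latRank (⊤ : L) + 1)) K) A := by
    refine IsScalarTower.of_algebraMap_eq fun k => ?_
    exact (φ.commutes k).symm
  choose s hs using hx.fg_component
  let T : Finset A := (Finset.range (N + 1)).biUnion s
  let M := Submodule.span (MvPolynomial (Fin (latRank (⊤ : L) + 1)) K) (T : Set A)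
  have hc : ∀ c, ∀ f ∈ 𝒜 c, f ∈ M := by
    intro c
    induction c with
    | zero =>
      intro f hf
      rw [← hs 0] at hf
      refine Submodule.span_mono ?_ (Submodule.span_subset_span K _ _ hf)
      exact_mod_cast Finset.subset_biUnion_of_mem s (by simp)
    | succ c ih =>
      intro f hf
      rcases Nat.lt_or_ge c N with hcN | hcN
      · rw [← hs (c + 1)] at hf
        refine Submodule.span_mono ?_ (Submodule.span_subset_span K _ _ hf)
        exact_mod_cast Finset.subset_biUnion_of_mem s (by simp; omega)
      · have h1 := mem_iSup_of_mem_span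
          (y := fun i : Fin (latRank (⊤ : L) + 1) => param x i) (fun i => hx.param_mem i) hf
          (hN (Ideal.pow_le_pow_right (by omega) (hx.component_le_pow _ f hf)))
        have h2 : (⨆ i : Fin (latRank (⊤ : L) + 1),
            (𝒜 c).map (LinearMap.mulLeft K (param x i))) ≤ M.restrictScalars K := by
          refine iSup_le fun i => ?_
          rintro _ ⟨g, hg, rfl⟩
          change param x i * g ∈ M
          have : param x i * g = (X i : MvPolynomial (Fin (latRank (⊤ : L) + 1)) K) • g := by
            rw [hsmul, hφ, aeval_X]
          rw [this]
          exact M.smul_mem _ (ih g hg)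
        exact h2 h1
  refine ⟨⟨T, eq_top_iff.2 fun f _ => ?_⟩⟩
  obtain ⟨n, hn⟩ := exists_degLE (𝒜 := 𝒜) f
  rw [hn.sum_eq]
  exact sum_mem fun c _ => hc c _ (proj_mem c f)

theorem ringKrullDim_le (hx : HibiLike 𝒜 x) : ringKrullDim A ≤ (latRank (⊤ : L) + 1 : ℕ) := by
  have hfin := hx.finite_param
  set φ := (aeval (R := K) fun i : Fin (latRank (⊤ : L) + 1) => param x i).toRingHom
  let _ := φ.toAlgebra
  have : Module.Finite (MvPolynomial (Fin (latRank (⊤ : L) + 1)) K) A := hfin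
  have : Algebra.IsIntegral (MvPolynomial (Fin (latRank (⊤ : L) + 1)) K) A :=
    Algebra.IsIntegral.of_finite _ _
  have h1 : ringKrullDim (MvPolynomial (Fin (latRank (⊤ : L) + 1)) K) =
      (latRank (⊤ : L) + 1 : ℕ) := by
    rw [MvPolynomial.ringKrullDim_of_isNoetherianRing, ringKrullDim_eq_zero_of_field, zero_add]
    simp
  rw [← h1]
  refine Order.krullDim_le_of_strictMono (PrimeSpectrum.comap φ) fun P Q hPQ => ?_
  exact Ideal.IsIntegral.comap_lt_comap (R := MvPolynomial (Fin (latRank (⊤ : L) + 1)) K)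
    (I := P.asIdeal) (J := Q.asIdeal) hPQ

theorem isNoetherianRing (hx : HibiLike 𝒜 x) : IsNoetherianRing A := by
  have hfin := hx.finite_param
  set φ := (aeval (R := K) fun i : Fin (latRank (⊤ : L) + 1) => param x i).toRingHom
  let _ := φ.toAlgebra
  have : Module.Finite (MvPolynomial (Fin (latRank (⊤ : L) + 1)) K) A := hfin
  exact IsNoetherianRing.of_finite (MvPolynomial (Fin (latRank (⊤ : L) + 1)) K) A

theorem finiteType (hx : HibiLike 𝒜 x) : Algebra.FiniteType K A := by
  have h1 : (algebraMap K A) =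
      (aeval (R := K) fun i : Fin (latRank (⊤ : L) + 1) => param x i).toRingHom.comp
        (algebraMap K (MvPolynomial (Fin (latRank (⊤ : L) + 1)) K)) :=
    RingHom.ext fun k => ((aeval (R := K) fun i : Fin (latRank (⊤ : L) + 1) =>
      param x i).commutes k).symm
  have h2 : (algebraMap K A).FiniteType := by
    rw [h1]
    refine hx.finite_param.to_finiteType.comp ?_
    rw [RingHom.finiteType_algebraMap]
    infer_instance
  exact RingHom.finiteType_algebraMap.1 h2

/-- Leading forms of a monic polynomial in a linear form. -/
theorem degLE_aeval {θ : A} (hθ : θ ∈ 𝒜 1) (f : Polynomial K) (hf : f.Monic) :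
    DegLE 𝒜 (Polynomial.aeval θ f) f.natDegree ∧
      GradedRing.proj 𝒜 f.natDegree (Polynomial.aeval θ f) = θ ^ f.natDegree := by
  have hpow : ∀ i, θ ^ i ∈ 𝒜 i := fun i => by
    simpa using SetLike.pow_mem_graded i hθ
  have hterm : ∀ i c, i ≠ c →
      GradedRing.proj 𝒜 c (algebraMap K A (f.coeff i) * θ ^ i) = 0 := by
    intro i c hic
    rw [← Algebra.smul_def]
    exact proj_ne ((𝒜 i).smul_mem _ (hpow i)) hic
  rw [Polynomial.aeval_eq_sum_range]
  simp only [Algebra.smul_def]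
  constructor
  · intro c hc
    rw [map_sum]
    exact Finset.sum_eq_zero fun i hi => hterm i c (by simp at hi; omega)
  · rw [map_sum, Finset.sum_eq_single f.natDegree]
    · rw [hf.coeff_natDegree, map_one, one_mul, proj_same (hpow _)]
    · exact fun i _ hi => hterm i _ hi
    · simp

/-- Every maximal ideal contains a regular sequence whose leading forms are powers of the
parameters: the values at the parameters of their minimal polynomials modulo the ideal. -/
theorem exists_isRegular (hx : HibiLike 𝒜 x) (p : Ideal A) (hp : p.IsMaximal) :
    ∃ rs : List A, rs.length = latRank (⊤ : L) + 1 ∧ (∀ r ∈ rs, r ∈ p) ∧ IsRegular A rs := by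
  have := hx.finiteType
  let _ : Field (A ⧸ p) := Ideal.Quotient.field p
  have : Module.Finite K (A ⧸ p) := finite_of_finite_type_of_isJacobsonRing K (A ⧸ p)
  have hint : ∀ a : A ⧸ p, IsIntegral K a := fun a => IsIntegral.of_finite K a
  let f : ℕ → Polynomial K := fun i => minpoly K (Ideal.Quotient.mk p (param x i))
  have hmonic : ∀ i, (f i).Monic := fun i => minpoly.monic (hint _)
  have hdeg : ∀ i, 0 < (f i).natDegree := fun i => minpoly.natDegree_pos (hint _)
  let g : ℕ → A := fun i => Polynomial.aeval (param x i) (f i)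
  have hgp : ∀ i, g i ∈ p := by
    intro i
    rw [← Ideal.Quotient.eq_zero_iff_mem]
    have h1 := minpoly.aeval K (Ideal.Quotient.mk p (param x i))
    have h2 := Polynomial.aeval_algHom_apply (Ideal.Quotient.mkₐ K p) (param x i) (f i)
    exact h2.symm.trans h1
  have hmem : ∀ r ∈ (List.range (latRank (⊤ : L) + 1)).map g, r ∈ p := by
    intro r hr
    obtain ⟨i, -, rfl⟩ := List.mem_map.1 hr
    exact hgp i
  refine ⟨(List.range (latRank (⊤ : L) + 1)).map g, by simp, hmem, ?_, ?_⟩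
  · refine isWeaklyRegular_of_leading (𝒜 := 𝒜) (δ := fun i => (f i).natDegree)
      (h := fun i => param x i ^ (f i).natDegree)
      (fun i => (degLE_aeval (hx.param_mem i) (f i) (hmonic i)).1)
      (fun i => (degLE_aeval (hx.param_mem i) (f i) (hmonic i)).2) _ ?_
    have := hx.isWeaklyRegular_param fun i => (f i).natDegree - 1
    convert this using 4 with i
    exact (Nat.sub_add_cancel (hdeg i)).symm
  · intro h
    refine hp.ne_top ?_
    rw [eq_top_iff, h, smul_eq_mul, Ideal.mul_top, Ideal.ofList, Ideal.span_le]
    exact fun r hr => hmem r hr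

theorem length_le (hx : HibiLike 𝒜 x) (p : Ideal A) [p.IsPrime] (rs : List A)
    (hrs : ∀ r ∈ rs, r ∈ p) (hreg : IsRegular A rs) :
    (rs.length : WithBot ℕ∞) ≤ ringKrullDim (Localization.AtPrime p) := by
  have := hx.isNoetherianRing
  have : IsNoetherianRing (Localization.AtPrime p) :=
    IsLocalization.isNoetherianRing p.primeCompl _ inferInstance
  have h1 := hreg.toIsWeaklyRegular.isRegular_of_isLocalization_of_mem
    (Localization.AtPrime p) p hrs
  have h2 := ringKrullDim_add_length_eq_ringKrullDim_of_isRegular _ h1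
  rw [List.length_map] at h2
  rw [← h2]
  have : Nontrivial (Localization.AtPrime p ⧸ Ideal.ofList (rs.map (algebraMap A (Localization.AtPrime p)))) := by
    refine Ideal.Quotient.nontrivial_iff.2 fun h => h1.top_ne_smul ?_
    rw [h, smul_eq_mul, Ideal.mul_top]
  have h3 := ringKrullDim_nonneg_of_nontrivial
    (R := Localization.AtPrime p ⧸ Ideal.ofList (rs.map (algebraMap A (Localization.AtPrime p))))
  exact le_add_of_nonneg_left h3

theorem ringKrullDim_localization_le (hx : HibiLike 𝒜 x) (p : Ideal A) [hp : p.IsPrime] :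
    ringKrullDim (Localization.AtPrime p) ≤ (latRank (⊤ : L) + 1 : ℕ) := by
  rw [IsLocalization.AtPrime.ringKrullDim_eq_height p]
  exact (Ideal.height_le_ringKrullDim_of_ne_top hp.ne_top).trans hx.ringKrullDim_le

end HibiLike

/-! ### The Koszul filtration -/

section GradedFree

variable {K A : Type} [Field K] [CommRing A] [Algebra K A] (𝒜 : ℕ → Submodule K A)
  [GradedAlgebra 𝒜]

/-- The homogeneous component of degree `j` of an element of the graded free module with basis
elements of degrees `dg k`. -/
def freeComp {r : ℕ} (dg : Fin r → ℕ) (j : ℕ) : (Fin r → A) →+ (Fin r → A) where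
  toFun z k := if dg k ≤ j then GradedRing.proj 𝒜 (j - dg k) (z k) else 0
  map_zero' := by
    ext k
    simp only [Pi.zero_apply, map_zero, ite_self]
  map_add' z w := by
    ext k
    simp only [Pi.add_apply, map_add]
    split_ifs <;> simp

variable {𝒜}

theorem freeComp_apply {r : ℕ} (dg : Fin r → ℕ) (j : ℕ) (z : Fin r → A) (k : Fin r) :
    freeComp 𝒜 dg j z k = if dg k ≤ j then GradedRing.proj 𝒜 (j - dg k) (z k) else 0 := rfl

theorem freeComp_freeComp {r : ℕ} (dg : Fin r → ℕ) (j : ℕ) (z : Fin r → A) :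
    freeComp 𝒜 dg j (freeComp 𝒜 dg j z) = freeComp 𝒜 dg j z := by
  ext k
  rw [freeComp_apply, freeComp_apply]
  split_ifs
  · exact proj_same (proj_mem _ _)
  · rfl

theorem freeComp_smul {r : ℕ} (dg : Fin r → ℕ) {b : A} (hb : b ∈ 𝒜 1) (j : ℕ) (z : Fin r → A) :
    freeComp 𝒜 dg (j + 1) (b • z) = b • freeComp 𝒜 dg j z := by
  ext k
  rw [Pi.smul_apply, freeComp_apply, freeComp_apply, Pi.smul_apply, smul_eq_mul, smul_eq_mul]
  rcases Nat.lt_trichotomy (dg k) (j + 1) with h | h | h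
  · rw [if_pos h.le, if_pos (by omega), proj_mul_of_mem hb, if_pos (by omega)]
    congr 3
    omega
  · rw [if_pos h.le, if_neg (by omega), proj_mul_of_mem hb, if_neg (by omega), mul_zero]
  · rw [if_neg (by omega), if_neg (by omega), mul_zero]

theorem freeComp_zero_smul {r : ℕ} (dg : Fin r → ℕ) {b : A} (hb : b ∈ 𝒜 1) (z : Fin r → A) :
    freeComp 𝒜 dg 0 (b • z) = 0 := by
  ext k
  rw [freeComp_apply, Pi.smul_apply, smul_eq_mul, proj_mul_of_mem hb,
    if_neg (by omega : ¬ 1 ≤ 0 - dg k)]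
  simp

theorem freeComp_single {r : ℕ} (dg : Fin r → ℕ) (k : Fin r) :
    freeComp 𝒜 dg (dg k) (Pi.single k 1) = Pi.single k 1 := by
  ext l
  rw [freeComp_apply]
  rcases eq_or_ne l k with rfl | h
  · rw [if_pos le_rfl, Pi.single_eq_same, Nat.sub_self]
    exact proj_same SetLike.GradedOne.one_mem
  · rw [Pi.single_eq_of_ne h, map_zero, ite_self]

theorem freeComp_mem {r : ℕ} (dg : Fin r → ℕ) {s : Set A} (hs : s ⊆ 𝒜 1) (j : ℕ)
    {z : Fin r → A} (hz : ∀ k, z k ∈ Ideal.span s) (k : Fin r) :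
    freeComp 𝒜 dg j z k ∈ Ideal.span s := by
  rw [freeComp_apply]
  split_ifs
  · rw [GradedRing.proj_apply]
    exact Ideal.homogeneous_span 𝒜 s (fun y hy => ⟨1, hs hy⟩) _ (hz k)
  · exact zero_mem _

theorem eq_sum_smul_single {r : ℕ} (z : Fin r → A) :
    z = ∑ k, z k • (Pi.single k 1 : Fin r → A) := by
  ext l
  simp [Finset.sum_apply, Pi.single_apply]

/-- Homogeneous maps of degree zero commute with taking homogeneous components. -/
theorem map_freeComp {r r' : ℕ} {dg : Fin r → ℕ} {dg' : Fin r' → ℕ}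
    (φ : (Fin r → A) →ₗ[A] (Fin r' → A))
    (hφ : ∀ k l, φ (Pi.single k 1) l = 0 ∨ ∃ c, dg k = dg' l + c ∧ φ (Pi.single k 1) l ∈ 𝒜 c)
    (j : ℕ) (z : Fin r → A) : φ (freeComp 𝒜 dg j z) = freeComp 𝒜 dg' j (φ z) := by
  ext l
  rw [freeComp_apply, eq_sum_smul_single (freeComp 𝒜 dg j z)]
  conv_rhs => rw [eq_sum_smul_single z]
  simp only [map_sum, map_smul, Finset.sum_apply, Pi.smul_apply, smul_eq_mul]
  have key : ∀ k, freeComp 𝒜 dg j z k * φ (Pi.single k 1) l =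
      if dg' l ≤ j then GradedRing.proj 𝒜 (j - dg' l) (z k * φ (Pi.single k 1) l) else 0 := by
    intro k
    rw [freeComp_apply]
    rcases hφ k l with h | ⟨c, hc, h⟩
    · rw [h, mul_zero, mul_zero, map_zero, ite_self]
    · rw [mul_comm (z k), proj_mul_of_mem h]
      by_cases h1 : dg k ≤ j
      · rw [if_pos h1, if_pos (by omega), if_pos (by omega), mul_comm]
        congr 3
        omega
      · rw [if_neg h1, zero_mul]
        split_ifs with h2 h3
        · omega
        · rfl
        · rfl
  rw [Finset.sum_congr rfl fun k _ => key k]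
  split_ifs
  · rfl
  · simp

theorem map_mem_of_entries {r r' : ℕ} (φ : (Fin r → A) →ₗ[A] (Fin r' → A)) {I : Ideal A}
    {z : Fin r → A} (hz : ∀ k, z k ∈ I) (l : Fin r') : φ z l ∈ I := by
  rw [eq_sum_smul_single z, map_sum, Finset.sum_apply]
  refine sum_mem fun k _ => ?_
  rw [map_smul, Pi.smul_apply]
  exact Ideal.mul_mem_right _ _ (hz k)

theorem map_mem_of_minimal {r r' : ℕ} (φ : (Fin r → A) →ₗ[A] (Fin r' → A)) {I : Ideal A}
    (hφ : ∀ k l, φ (Pi.single k 1) l ∈ I) (z : Fin r → A) (l : Fin r') : φ z l ∈ I := by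
  rw [eq_sum_smul_single z, map_sum, Finset.sum_apply]
  refine sum_mem fun k _ => ?_
  rw [map_smul, Pi.smul_apply]
  exact Ideal.mul_mem_left _ _ (hφ k l)

end GradedFree

namespace HibiLike

variable {K A L : Type} [Field K] [CommRing A] [Algebra K A] {𝒜 : ℕ → Submodule K A}
    [GradedAlgebra 𝒜] [DistribLattice L] {x : L → A}

theorem mul_mem_span (hx : HibiLike 𝒜 x) {Ω : Set L} (hΩ : IsLowerSet Ω) {a : L} (ha : a ∈ Ω)
    {f : A} (hf : f ∈ Ideal.span (x '' {y | ¬ a ≤ y})) :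
    x a * f ∈ Ideal.span (x '' (Ω \ {a})) := by
  rw [mul_comm]
  refine Submodule.span_induction ?_ ?_ ?_ ?_ hf
  · rintro _ ⟨b, hb, rfl⟩
    rw [mul_comm, hx.mul_eq]
    refine Ideal.mul_mem_right _ _ (Ideal.subset_span ⟨a ⊓ b, ⟨hΩ inf_le_left ha, ?_⟩, rfl⟩)
    intro h
    exact hb (inf_eq_left.1 h)
  · simp
  · intro f g _ _ hf hg
    rw [add_mul]
    exact add_mem hf hg
  · intro c f _ hf
    rw [smul_eq_mul, mul_assoc]
    exact Ideal.mul_mem_left _ _ hf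

/-- The ideals `I Ω` generated by lower sets `Ω` satisfy `(I (Ω \ {a}) : x a) = I {y | y ≱ a}` for
`a` maximal in `Ω`; thus they form a Koszul filtration. -/
theorem colon_maximal (hx : HibiLike 𝒜 x) {Ω : Set L} (hΩ : IsLowerSet Ω) {a : L}
    (ha : Maximal (· ∈ Ω) a) {f : A} (hf : x a * f ∈ Ideal.span (x '' (Ω \ {a}))) :
    f ∈ Ideal.span (x '' {y | ¬ a ≤ y}) := by
  have hJ : IsLowerSet (Ω \ {a}) := by
    rintro b c hcb ⟨hb, hba⟩
    refine ⟨hΩ hcb hb, ?_⟩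
    rintro rfl
    exact hba (le_antisymm (ha.2 hb hcb) hcb)
  have h1 := hx.colon _ a hJ (by simp) f hf
  refine Ideal.span_mono (Set.image_mono ?_) h1
  rintro y ⟨-, hy⟩ hay
  exact hy (inf_eq_left.2 hay)

/-- A minimal graded free resolution `F` of the residue field is linear: all basis elements of `F i`
have degree `i`. -/
theorem koszul_linear [Finite L] (hx : HibiLike 𝒜 x) (r : ℕ → ℕ) (dg : (i : ℕ) → Fin (r i) → ℕ)
    (φ : (i : ℕ) → ((Fin (r (i + 1)) → A) →ₗ[A] (Fin (r i) → A)))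
    (ε : (Fin (r 0) → A) →ₗ[A] (A ⧸ Ideal.span (Set.range x)))
    (hker0 : LinearMap.ker ε = LinearMap.range (φ 0))
    (hker : ∀ i : ℕ, LinearMap.ker (φ i) = LinearMap.range (φ (i + 1)))
    (hε : ∀ k : Fin (r 0), dg 0 k ≠ 0 → ε (Pi.single k 1) = 0)
    (hdeg : ∀ (i : ℕ) (k : Fin (r (i + 1))) (j : Fin (r i)),
      φ i (Pi.single k 1) j = 0 ∨
        ∃ c : ℕ, dg (i + 1) k = dg i j + c ∧ φ i (Pi.single k 1) j ∈ 𝒜 c)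
    (hmin : ∀ (i : ℕ) (k : Fin (r (i + 1))) (j : Fin (r i)),
      φ i (Pi.single k 1) j ∈ Ideal.span (Set.range x))
    (i : ℕ) (k : Fin (r i)) : dg i k = i := by
  classical
  have hone : (1 : A) ∉ Ideal.span (Set.range x) := by
    rw [← Set.image_univ]
    exact hx.one_notMem
  have hsub : ∀ Ω : Set L, x '' Ω ⊆ 𝒜 1 := by
    rintro Ω _ ⟨a, -, rfl⟩
    exact hx.mem_one a
  have hcomp : ∀ i j z, φ i (freeComp 𝒜 (dg (i + 1)) j z) = freeComp 𝒜 (dg i) j (φ i z) :=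
    fun i j z => map_freeComp (φ i) (hdeg i) j z
  -- the boundary condition `∂ z ∈ I Ω`, which is void in homological degree zero
  let bd : (i : ℕ) → Set L → (Fin (r i) → A) → Prop := fun i Ω =>
    match i with
    | 0 => fun _ => True
    | i + 1 => fun z => ∀ k, φ i z k ∈ Ideal.span (x '' Ω)
  -- For `j ≠ i`, the homology of `F ⊗ A / I Ω` vanishes in homological degree `i` and internal
  -- degree `j`. This is shown by induction on `i` and on the size of `Ω`. For `a` maximal in `Ω`,
  -- `∂ z ≡ x a • b'` modulo `I (Ω \ {a})`, and `b'` is a cycle modulo the colon ideal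
  -- `I {y | ¬ a ≤ y}` of degree `j - 1 ≠ i - 1`. So `b'` is a boundary `∂ y'` modulo this ideal, and
  -- `z - x a • y'` is a cycle modulo `I (Ω \ {a})`.
  have main : ∀ i, ∀ Ω : Set L, IsLowerSet Ω → ∀ j, j ≠ i → ∀ z : Fin (r i) → A,
      freeComp 𝒜 (dg i) j z = z → bd i Ω z →
      ∃ y, ∀ k, (z - φ i y) k ∈ Ideal.span (x '' Ω) := by
    intro i
    induction i with
    | zero =>
      intro Ω _ j hj z hz _
      have hdg0 : ∀ k, dg 0 k = 0 := by
        intro k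
        by_contra hk
        have h1 : Pi.single k 1 ∈ LinearMap.range (φ 0) := hker0 ▸ hε k hk
        obtain ⟨y, hy⟩ := h1
        have h2 := map_mem_of_minimal (φ 0) (hmin 0) y k
        rw [hy, Pi.single_eq_same] at h2
        exact hone h2
      have hzm : ∀ k, z k ∈ Ideal.span (Set.range x) := by
        intro k
        rw [← hz, freeComp_apply, if_pos (by rw [hdg0]; omega), ← Set.image_univ]
        exact hx.pos_le _ (by rw [hdg0]; omega) _ (proj_mem _ _)
      have hεz : z ∈ LinearMap.ker ε := by
        rw [LinearMap.mem_ker, eq_sum_smul_single z, map_sum]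
        refine Finset.sum_eq_zero fun k _ => ?_
        rw [map_smul]
        obtain ⟨b, hb⟩ := Ideal.Quotient.mk_surjective (ε (Pi.single k 1))
        rw [← hb, Algebra.smul_def, Ideal.Quotient.algebraMap_eq,
          Ideal.Quotient.eq_zero_iff_mem.2 (hzm k), zero_mul]
      rw [hker0] at hεz
      obtain ⟨y, hy⟩ := hεz
      exact ⟨y, fun k => by simp [hy]⟩
    | succ i ihi =>
      intro Ω hΩ j hj
      induction hn : Ω.ncard generalizing Ω with
      | zero =>
        rw [Set.ncard_eq_zero] at hn
        subst hn
        intro z _ hb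
        have h1 : z ∈ LinearMap.ker (φ i) := by
          rw [LinearMap.mem_ker]
          ext k
          simpa using hb k
        rw [hker] at h1
        obtain ⟨y, hy⟩ := h1
        exact ⟨y, fun k => by simp [hy]⟩
      | succ n ihn =>
        intro z hz hb
        obtain ⟨a, ha⟩ := (Set.toFinite Ω).exists_maximal
          (Set.nonempty_of_ncard_ne_zero (by omega))
        have hJ : IsLowerSet (Ω \ {a}) := by
          rintro b c hcb ⟨hb, hba⟩
          refine ⟨hΩ hcb hb, ?_⟩
          rintro rfl
          exact hba (le_antisymm (ha.2 hb hcb) hcb)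
        have hJn : (Ω \ {a}).ncard = n := by
          rw [Set.ncard_sdiff_singleton_of_mem ha.1, hn, Nat.add_sub_cancel]
        have hJΩ : Ideal.span (x '' (Ω \ {a})) ≤ Ideal.span (x '' Ω) :=
          Ideal.span_mono (Set.image_mono Set.sdiff_subset)
        have hsplit : ∀ k, ∃ b u, u ∈ Ideal.span (x '' (Ω \ {a})) ∧ φ i z k = x a * b + u := by
          intro k
          have h1 : φ i z k ∈ Ideal.span (x '' Ω) := hb k
          have h2 : Ω = {a} ∪ (Ω \ {a}) := by
            rw [Set.union_sdiff_cancel (by simpa using ha.1)]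
          rw [h2, span_union_eq, Set.image_singleton, Submodule.mem_sup] at h1
          obtain ⟨p, hp, u, hu, hpu⟩ := h1
          obtain ⟨b, rfl⟩ := Ideal.mem_span_singleton'.1 hp
          exact ⟨b, u, hu, by rw [← hpu, mul_comm]⟩
        choose b u hu hbu using hsplit
        have hφz : φ i z = x a • b + u := by
          ext k
          rw [hbu]
          rfl
        have hφz' : φ i z = freeComp 𝒜 (dg i) j (x a • b) + freeComp 𝒜 (dg i) j u := by
          rw [← map_add, ← hφz, ← hcomp, hz]
        have hu' := freeComp_mem (dg i) (hsub (Ω \ {a})) j hu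
        rcases j with _ | j
        · rw [freeComp_zero_smul _ (hx.mem_one a), zero_add] at hφz'
          obtain ⟨y, hy⟩ := ihn _ hJ hJn z hz fun k => by
            rw [hφz']
            exact hu' k
          exact ⟨y, fun k => hJΩ (hy k)⟩
        rw [freeComp_smul _ (hx.mem_one a)] at hφz'
        set b' := freeComp 𝒜 (dg i) j b with hb'
        set u' := freeComp 𝒜 (dg i) (j + 1) u
        have hbb : freeComp 𝒜 (dg i) j b' = b' := freeComp_freeComp _ _ _
        have hbd : bd i {y | ¬ a ≤ y} b' := by
          clear_value b' u'
          clear ihi ihn hj hb' hbb hz hbu hφz hu b u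
          cases i with
          | zero => trivial
          | succ i =>
            intro k
            refine hx.colon_maximal hΩ ha ?_
            have h1 : φ i (φ (i + 1) z) = 0 := by
              have : φ (i + 1) z ∈ LinearMap.ker (φ i) := hker i ▸ ⟨z, rfl⟩
              exact this
            rw [hφz', map_add, map_smul] at h1
            have h2 := congrFun h1 k
            rw [Pi.add_apply, Pi.smul_apply, smul_eq_mul, Pi.zero_apply] at h2
            rw [eq_neg_of_add_eq_zero_left h2]
            exact neg_mem (map_mem_of_entries (φ i) hu' k)
        obtain ⟨y, hy⟩ := ihi _ (isLowerSet_not_le a) j (by omega) b' hbb hbd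
        set y' := freeComp 𝒜 (dg (i + 1)) j y with hy'
        have hw : ∀ k, (b' - φ i y') k ∈ Ideal.span (x '' {y | ¬ a ≤ y}) := by
          have : b' - φ i y' = freeComp 𝒜 (dg i) j (b' - φ i y) := by
            rw [map_sub, hbb, hy', hcomp]
          rw [this]
          exact freeComp_mem (dg i) (hsub _) j hy
        obtain ⟨q, hq⟩ := ihn _ hJ hJn (z - x a • y') (by
            rw [map_sub, hz, freeComp_smul _ (hx.mem_one a), hy', freeComp_freeComp]) (by
          intro k
          have : φ i (z - x a • y') k = x a * (b' - φ i y') k + u' k := by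
            rw [map_sub, map_smul, hφz']
            simp only [Pi.sub_apply, Pi.add_apply, Pi.smul_apply, smul_eq_mul]
            ring
          rw [this]
          exact add_mem (hx.mul_mem_span hΩ ha.1 (hw k)) (hu' k))
        refine ⟨q, fun k => ?_⟩
        have : (z - φ (i + 1) q) k = (z - x a • y' - φ (i + 1) q) k + x a * y' k := by
          simp only [Pi.sub_apply, Pi.smul_apply, smul_eq_mul]
          ring
        rw [this]
        exact add_mem (hJΩ (hq k)) (Ideal.mul_mem_right _ _ (Ideal.subset_span ⟨a, ha.1, rfl⟩))
  -- With `I Ω` the irrelevant ideal, minimality makes every basis element a cycle modulo `I Ω`, and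
  -- none is a boundary modulo `I Ω`.
  by_contra hik
  obtain ⟨y, hy⟩ := main i Set.univ isLowerSet_univ (dg i k) hik (Pi.single k 1)
    (freeComp_single _ _) (by
      cases i with
      | zero => trivial
      | succ i =>
        intro l
        rw [Set.image_univ]
        exact hmin i k l)
  have h1 := hy k
  rw [Set.image_univ] at h1
  have h2 := add_mem h1 (map_mem_of_minimal (φ i) (hmin i) y k)
  rw [Pi.sub_apply, sub_add_cancel, Pi.single_eq_same] at h2
  exact hone h2

end HibiLike

/-! ### The monoid of exponents and the lattice of edges -/

section Exponents

variable {n d : ℕ} {V : Fin d → Finset (Fin n)} {t : ℕ → ℕ}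

/-- The exponent vector of the generator belonging to a vertex tuple `e`. -/
def edgeExp (e : Fin d → Fin n) : Fin n →₀ ℕ := ∑ j, Finsupp.single (e j) 1

/-- The total exponent in `a` of the variables with index in `V j` and smaller than `s`. -/
def partCount (V : Fin d → Finset (Fin n)) (j : Fin d) (s : ℕ) : (Fin n →₀ ℕ) →+ ℕ where
  toFun a := ∑ v ∈ (V j).filter fun v : Fin n => (v : ℕ) < s, a v
  map_zero' := by simp
  map_add' a b := by simp [Finset.sum_add_distrib]

/-- The monoid of exponent vectors of the monomials in the toric algebra, described by linear
conditions: every part contributes the same total degree, and if the factors from each part are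
sorted by index, the `i`-th factors from consecutive parts have the prescribed distance, for
every `i`. -/
def edgeMonoid (V : Fin d → Finset (Fin n)) (t : ℕ → ℕ) : AddSubmonoid (Fin n →₀ ℕ) where
  carrier := {a | (∀ v, (∀ j, v ∉ V j) → a v = 0) ∧
    ∀ (j : ℕ) (h : j + 1 < d),
      partCount V ⟨j, Nat.lt_of_succ_lt h⟩ n a = partCount V ⟨j + 1, h⟩ n a ∧
      ∀ s, partCount V ⟨j + 1, h⟩ (s + t j) a ≤ partCount V ⟨j, Nat.lt_of_succ_lt h⟩ s a}
  zero_mem' := ⟨fun _ _ => rfl, fun j h => by simp⟩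
  add_mem' := by
    rintro a b ⟨ha, ha'⟩ ⟨hb, hb'⟩
    refine ⟨fun v hv => by simp [ha v hv, hb v hv], fun j h => ⟨?_, fun s => ?_⟩⟩
    · rw [map_add, map_add, (ha' j h).1, (hb' j h).1]
    · rw [map_add, map_add]
      exact add_le_add ((ha' j h).2 s) ((hb' j h).2 s)

theorem mem_edgeMonoid {a : Fin n →₀ ℕ} : a ∈ edgeMonoid V t ↔ (∀ v, (∀ j, v ∉ V j) → a v = 0) ∧
    ∀ (j : ℕ) (h : j + 1 < d),
      partCount V ⟨j, Nat.lt_of_succ_lt h⟩ n a = partCount V ⟨j + 1, h⟩ n a ∧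
      ∀ s, partCount V ⟨j + 1, h⟩ (s + t j) a ≤ partCount V ⟨j, Nat.lt_of_succ_lt h⟩ s a :=
  Iff.rfl

theorem partCount_apply (j : Fin d) (s : ℕ) (a : Fin n →₀ ℕ) :
    partCount V j s a = ∑ v ∈ (V j).filter fun v : Fin n => (v : ℕ) < s, a v := rfl

theorem partCount_eq_zero {j : Fin d} {s : ℕ} {a : Fin n →₀ ℕ} :
    partCount V j s a = 0 ↔ ∀ v ∈ V j, (v : ℕ) < s → a v = 0 := by
  rw [partCount_apply, Finset.sum_eq_zero_iff]
  simp

/-- The parts are pairwise disjoint, being separated by the order. -/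
theorem part_unique (hV : ∀ i j : Fin d, i < j → ∀ p ∈ V i, ∀ q ∈ V j, (p : ℕ) < (q : ℕ))
    {i j : Fin d} {v : Fin n} (hi : v ∈ V i) (hj : v ∈ V j) : i = j := by
  rcases lt_trichotomy i j with h | h | h
  · exact absurd (hV i j h v hi v hj) (lt_irrefl _)
  · exact h
  · exact absurd (hV j i h v hj v hi) (lt_irrefl _)

theorem edgeExp_apply (e : Fin d → Fin n) (v : Fin n) :
    edgeExp e v = ∑ j, if e j = v then 1 else 0 := by
  rw [edgeExp, Finsupp.finsetSum_apply]
  simp [Finsupp.single_apply]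

theorem edgeExp_apply_self (e : Fin d → Fin n) (j : Fin d) : edgeExp e (e j) ≠ 0 := by
  rw [edgeExp_apply, ← Finset.add_sum_erase _ _ (Finset.mem_univ j), if_pos rfl]
  omega

theorem exists_of_edgeExp_ne_zero {e : Fin d → Fin n} {v : Fin n} (h : edgeExp e v ≠ 0) :
    ∃ j, e j = v := by
  rw [edgeExp_apply] at h
  obtain ⟨j, -, hj⟩ := Finset.exists_ne_zero_of_sum_ne_zero h
  exact ⟨j, by by_contra h'; exact hj (if_neg h')⟩

theorem degree_edgeExp (e : Fin d → Fin n) : (edgeExp e).degree = d := by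
  simp [edgeExp, map_sum, Finsupp.degree_single]

theorem partCount_edgeExp (hV : ∀ i j : Fin d, i < j → ∀ p ∈ V i, ∀ q ∈ V j, (p : ℕ) < (q : ℕ))
    {e : Fin d → Fin n} (he : ∀ j, e j ∈ V j) (j : Fin d) (s : ℕ) :
    partCount V j s (edgeExp e) = if (e j : ℕ) < s then 1 else 0 := by
  rw [edgeExp, map_sum, Finset.sum_eq_single j]
  · rw [partCount_apply]
    split_ifs with h
    · rw [Finset.sum_eq_single (e j)]
      · simp
      · intro v _ hv
        exact Finsupp.single_eq_of_ne hv
      · intro h'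
        exact absurd (Finset.mem_filter.2 ⟨he j, h⟩) h'
    · refine Finset.sum_eq_zero fun v hv => Finsupp.single_eq_of_ne ?_
      rintro rfl
      exact h (Finset.mem_filter.1 hv).2
  · intro i _ hij
    rw [partCount_eq_zero]
    intro v hv _
    refine Finsupp.single_eq_of_ne ?_
    rintro rfl
    exact hij (part_unique hV (he i) hv)
  · simp

theorem edgeExp_mem (hV : ∀ i j : Fin d, i < j → ∀ p ∈ V i, ∀ q ∈ V j, (p : ℕ) < (q : ℕ))
    {e : Fin d → Fin n} (he : IsSpreadEdge n d V t e) : edgeExp e ∈ edgeMonoid V t := by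
  refine mem_edgeMonoid.2 ⟨fun v hv => ?_, fun j h => ⟨?_, fun s => ?_⟩⟩
  · by_contra h
    obtain ⟨j, rfl⟩ := exists_of_edgeExp_ne_zero h
    exact hv j (he.1 j)
  · rw [partCount_edgeExp hV he.1, partCount_edgeExp hV he.1, if_pos (Fin.is_lt _),
      if_pos (Fin.is_lt _)]
  · rw [partCount_edgeExp hV he.1, partCount_edgeExp hV he.1]
    have := he.2 j h
    split_ifs <;> omega

/-- The smallest vertices in each part of the support of a nonzero vector in the monoid form an
edge, which can be split off. -/
theorem exists_min_edge (hd : 0 < d)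
    (hV : ∀ i j : Fin d, i < j → ∀ p ∈ V i, ∀ q ∈ V j, (p : ℕ) < (q : ℕ))
    {a : Fin n →₀ ℕ} (ha : a ∈ edgeMonoid V t) (ha0 : a ≠ 0) :
    ∃ e, IsSpreadEdge n d V t e ∧ (∀ j, ∀ v ∈ V j, a v ≠ 0 → e j ≤ v) ∧
      ∃ b ∈ edgeMonoid V t, a = edgeExp e + b := by
  rw [mem_edgeMonoid] at ha
  obtain ⟨h1, h2⟩ := ha
  have hconst : ∀ (j : ℕ) (h : j < d), partCount V ⟨j, h⟩ n a = partCount V ⟨0, hd⟩ n a := by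
    intro j
    induction j with
    | zero => exact fun _ => rfl
    | succ j ih => exact fun h => (h2 j h).1.symm.trans (ih _)
  have hpos : ∀ j, partCount V j n a ≠ 0 := by
    intro j hj
    refine ha0 (Finsupp.ext fun v => ?_)
    by_cases hv : ∃ i, v ∈ V i
    · obtain ⟨i, hi⟩ := hv
      have : partCount V i n a = 0 := (hconst i i.2).trans ((hconst j j.2).symm.trans hj)
      exact partCount_eq_zero.1 this v hi v.2
    · push Not at hv
      exact h1 v hv
  have hex : ∀ j, ((V j).filter fun v => a v ≠ 0).Nonempty := by
    intro j
    by_contra hemp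
    rw [Finset.not_nonempty_iff_eq_empty, Finset.filter_eq_empty_iff] at hemp
    exact hpos j (partCount_eq_zero.2 fun v hv _ => not_not.1 (hemp hv))
  let e : Fin d → Fin n := fun j => ((V j).filter fun v => a v ≠ 0).min' (hex j)
  have he1 : ∀ j, e j ∈ V j ∧ a (e j) ≠ 0 := fun j =>
    Finset.mem_filter.1 (Finset.min'_mem _ (hex j))
  have he2 : ∀ j, ∀ v ∈ V j, a v ≠ 0 → e j ≤ v := fun j v hv hav =>
    Finset.min'_le _ _ (Finset.mem_filter.2 ⟨hv, hav⟩)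
  have hzero : ∀ j s, s ≤ (e j : ℕ) → partCount V j s a = 0 := by
    intro j s hs
    rw [partCount_eq_zero]
    intro v hv hvs
    by_contra hav
    have : (e j : ℕ) ≤ v := he2 j v hv hav
    omega
  have hedge : IsSpreadEdge n d V t e := by
    refine ⟨fun j => (he1 j).1, fun j h => ?_⟩
    by_contra! hlt
    have h3 := (h2 j h).2 (e ⟨j, Nat.lt_of_succ_lt h⟩)
    rw [hzero ⟨j, _⟩ _ le_rfl, Nat.le_zero] at h3
    exact (he1 _).2 (partCount_eq_zero.1 h3 _ (he1 ⟨j + 1, h⟩).1 hlt)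
  have hle : edgeExp e ≤ a := by
    intro v
    by_cases hv : ∃ j, e j = v
    · obtain ⟨j, rfl⟩ := hv
      have : edgeExp e (e j) = 1 := by
        rw [edgeExp_apply, Finset.sum_eq_single j]
        · simp
        · intro i _ hij
          refine if_neg fun h => hij (part_unique hV (he1 i).1 ?_)
          rw [h]
          exact (he1 j).1
        · simp
      rw [this]
      exact Nat.one_le_iff_ne_zero.2 (he1 j).2
    · have : edgeExp e v = 0 := by
        by_contra h
        exact hv (exists_of_edgeExp_ne_zero h)
      rw [this]
      exact Nat.zero_le _
  obtain ⟨b, hb⟩ := exists_add_of_le hle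
  refine ⟨e, hedge, he2, b, ?_, hb⟩
  have hsum : ∀ j s, partCount V j s a = (if (e j : ℕ) < s then 1 else 0) + partCount V j s b := by
    intro j s
    rw [hb, map_add, partCount_edgeExp hV hedge.1]
  refine mem_edgeMonoid.2 ⟨fun v hv => ?_, fun j h => ⟨?_, fun s => ?_⟩⟩
  · have := h1 v hv
    rw [hb, Finsupp.add_apply] at this
    omega
  · have := (h2 j h).1
    rw [hsum, hsum, if_pos (Fin.is_lt _), if_pos (Fin.is_lt _)] at this
    omega
  · have h3 := (h2 j h).2 s
    have h4 := hsum ⟨j + 1, h⟩ (s + t j)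
    rw [hsum ⟨j, _⟩ s] at h3
    have h5 := hzero ⟨j + 1, h⟩ (s + t j)
    split_ifs at h3 h4 <;> omega

/-- The monoid is saturated: a direction in which one can move infinitely far lies in it. -/
theorem mem_edgeMonoid_of_forall_nsmul {a b : Fin n →₀ ℕ}
    (h : ∀ k : ℕ, b + k • a ∈ edgeMonoid V t) : a ∈ edgeMonoid V t := by
  have aux : ∀ p q x y : ℕ, (∀ k : ℕ, p + k * x ≤ q + k * y) → x ≤ y := by
    intro p q x y H
    by_contra! hlt
    have h1 := H (q + 1)
    have h2 : (q + 1) * (y + 1) ≤ (q + 1) * x := Nat.mul_le_mul_left _ hlt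
    rw [mul_add] at h2
    omega
  simp only [mem_edgeMonoid, map_add, map_nsmul, smul_eq_mul] at h ⊢
  refine ⟨fun v hv => ?_, fun j hj => ⟨?_, fun s => ?_⟩⟩
  · have := (h 1).1 v hv
    simp only [one_smul, Finsupp.add_apply] at this
    omega
  · exact le_antisymm (aux _ _ _ _ fun k => ((h k).2 j hj).1.le)
      (aux _ _ _ _ fun k => ((h k).2 j hj).1.ge)
  · exact aux _ _ _ _ fun k => ((h k).2 j hj).2 s

end Exponents

section EdgeLattice

variable {n d : ℕ} {V : Fin d → Finset (Fin n)} {t : ℕ → ℕ}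

theorem IsSpreadEdge.inf {e f : Fin d → Fin n} (he : IsSpreadEdge n d V t e)
    (hf : IsSpreadEdge n d V t f) : IsSpreadEdge n d V t (e ⊓ f) := by
  refine ⟨fun j => ?_, fun j h => ?_⟩
  · rcases min_choice (e j) (f j) with h | h
    · exact (show (e ⊓ f) j = e j from h) ▸ he.1 j
    · exact (show (e ⊓ f) j = f j from h) ▸ hf.1 j
  · have h1 := he.2 j h
    have h2 := hf.2 j h
    change min (e _ : ℕ) (f _ : ℕ) + t j ≤ min (e _ : ℕ) (f _ : ℕ)
    omega

theorem IsSpreadEdge.sup {e f : Fin d → Fin n} (he : IsSpreadEdge n d V t e)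
    (hf : IsSpreadEdge n d V t f) : IsSpreadEdge n d V t (e ⊔ f) := by
  refine ⟨fun j => ?_, fun j h => ?_⟩
  · rcases max_choice (e j) (f j) with h | h
    · exact (show (e ⊔ f) j = e j from h) ▸ he.1 j
    · exact (show (e ⊔ f) j = f j from h) ▸ hf.1 j
  · have h1 := he.2 j h
    have h2 := hf.2 j h
    change max (e _ : ℕ) (f _ : ℕ) + t j ≤ max (e _ : ℕ) (f _ : ℕ)
    omega

variable (n d V t) in
/-- The edges form a sublattice of the lattice of vertex tuples, that is, the componentwise minimum
and maximum of two edges are edges. -/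
def edgeLattice : Sublattice (Fin d → Fin n) where
  carrier := {e | IsSpreadEdge n d V t e}
  supClosed' := fun _ he _ hf => he.sup hf
  infClosed' := fun _ he _ hf => he.inf hf

instance : DistribLattice (SpreadEdges n d V t) :=
  inferInstanceAs (DistribLattice (edgeLattice n d V t))

instance : Finite (SpreadEdges n d V t) :=
  inferInstanceAs (Finite {e : Fin d → Fin n // IsSpreadEdge n d V t e})

theorem SpreadEdges.coe_inf (e f : SpreadEdges n d V t) : (e ⊓ f).1 = e.1 ⊓ f.1 := rfl

theorem SpreadEdges.coe_sup (e f : SpreadEdges n d V t) : (e ⊔ f).1 = e.1 ⊔ f.1 := rfl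

theorem SpreadEdges.le_iff (e f : SpreadEdges n d V t) : e ≤ f ↔ ∀ j, e.1 j ≤ f.1 j := Iff.rfl

theorem edgeExp_inf_add_sup (e f : Fin d → Fin n) :
    edgeExp (e ⊓ f) + edgeExp (e ⊔ f) = edgeExp e + edgeExp f := by
  simp only [edgeExp, ← Finset.sum_add_distrib]
  refine Finset.sum_congr rfl fun j _ => ?_
  simp only [Pi.inf_apply, Pi.sup_apply]
  rcases le_total (e j) (f j) with h | h
  · rw [inf_eq_left.2 h, sup_eq_right.2 h]
  · rw [inf_eq_right.2 h, sup_eq_left.2 h, add_comm]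

end EdgeLattice

/-! ### The toric algebra as a Hibi-like algebra -/

section Embedding

variable {K : Type} [Field K] {n d : ℕ} {V : Fin d → Finset (Fin n)} {t : ℕ → ℕ}

instance : Algebra K (toricAlgebra K n d V t) :=
  inferInstanceAs (Algebra K (MvPolynomial (SpreadEdges n d V t) K ⧸ toricIdeal K n d V t))

variable (K n d V t) in
/-- The realization of the toric algebra, defined as a quotient, as an algebra of polynomials. -/
def toricEmb : toricAlgebra K n d V t →ₐ[K] MvPolynomial (Fin n) K :=
  Ideal.Quotient.liftₐ (toricIdeal K n d V t) (toricMap K n d V t) fun _ h => h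

variable (K) in
/-- The generator of the toric algebra belonging to an edge. -/
def toricGen (e : SpreadEdges n d V t) : toricAlgebra K n d V t :=
  Ideal.Quotient.mk (toricIdeal K n d V t) (X e)

theorem toricEmb_mk (f : MvPolynomial (SpreadEdges n d V t) K) :
    toricEmb K n d V t (Ideal.Quotient.mk (toricIdeal K n d V t) f) = toricMap K n d V t f := rfl

theorem toricEmb_injective : Function.Injective (toricEmb K n d V t) := by
  refine (injective_iff_map_eq_zero _).2 fun z hz => ?_
  obtain ⟨f, rfl⟩ := Ideal.Quotient.mk_surjective (I := toricIdeal K n d V t) z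
  exact Ideal.Quotient.eq_zero_iff_mem.2 hz

theorem toricMap_X (e : SpreadEdges n d V t) :
    toricMap K n d V t (X e) = monomial (edgeExp e.1) 1 := by
  rw [toricMap, aeval_X, edgeExp, monomial_sum_one]
  rfl

theorem toricEmb_gen (e : SpreadEdges n d V t) :
    toricEmb K n d V t (toricGen K e) = monomial (edgeExp e.1) 1 := by
  rw [toricGen, toricEmb_mk, toricMap_X]

theorem mem_of_mem_support_toricEmb
    (hV : ∀ i j : Fin d, i < j → ∀ p ∈ V i, ∀ q ∈ V j, (p : ℕ) < (q : ℕ))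
    (z : toricAlgebra K n d V t) {u : Fin n →₀ ℕ} (hu : u ∈ (toricEmb K n d V t z).support) :
    u ∈ edgeMonoid V t := by
  obtain ⟨f, rfl⟩ := Ideal.Quotient.mk_surjective (I := toricIdeal K n d V t) z
  rw [toricEmb_mk] at hu
  induction f using MvPolynomial.induction_on generalizing u with
  | C a =>
    have h1 : toricMap K n d V t (C a) = monomial 0 a := (toricMap K n d V t).commutes a
    rw [h1] at hu
    rw [Finset.mem_singleton.1 (support_monomial_subset hu)]
    exact zero_mem _
  | add p q hp hq =>
    rw [map_add] at hu
    rcases Finset.mem_union.1 (support_add hu) with h | h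
    · exact hp h
    · exact hq h
  | mul_X p e hp =>
    rw [map_mul, toricMap_X] at hu
    obtain ⟨v, hv, w, hw, rfl⟩ := Finset.mem_add.1 (support_mul _ _ hu)
    rw [Finset.mem_singleton.1 (support_monomial_subset hw)]
    exact add_mem (hp hv) (edgeExp_mem hV e.2)

theorem exists_toricEmb_monomial (hd : 0 < d)
    (hV : ∀ i j : Fin d, i < j → ∀ p ∈ V i, ∀ q ∈ V j, (p : ℕ) < (q : ℕ))
    {u : Fin n →₀ ℕ} (hu : u ∈ edgeMonoid V t) (c : K) :
    ∃ z, toricEmb K n d V t z = monomial u c := by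
  induction h : u.degree using Nat.strong_induction_on generalizing u with
  | _ k ih =>
    by_cases hu0 : u = 0
    · exact ⟨algebraMap K _ c, by rw [AlgHom.commutes, hu0]; rfl⟩
    · obtain ⟨e, he, -, b, hb, rfl⟩ := exists_min_edge hd hV hu hu0
      have hdeg : b.degree < k := by
        rw [map_add, degree_edgeExp] at h
        omega
      obtain ⟨z, hz⟩ := ih _ hdeg hb rfl
      have hgen : toricEmb K n d V t (toricGen K ⟨e, he⟩) = monomial (edgeExp e) 1 :=
        toricEmb_gen _
      exact ⟨toricGen K ⟨e, he⟩ * z, by rw [map_mul, hgen, hz, monomial_mul, one_mul]⟩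

theorem exists_toricEmb_eq (hd : 0 < d)
    (hV : ∀ i j : Fin d, i < j → ∀ p ∈ V i, ∀ q ∈ V j, (p : ℕ) < (q : ℕ))
    {s : MvPolynomial (Fin n) K} (hs : ∀ u ∈ s.support, u ∈ edgeMonoid V t) :
    ∃ z, toricEmb K n d V t z = s := by
  rw [← AlgHom.mem_range, ← support_sum_monomial_coeff s]
  exact sum_mem fun u hu => exists_toricEmb_monomial hd hV (hs u hu) _

/-- Ideals generated by some of the generators are monomial ideals. -/
theorem mem_span_toricGen_iff (hd : 0 < d)
    (hV : ∀ i j : Fin d, i < j → ∀ p ∈ V i, ∀ q ∈ V j, (p : ℕ) < (q : ℕ))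
    (Ω : Set (SpreadEdges n d V t)) (z : toricAlgebra K n d V t) :
    z ∈ Ideal.span (toricGen K '' Ω) ↔ ∀ u ∈ (toricEmb K n d V t z).support,
      ∃ e ∈ Ω, ∃ v ∈ edgeMonoid V t, u = edgeExp e.1 + v := by
  constructor
  · intro hz
    induction hz using Submodule.span_induction with
    | mem y hy =>
      obtain ⟨e, he, rfl⟩ := hy
      intro u hu
      rw [toricEmb_gen] at hu
      exact ⟨e, he, 0, zero_mem _, by
        rw [Finset.mem_singleton.1 (support_monomial_subset hu), add_zero]⟩
    | zero => simp
    | add y y' _ _ h h' =>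
      intro u hu
      rw [map_add] at hu
      rcases Finset.mem_union.1 (support_add hu) with hu | hu
      · exact h u hu
      · exact h' u hu
    | smul a y _ h =>
      intro u hu
      rw [smul_eq_mul, map_mul] at hu
      obtain ⟨v, hv, w, hw, rfl⟩ := Finset.mem_add.1 (support_mul _ _ hu)
      obtain ⟨e, he, w', hw', rfl⟩ := h w hw
      exact ⟨e, he, v + w', add_mem (mem_of_mem_support_toricEmb hV a hv) hw',
        add_left_comm _ _ _⟩
  · intro h
    have h1 : ∀ u ∈ (toricEmb K n d V t z).support, ∃ y ∈ Ideal.span (toricGen K '' Ω),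
        toricEmb K n d V t y = monomial u (coeff u (toricEmb K n d V t z)) := by
      intro u hu
      obtain ⟨e, he, v, hv, rfl⟩ := h u hu
      obtain ⟨w, hw⟩ := exists_toricEmb_monomial hd hV hv
        (coeff (edgeExp e.1 + v) (toricEmb K n d V t z))
      exact ⟨w * toricGen K e, Ideal.mul_mem_left _ _ (Ideal.subset_span ⟨e, he, rfl⟩), by
        rw [map_mul, toricEmb_gen, hw, monomial_mul, mul_one, add_comm]⟩
    choose! y hy hy' using h1
    have h2 : z = ∑ u ∈ (toricEmb K n d V t z).support, y u := by
      apply toricEmb_injective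
      rw [map_sum, Finset.sum_congr rfl hy', support_sum_monomial_coeff]
    rw [h2]
    exact sum_mem hy

end Embedding

section Grading

variable {K : Type} [Field K] {n d : ℕ} {V : Fin d → Finset (Fin n)} {t : ℕ → ℕ}

variable (K n d V t) in
/-- The standard grading of the toric algebra: degree `c` here is degree `d * c` as a
polynomial in the vertex variables. -/
def toricGrading (c : ℕ) : Submodule K (toricAlgebra K n d V t) :=
  (homogeneousSubmodule (Fin n) K (d * c)).comap (toricEmb K n d V t).toLinearMap

theorem mem_toricGrading {c : ℕ} {z : toricAlgebra K n d V t} :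
    z ∈ toricGrading K n d V t c ↔ (toricEmb K n d V t z).IsHomogeneous (d * c) := Iff.rfl

theorem mem_toricGrading_of_toricHomog {c : ℕ} {z : toricAlgebra K n d V t}
    (h : toricHomog K n d V t c z) : z ∈ toricGrading K n d V t c := by
  obtain ⟨f, hf, rfl⟩ := h
  change (toricMap K n d V t f).IsHomogeneous (d * c)
  rw [toricMap]
  refine hf.aeval _ fun e => ?_
  have := IsHomogeneous.prod Finset.univ (fun j => (X (e.1 j) : MvPolynomial (Fin n) K))
    (fun _ => 1) fun j _ => isHomogeneous_X K (e.1 j)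
  simpa using this

instance : SetLike.GradedMonoid (toricGrading K n d V t) where
  one_mem := by
    rw [mem_toricGrading, map_one, mul_zero]
    exact isHomogeneous_one _ _
  mul_mem i j x y hx hy := by
    rw [mem_toricGrading] at *
    rw [map_mul, mul_add]
    exact hx.mul hy

theorem toricGrading_isInternal (hd : 0 < d) : DirectSum.IsInternal (toricGrading K n d V t) := by
  constructor
  · have key : ∀ (z : DirectSum ℕ fun c => toricGrading K n d V t c) (c : ℕ),
        homogeneousComponent (d * c) (toricEmb K n d V t
          (DirectSum.coeAddMonoidHom (toricGrading K n d V t) z)) =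
          toricEmb K n d V t (z c) := by
      intro z c
      induction z using DirectSum.induction_on with
      | zero => simp
      | of b y =>
        have hy : toricEmb K n d V t y.1 ∈ homogeneousSubmodule (Fin n) K (d * b) := y.2
        rw [DirectSum.coeAddMonoidHom_of, homogeneousComponent_of_mem hy]
        by_cases hbc : c = b
        · subst hbc
          rw [if_pos rfl, DirectSum.of_eq_same]
        · rw [if_neg fun h => hbc (Nat.eq_of_mul_eq_mul_left hd h),
            DirectSum.of_eq_of_ne _ _ _ hbc, ZeroMemClass.coe_zero, map_zero]
      | add z z' h h' => rw [map_add, map_add, map_add, h, h', DirectSum.add_apply,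
          AddMemClass.coe_add, map_add]
    intro z z' h
    refine DFinsupp.ext fun c => Subtype.ext (toricEmb_injective ?_)
    rw [← key, ← key, h]
  · intro z
    obtain ⟨f, rfl⟩ := Ideal.Quotient.mk_surjective (I := toricIdeal K n d V t) z
    refine ⟨∑ c ∈ Finset.range (f.totalDegree + 1), DirectSum.of _ c
      ⟨Ideal.Quotient.mk (toricIdeal K n d V t) (homogeneousComponent c f),
        mem_toricGrading_of_toricHomog ⟨_, homogeneousComponent_isHomogeneous c f, rfl⟩⟩, ?_⟩
    rw [map_sum]
    simp only [DirectSum.coeAddMonoidHom_of]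
    conv_rhs => rw [← sum_homogeneousComponent f]
    exact (map_sum (Ideal.Quotient.mk (toricIdeal K n d V t)) _ _).symm

/-- The standard grading as a graded algebra structure; the edges must be nonempty for the
degrees to be determined. -/
abbrev toricGradedAlgebra (hd : 0 < d) : GradedAlgebra (toricGrading K n d V t) where
  toDecomposition := (toricGrading_isInternal hd).chooseDecomposition

theorem hibiLike_toricGen (hd : 0 < d)
    (hV : ∀ i j : Fin d, i < j → ∀ p ∈ V i, ∀ q ∈ V j, (p : ℕ) < (q : ℕ)) :
    letI := toricGradedAlgebra (K := K) (V := V) (t := t) hd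
    HibiLike (toricGrading K n d V t) (toricGen K (V := V) (t := t)) := by
  refine @HibiLike.mk _ _ _ _ _ _ _ (_) _ _ ?_ ?_ ?_ ?_ ?_ ?_ ?_
  · exact fun e => mem_toricGrading_of_toricHomog ⟨X e, isHomogeneous_X K e, rfl⟩
  · intro e f
    apply toricEmb_injective
    simp only [map_mul, toricEmb_gen, monomial_mul, SpreadEdges.coe_inf, SpreadEdges.coe_sup,
      edgeExp_inf_add_sup]
  · rintro Ω Ω' hΩ hΩ' z ⟨hz, hz'⟩
    rw [SetLike.mem_coe, mem_span_toricGen_iff hd hV] at hz hz'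
    rw [mem_span_toricGen_iff hd hV]
    intro u hu
    obtain ⟨e, he, v, -, rfl⟩ := hz u hu
    obtain ⟨e', he', v', -, h'⟩ := hz' _ hu
    -- the smallest edge dividing a monomial lies below every edge dividing it
    have hu0 : edgeExp e.1 + v ≠ 0 := by
      intro h0
      have := DFunLike.congr_fun h0 (e.1 ⟨0, hd⟩)
      have h2 := edgeExp_apply_self e.1 ⟨0, hd⟩
      simp at this
      omega
    obtain ⟨m, hm, hmin, b, hb, hmb⟩ :=
      exists_min_edge hd hV (mem_of_mem_support_toricEmb hV z hu) hu0
    have key : ∀ (f : SpreadEdges n d V t) w, edgeExp e.1 + v = edgeExp f.1 + w →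
        (⟨m, hm⟩ : SpreadEdges n d V t) ≤ f := by
      intro f w hw
      refine (SpreadEdges.le_iff _ _).2 fun j => hmin j _ (f.2.1 j) ?_
      rw [hw, Finsupp.add_apply]
      have := edgeExp_apply_self f.1 j
      omega
    exact ⟨⟨m, hm⟩, ⟨hΩ (key e v rfl) he, hΩ' (key e' v' h') he'⟩, b, hb, hmb⟩
  · intro Ω a hΩ ha f hf
    rw [mem_span_toricGen_iff hd hV] at hf ⊢
    intro u hu
    have hu' : edgeExp a.1 + u ∈ (toricEmb K n d V t (toricGen K a * f)).support := by
      rw [map_mul, toricEmb_gen, mem_support_iff, coeff_monomial_mul, one_mul]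
      exact mem_support_iff.1 hu
    obtain ⟨e, he, v, -, hev⟩ := hf _ hu'
    have hsupp : ∀ j, a.1 j = e.1 j ∨ u (e.1 j) ≠ 0 := by
      intro j
      by_contra! h
      have h1 := DFunLike.congr_fun hev (e.1 j)
      rw [Finsupp.add_apply, Finsupp.add_apply, h.2, add_zero] at h1
      have h2 : edgeExp a.1 (e.1 j) ≠ 0 := by
        have := edgeExp_apply_self e.1 j
        omega
      obtain ⟨i, hi⟩ := exists_of_edgeExp_ne_zero h2
      have hij : i = j := part_unique hV (a.2.1 i) (hi ▸ e.2.1 j)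
      exact h.1 (hij ▸ hi)
    have hu0 : u ≠ 0 := by
      rintro rfl
      refine ha (hΩ ((SpreadEdges.le_iff _ _).2 fun j => ?_) he)
      exact ((hsupp j).resolve_right (by simp)).le
    obtain ⟨m, hm, hmin, b, hb, hmb⟩ :=
      exists_min_edge hd hV (mem_of_mem_support_toricEmb hV f hu) hu0
    refine ⟨⟨m, hm⟩, hΩ ((SpreadEdges.le_iff _ _).2 fun j => ?_) he, b, hb, hmb⟩
    rcases hsupp j with h | h
    · exact inf_le_left.trans h.le
    · exact inf_le_right.trans (hmin j _ (e.2.1 j) h)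
  · rw [mem_span_toricGen_iff hd hV]
    intro h
    obtain ⟨e, -, v, -, hev⟩ := h 0 (by simp)
    have h1 := DFunLike.congr_fun hev (e.1 ⟨0, hd⟩)
    have h2 := edgeExp_apply_self e.1 ⟨0, hd⟩
    simp at h1
    omega
  · intro c hc f hf
    rw [mem_span_toricGen_iff hd hV]
    intro u hu
    have hu0 : u ≠ 0 := by
      rintro rfl
      have h1 := hf (mem_support_iff.1 hu)
      simp at h1
      omega
    obtain ⟨m, hm, -, b, hb, hmb⟩ :=
      exists_min_edge hd hV (mem_of_mem_support_toricEmb hV f hu) hu0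
    exact ⟨⟨m, hm⟩, trivial, b, hb, hmb⟩
  · intro f hf
    rw [mem_toricGrading, mul_zero, ← totalDegree_zero_iff_isHomogeneous,
      totalDegree_eq_zero_iff_eq_C] at hf
    refine ⟨coeff 0 (toricEmb K n d V t f), toricEmb_injective (hf.trans ?_)⟩
    exact ((toricEmb K n d V t).commutes _).symm

end Grading

/-! ### Normality -/

section Normality

/-- A domain embedded in an integrally closed domain is integrally closed if it contains every
element of the larger domain whose powers have a common denominator. -/
theorem isIntegrallyClosed_of_injective {A S : Type*} [CommRing A] [IsDomain A] [CommRing S]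
    [IsDomain S] [IsIntegrallyClosed S] (ψ : A →+* S) (hψ : Function.Injective ψ)
    (h : ∀ s b, b ≠ 0 → (∀ k : ℕ, ∃ z, ψ z = ψ b * s ^ k) → ∃ z, ψ z = s) :
    IsIntegrallyClosed A := by
  rw [isIntegrallyClosed_iff (FractionRing A)]
  intro y hy
  have hg : Function.Injective ((algebraMap S (FractionRing S)).comp ψ) :=
    (IsFractionRing.injective S (FractionRing S)).comp hψ
  let ℓ : FractionRing A →+* FractionRing S := IsFractionRing.lift hg
  have hℓ : ∀ a, ℓ (algebraMap A _ a) = algebraMap S _ (ψ a) := fun a =>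
    IsFractionRing.lift_algebraMap hg a
  have hint : IsIntegral S (ℓ y) := by
    obtain ⟨p, hp, hp0⟩ := hy
    refine ⟨p.map ψ, hp.map ψ, ?_⟩
    rw [Polynomial.eval₂_map, show (algebraMap S (FractionRing S)).comp ψ =
      ℓ.comp (algebraMap A (FractionRing A)) from RingHom.ext fun a => (hℓ a).symm,
      ← Polynomial.hom_eval₂, hp0, map_zero]
  obtain ⟨s, hs⟩ := IsIntegrallyClosed.isIntegral_iff.1 hint
  obtain ⟨b, hb, hbk⟩ := hy.isAlmostIntegral
  obtain ⟨z, hz⟩ := h s b (nonZeroDivisors.ne_zero hb) fun k => by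
    obtain ⟨z, hz⟩ := hbk k
    refine ⟨z, IsFractionRing.injective S (FractionRing S) ?_⟩
    rw [← hℓ, hz, Algebra.smul_def, map_mul, map_pow, hℓ, ← hs, map_mul, map_pow]
  exact ⟨z, ℓ.injective (by rw [hℓ, hz, hs])⟩

variable {K : Type} [Field K] {n d : ℕ} {V : Fin d → Finset (Fin n)} {t : ℕ → ℕ}

/-- A polynomial all of whose powers have a common denominator in the toric algebra has its
exponents in the monoid: the leading exponent is in the monoid by saturation, and the leading
term can be removed. -/
theorem support_subset_of_forall_pow (hd : 0 < d)
    (hV : ∀ i j : Fin d, i < j → ∀ p ∈ V i, ∀ q ∈ V j, (p : ℕ) < (q : ℕ))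
    (s : MvPolynomial (Fin n) K) (b : toricAlgebra K n d V t) (hb : b ≠ 0)
    (h : ∀ k : ℕ, ∃ z, toricEmb K n d V t z = toricEmb K n d V t b * s ^ k) :
    ∀ u ∈ s.support, u ∈ edgeMonoid V t := by
  induction hc : s.support.card using Nat.strong_induction_on generalizing s b with
  | _ N ih =>
    by_cases hs0 : s = 0
    · simp [hs0]
    let m : MonomialOrder (Fin n) := MonomialOrder.lex
    have hb' : toricEmb K n d V t b ≠ 0 := fun h0 =>
      hb (toricEmb_injective (h0.trans (map_zero _).symm))
    have hdeg : m.degree s ∈ edgeMonoid V t := by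
      refine mem_edgeMonoid_of_forall_nsmul (b := m.degree (toricEmb K n d V t b)) fun k => ?_
      obtain ⟨z, hz⟩ := h k
      rw [← m.degree_pow, ← m.degree_mul hb' (pow_ne_zero _ hs0), ← hz]
      refine mem_of_mem_support_toricEmb hV z (m.degree_mem_support ?_)
      rw [hz]
      exact mul_ne_zero hb' (pow_ne_zero _ hs0)
    obtain ⟨w, hw⟩ := exists_toricEmb_monomial (K := K) hd hV hdeg (coeff (m.degree s) s)
    let s' := s - monomial (m.degree s) (coeff (m.degree s) s)
    have hs' : s'.support = s.support.erase (m.degree s) := by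
      ext u
      simp only [s', mem_support_iff, coeff_sub, coeff_monomial, Finset.mem_erase]
      split_ifs with hu
      · simp [hu]
      · simp [Ne.symm hu]
    have h' : ∀ k : ℕ, ∃ z, toricEmb K n d V t z = toricEmb K n d V t b * s' ^ k := by
      intro k
      choose z hz using h
      refine ⟨∑ i ∈ Finset.range (k + 1), z i * (-w) ^ (k - i) * (k.choose i : toricAlgebra K n d V t), ?_⟩
      simp only [s', sub_eq_add_neg, add_pow, map_sum, map_mul, map_pow, map_neg, map_natCast,
        hz, hw, Finset.mul_sum, mul_assoc]
    have hmem := m.degree_mem_support hs0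
    have h1 := ih _ (by rw [← hc, hs']; exact Finset.card_erase_lt_of_mem hmem) s' b hb h' rfl
    intro u hu
    by_cases hu' : u = m.degree s
    · exact hu' ▸ hdeg
    · exact h1 u (by rw [hs']; exact Finset.mem_erase.2 ⟨hu', hu⟩)

theorem isDomain_toricAlgebra : IsDomain (toricAlgebra K n d V t) :=
  toricEmb_injective.isDomain (toricEmb K n d V t).toRingHom

theorem isIntegrallyClosed_toricAlgebra (hd : 0 < d)
    (hV : ∀ i j : Fin d, i < j → ∀ p ∈ V i, ∀ q ∈ V j, (p : ℕ) < (q : ℕ)) :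
    IsIntegrallyClosed (toricAlgebra K n d V t) := by
  have := isDomain_toricAlgebra (K := K) (V := V) (t := t)
  refine isIntegrallyClosed_of_injective (toricEmb K n d V t).toRingHom toricEmb_injective
    fun s b hb h => ?_
  exact exists_toricEmb_eq hd hV (support_subset_of_forall_pow hd hV s b hb h)

end Normality

/-! ### The Cohen–Macaulay property and the conclusion -/

section Conclusion

/-- The supremum of natural numbers defining the depth is taken over a nonempty bounded set here, so
it is an actual maximum. -/
theorem idealDepth_eq {R : Type} [CommRing R] {p : Ideal R} {rs : List R} (hmem : ∀ r ∈ rs, r ∈ p)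
    (hreg : RingTheory.Sequence.IsRegular R rs)
    (hbound : ∀ rs' : List R, (∀ r ∈ rs', r ∈ p) → RingTheory.Sequence.IsRegular R rs' →
      rs'.length ≤ rs.length) : idealDepth R p R = rs.length := by
  refine IsGreatest.csSup_eq ⟨⟨rs, rfl, hmem, hreg⟩, ?_⟩
  rintro _ ⟨rs', rfl, h1, h2⟩
  exact hbound rs' h1 h2

variable {K : Type} [Field K] {n d : ℕ} {V : Fin d → Finset (Fin n)} {t : ℕ → ℕ}

theorem isCohenMacaulayRing_toricAlgebra (hd : 0 < d)
    (hV : ∀ i j : Fin d, i < j → ∀ p ∈ V i, ∀ q ∈ V j, (p : ℕ) < (q : ℕ))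
    (hL : Nonempty (SpreadEdges n d V t)) : IsCohenMacaulayRing (toricAlgebra K n d V t) := by
  intro p hp
  let _ := toricGradedAlgebra (K := K) (V := V) (t := t) hd
  have hx := hibiLike_toricGen (K := K) (t := t) hd hV
  let _ : Fintype (SpreadEdges n d V t) := Fintype.ofFinite _
  let _ : BoundedOrder (SpreadEdges n d V t) := Fintype.toBoundedOrder _
  have := hp.isPrime
  obtain ⟨rs, hlen, hmem, hreg⟩ := hx.exists_isRegular p hp
  have hupper := hx.ringKrullDim_localization_le p
  have hdepth := idealDepth_eq hmem hreg fun rs' h1 h2 => by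
    rw [hlen]
    exact_mod_cast (hx.length_le p rs' h1 h2).trans hupper
  rw [hdepth]
  refine le_antisymm ?_ ?_
  · exact_mod_cast hx.length_le p rs hmem hreg
  · rw [hlen]
    exact_mod_cast hupper

end Conclusion

/-- **Corollary.**  The toric `K`-algebra `K[I(K_V^𝐭)]`, generated by the minimal monomial
generators of the edge ideal of a complete `𝐭`-spread `d`-partite hypergraph, is a Koszul
algebra and a Cohen–Macaulay normal domain. -/
theorem toricAlgebra_koszul_CM_normal_domain
    (K : Type) [Field K] (n d : ℕ) (hd : 0 < d)
    (V : Fin d → Finset (Fin n)) (t : ℕ → ℕ)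
    (ht : ∀ i, 1 ≤ t i)
    (hV : ∀ i j : Fin d, i < j → ∀ p ∈ V i, ∀ q ∈ V j, (p : ℕ) < (q : ℕ))
    (hne : ∀ j, (V j).Nonempty)
    (hiso : ∀ (j : Fin d), ∀ v ∈ V j, ∃ e, IsSpreadEdge n d V t e ∧ e j = v) :
    IsKoszulToricAlgebra K n d V t ∧
      IsDomain (toricAlgebra K n d V t) ∧
      IsIntegrallyClosed (toricAlgebra K n d V t) ∧
      IsCohenMacaulayRing (toricAlgebra K n d V t) := by

  have hL : Nonempty (SpreadEdges n d V t) := by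
    obtain ⟨v, hv⟩ := hne ⟨0, hd⟩
    obtain ⟨e, he, -⟩ := hiso _ v hv
    exact ⟨⟨e, he⟩⟩
  refine ⟨?_, isDomain_toricAlgebra, isIntegrallyClosed_toricAlgebra hd hV,
    isCohenMacaulayRing_toricAlgebra hd hV hL⟩
  intro r dg φ ε _ hker0 hker hε hdeg hmin
  let _ := toricGradedAlgebra (K := K) (V := V) (t := t) hd
  exact (hibiLike_toricGen (K := K) (t := t) hd hV).koszul_linear r dg φ ε hker0 hker hε
    (fun i k j => (hdeg i k j).imp_right fun ⟨c, hc, h⟩ =>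
      ⟨c, hc, mem_toricGrading_of_toricHomog h⟩) hmin

end
end

section
/- Let K_V^t be a complete t-spread d-partite hypergraph with V(K_V^t) ⊆ [n], V = {V_1, ..., V_d}, |V_j| = n_j, and V_j = [i_j, i_j + n_j − 1] for all j. Then the minimal monomial generators of the Alexander dual I(K_V^t)^∨ are exactly: (i) the monomials ∏_{k ∈ V_i} x_k for i = 1, ..., d; and (ii) for each pair 1 ≤ j < p ≤ d and each sequence of nonnegative integers q_j, ..., q_{p-1} (with q'_{j+1}, ..., q'_p determined by the conditions below) the monomial (∏_{i=j}^{p} ∏_{k ∈ V_i} x_k) / (∏_{i=j}^{p-1} v_{q_i} · ∏_{i=j+1}^{p} v_{q'_i}), where v_{q_ℓ} = ∏_{r=1}^{1+q_ℓ} x_{i_ℓ + n_ℓ − r} for ℓ = j, ..., p−1, v_{q'_ℓ} = ∏_{r=0}^{q'_ℓ} x_{i_ℓ + r} for ℓ = j+1, ..., p, and the integers satisfy i_ℓ + q'_ℓ < i_ℓ + n_ℓ − 1 − q_ℓ for j+1 ≤ ℓ ≤ p−1, and i_ℓ + q'_ℓ − (i_{ℓ-1} + n_{ℓ-1} − 1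 − q_{ℓ-1}) = t_{ℓ-1} − 1 for ℓ = j+1, ..., p. -/
/-!
Both sides of the ideal equality are squarefree monomial ideals, so the theorem is a statement
about vertex covers: the Alexander dual is spanned by the monomials of the sets of vertices that
meet every `t`-spread edge, and its minimal generators are the minimal covers. Write block `l` as
`[W l, E l]`. Since no vertex is isolated, `W l + t l ≤ W (l + 1)` and `E l + t l ≤ E (l + 1)`.

The listed monomials correspond to levels `j ≤ p` and thresholds `a l` (`j ≤ l < p`), with
`a l = W l + n_l - 1 - q_l`; the condition (2) on `q'` says that the part of block `l + 1` removed
from below ends at `a l + t l - 1`. The set so described (`InGen`) consists of the vertices `x` of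
the blocks `j, …, p` with `a (l - 1) + t (l - 1) ≤ x < a l`; the case `j = p` is a whole block.

* It is a cover (`InGen.meets`): an edge avoiding it satisfies `a l ≤ e l` for `l = j, …, p - 1`
  inductively, and then has no room left in block `p`.
* It is minimal (`InGen.exists_private_edge`): for `x` in level `m`, the edge
  `W, …, W, a j, …, a (m-1), x, a m + t m - 1, …, a (p-1) + t (p-1) - 1, E, …, E` meets the set
  only in `x`.
* Every cover `C` contains such a set (`exists_gen_le`): build greedily the smallest sequence `a`
  that is `t`-spread and avoids `C`. It leaves its block at some first level `p`, because `C` is a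
  cover; going back from `p` to the last level `j` at which the spread condition did not bind
  gives a listed set contained in `C`.
-/

open MvPolynomial

noncomputable section

/-- The Alexander dual `I(K_V^𝐭)^∨ = ⋂_{u ∈ G(I)} (x_i : x_i ∈ supp u)`. -/
def alexDual (K : Type) [Field K] (n d : ℕ) (V : Fin d → Finset (Fin n)) (t : ℕ → ℕ) :
    Ideal (MvPolynomial (Fin n) K) :=
  ⨅ e : SpreadEdges n d V t,
    Ideal.span (Set.range fun j : Fin d => (X (e.1 j) : MvPolynomial (Fin n) K))

/-- The monomial `v_{q_ℓ} = ∏_{r=1}^{1+q_ℓ} x_{i_ℓ + n_ℓ - r}` (the product of the variables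
with the `1 + q ℓ` largest indices of `V_ℓ`), for `V_ℓ = [w ℓ, w ℓ + mj ℓ - 1]`. -/
def vTop (K : Type) [Field K] (n d : ℕ) (w : Fin d → Fin n) (mj : Fin d → ℕ)
    (q : Fin d → ℕ) (ℓ : Fin d) : MvPolynomial (Fin n) K :=
  ∏ x ∈ Finset.univ.filter (fun x : Fin n =>
      (w ℓ : ℕ) + mj ℓ ≤ (x : ℕ) + 1 + q ℓ ∧ (x : ℕ) < (w ℓ : ℕ) + mj ℓ), X x

/-- The monomial `v_{q'_ℓ} = ∏_{r=0}^{q'_ℓ} x_{i_ℓ + r}` (the product of the variables with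
the `q' ℓ + 1` smallest indices of `V_ℓ`), for `V_ℓ = [w ℓ, w ℓ + mj ℓ - 1]`. -/
def vBot (K : Type) [Field K] (n d : ℕ) (w : Fin d → Fin n) (q' : Fin d → ℕ) (ℓ : Fin d) :
    MvPolynomial (Fin n) K :=
  ∏ x ∈ Finset.univ.filter (fun x : Fin n =>
      (w ℓ : ℕ) ≤ (x : ℕ) ∧ (x : ℕ) ≤ (w ℓ : ℕ) + q' ℓ), X x

/-- The generators of `I(K_V^𝐭)^∨` described in the theorem:
(i) `∏_{k ∈ V_i} x_k` for `i = 1, …, d`, and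
(ii) for `1 ≤ j < p ≤ d` and nonnegative integers `q_j, …, q_{p-1}` (with
`q'_{j+1}, …, q'_p`) satisfying `i_ℓ + q'_ℓ < i_ℓ + n_ℓ - 1 - q_ℓ` for `j < ℓ < p` and
`i_ℓ + q'_ℓ - (i_{ℓ-1} + n_{ℓ-1} - 1 - q_{ℓ-1}) = t_{ℓ-1} - 1` for `ℓ = j+1, …, p`, the
monomial `(∏_{i=j}^{p} ∏_{k ∈ V_i} x_k) / (∏_{i=j}^{p-1} v_{q_i} ⬝ ∏_{i=j+1}^{p} v_{q'_i})`
(membership being encoded by the exact-division equation). -/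
def dualGens (K : Type) [Field K] (n d : ℕ) (V : Fin d → Finset (Fin n)) (t : ℕ → ℕ)
    (w : Fin d → Fin n) (mj : Fin d → ℕ) : Set (MvPolynomial (Fin n) K) :=
  {u | ∃ i : Fin d, u = ∏ k ∈ V i, X k} ∪
  {u | ∃ j p : Fin d, j < p ∧ ∃ q q' : Fin d → ℕ,
    -- condition (1): `i_ℓ + q'_ℓ < i_ℓ + n_ℓ - 1 - q_ℓ` for `j + 1 ≤ ℓ ≤ p - 1`
    (∀ ℓ : Fin d, j < ℓ → ℓ < p → q' ℓ + q ℓ + 2 ≤ mj ℓ) ∧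
    -- condition (2): `i_ℓ + q'_ℓ - (i_{ℓ-1} + n_{ℓ-1} - 1 - q_{ℓ-1}) = t_{ℓ-1} - 1`
    -- for `ℓ = j + 1, …, p`
    (∀ (l : ℕ) (h : l + 1 < d), (j : ℕ) ≤ l → l + 1 ≤ (p : ℕ) →
      (w ⟨l + 1, h⟩ : ℕ) + q' ⟨l + 1, h⟩ + q ⟨l, Nat.lt_of_succ_lt h⟩ + 2 =
        (w ⟨l, Nat.lt_of_succ_lt h⟩ : ℕ) + mj ⟨l, Nat.lt_of_succ_lt h⟩ + t l) ∧
    -- `u` is the indicated quotient: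
    u * ((∏ i ∈ Finset.univ.filter (fun i : Fin d => j ≤ i ∧ i < p), vTop K n d w mj q i) *
        (∏ i ∈ Finset.univ.filter (fun i : Fin d => j < i ∧ i ≤ p), vBot K n d w q' i)) =
      ∏ i ∈ Finset.univ.filter (fun i : Fin d => j ≤ i ∧ i ≤ p), ∏ k ∈ V i, X k}

/-! ### Minimal covers of a chain of intervals -/

/-- Interval blocks `[W l, E l]`, `l < d`, lying one after the other, whose endpoints already
satisfy the `t`-spread inequalities; the latter amounts to there being no isolated vertices. -/
structure Blocks (d : ℕ) (W E t : ℕ → ℕ) : Prop where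
  le : ∀ l, l < d → W l ≤ E l
  left : ∀ l, l + 1 < d → W l + t l ≤ W (l + 1)
  right : ∀ l, l + 1 < d → E l + t l ≤ E (l + 1)
  lt : ∀ i j, i < j → j < d → E i < W j

/-- A `t`-spread edge, as a sequence of natural numbers of which only the first `d` terms
matter. -/
def NatEdge (d : ℕ) (W E t : ℕ → ℕ) (e : ℕ → ℕ) : Prop :=
  (∀ l, l < d → W l ≤ e l ∧ e l ≤ E l) ∧ ∀ l, l + 1 < d → e l + t l ≤ e (l + 1)

/-- Admissibility of the thresholds `a l`, `j ≤ l < p`. In terms of the theorem,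
`a l = i_l + n_l - 1 - q_l` and `a l + t l - 1 = i_{l+1} + q'_{l+1}`; the first two inequalities
say that `q'_{l+1}` and `q_l` are nonnegative, and the last one is condition (1). -/
structure GenData (d : ℕ) (W E t : ℕ → ℕ) (j p : ℕ) (a : ℕ → ℕ) : Prop where
  jp : j ≤ p
  pd : p < d
  lo : ∀ l, j ≤ l → l < p → W (l + 1) + 1 ≤ a l + t l
  hi : ∀ l, j ≤ l → l < p → a l ≤ E l
  step : ∀ l, j ≤ l → l + 1 < p → a l + t l ≤ a (l + 1)

/-- The vertex set of the generator with thresholds `a l`, `j ≤ l < p`. -/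
def InGen (W E t : ℕ → ℕ) (j p : ℕ) (a : ℕ → ℕ) (x : ℕ) : Prop :=
  ∃ l, j ≤ l ∧ l ≤ p ∧ W l ≤ x ∧ x ≤ E l ∧ (l < p → x < a l) ∧
    ∀ i, i + 1 = l → j ≤ i → a i + t i ≤ x

lemma Blocks.level_unique {d : ℕ} {W E t : ℕ → ℕ} (B : Blocks d W E t) {l m x : ℕ} (hl : l < d)
    (hm : m < d) (h1 : W l ≤ x) (h2 : x ≤ E l) (h3 : W m ≤ x) (h4 : x ≤ E m) : l = m := by
  rcases lt_trichotomy l m with h | h | h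
  · have := B.lt l m h hm; omega
  · exact h
  · have := B.lt m l h hl; omega

lemma InGen.meets {d : ℕ} {W E t : ℕ → ℕ} {j p : ℕ} {a : ℕ → ℕ}
    (G : GenData d W E t j p a) {e : ℕ → ℕ} (he : NatEdge d W E t e) :
    ∃ l, l < d ∧ InGen W E t j p a (e l) := by
  by_contra! hcon
  have pd := G.pd
  have key : ∀ l, j ≤ l → l < p → a l ≤ e l := by
    intro l hjl
    induction l, hjl using Nat.le_induction with
    | base =>
      intro hl
      by_contra! h
      have := he.1 j (by omega)
      exact hcon j (by omega) ⟨j, le_rfl, hl.le, this.1, this.2, fun _ => h,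
        fun i hi hji => by omega⟩
    | succ l hjl ih =>
      intro hl
      by_contra! h
      have := he.1 (l + 1) (by omega)
      refine hcon (l + 1) (by omega) ⟨l + 1, by omega, hl.le, this.1, this.2, fun _ => h, ?_⟩
      intro i hi hji
      obtain rfl : i = l := by omega
      have := ih (by omega)
      have := he.2 i (by omega)
      omega
  have hp := he.1 p pd
  refine hcon p pd ⟨p, G.jp, le_rfl, hp.1, hp.2, fun h => by omega, ?_⟩
  intro i hi hji
  have h1 := key i hji (by omega)
  have h2 := he.2 i (by omega)
  rw [hi] at h2
  omega

lemma InGen.exists_private_edge {d : ℕ} {W E t : ℕ → ℕ} (ht : ∀ l, 1 ≤ t l)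
    (B : Blocks d W E t) {j p : ℕ} {a : ℕ → ℕ} (G : GenData d W E t j p a) {x : ℕ}
    (hx : InGen W E t j p a x) :
    ∃ e, NatEdge d W E t e ∧ ∀ l, l < d → InGen W E t j p a (e l) → e l = x := by
  obtain ⟨m, hjm, hmp, hWx, hxE, hxa, hax⟩ := hx
  have pd := G.pd
  set e : ℕ → ℕ := fun l => if l < j then W l else if l < m then a l else if l = m then x
    else if l ≤ p then a (l - 1) + t (l - 1) - 1 else E l with he
  have e1 : ∀ l, l < j → e l = W l := fun l h => by simp [he, h]
  have e2 : ∀ l, j ≤ l → l < m → e l = a l := fun l h h' => by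
    simp only [he]; rw [if_neg (by omega), if_pos h']
  have e3 : e m = x := by
    simp only [he]; rw [if_neg (by omega), if_neg (by omega)]; simp
  have e4 : ∀ l, m ≤ l → l + 1 ≤ p → e (l + 1) = a l + t l - 1 := fun l h h' => by
    simp only [he]
    rw [if_neg (by omega), if_neg (by omega), if_neg (by omega), if_pos h', Nat.add_sub_cancel]
  have e5 : ∀ l, p < l → e l = E l := fun l h => by
    simp only [he]
    rw [if_neg (by omega), if_neg (by omega), if_neg (by omega), if_neg (by omega)]
  have aW : ∀ l, j ≤ l → l < p → W l + 1 ≤ a l := fun l h h' => by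
    have := G.lo l h h'; have := B.left l (by omega); omega
  have bd : ∀ l, l < d → W l ≤ e l ∧ e l ≤ E l := by
    intro l hl
    have hle := B.le l hl
    by_cases h1 : l < j
    · rw [e1 l h1]; omega
    by_cases h2 : l < m
    · rw [e2 l (by omega) h2]
      exact ⟨by have := aW l (by omega) (by omega); omega, G.hi l (by omega) (by omega)⟩
    by_cases h3 : l = m
    · subst h3; rw [e3]; exact ⟨hWx, hxE⟩
    by_cases h4 : l ≤ p
    · obtain ⟨k, rfl⟩ : ∃ k, l = k + 1 := ⟨l - 1, by omega⟩
      rw [e4 k (by omega) h4]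
      have := G.lo k (by omega) (by omega)
      have := G.hi k (by omega) (by omega)
      have := B.right k hl
      omega
    · rw [e5 l (by omega)]; omega
  refine ⟨e, ⟨bd, ?_⟩, ?_⟩
  · intro l hl
    have htl := ht l
    have bl := bd l (by omega)
    have bl' := bd (l + 1) hl
    by_cases h1 : l < j
    · rw [e1 l h1]
      have := B.left l hl
      omega
    by_cases h2 : l + 1 < m
    · rw [e2 l (by omega) (by omega), e2 (l + 1) (by omega) h2]
      exact G.step l (by omega) (by omega)
    by_cases h3 : l + 1 = m
    · rw [e2 l (by omega) (by omega), h3, e3]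
      exact hax l h3 (by omega)
    by_cases h4 : l + 1 ≤ p
    · rw [e4 l (by omega) h4]
      by_cases h5 : l = m
      · subst h5
        rw [e3]
        have := hxa (by omega)
        omega
      · obtain ⟨k, rfl⟩ : ∃ k, l = k + 1 := ⟨l - 1, by omega⟩
        rw [e4 k (by omega) (by omega)]
        have := G.step k (by omega) (by omega)
        have := G.lo k (by omega) (by omega)
        omega
    · rw [e5 (l + 1) (by omega)]
      have := B.right l hl
      omega
  · rintro l hl ⟨k, hjk, hkp, hWk, hkE, hka, hak⟩
    obtain rfl : l = k :=
      B.level_unique hl (by omega) (bd l hl).1 (bd l hl).2 hWk hkE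
    by_cases h2 : l < m
    · have := hka (by omega)
      rw [e2 l hjk h2] at this
      omega
    by_cases h3 : l = m
    · rw [h3, e3]
    · obtain ⟨i, rfl⟩ : ∃ i, l = i + 1 := ⟨l - 1, by omega⟩
      have := hak i rfl (by omega)
      rw [e4 i (by omega) hkp] at this
      have := G.lo i (by omega) (by omega)
      omega

/-- The bound `hC` on `C` is what makes the greedy sequence avoiding `C` exist. -/
lemma exists_gen_le {d : ℕ} {W E t : ℕ → ℕ} (C : ℕ → Prop) (N : ℕ) (hC : ∀ x, C x → x < N)
    (hcov : ∀ e, NatEdge d W E t e → ∃ l, l < d ∧ C (e l)) :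
    ∃ j p a, GenData d W E t j p a ∧ ∀ x, InGen W E t j p a x → C x := by
  classical
  have hL : ∀ s, ∃ y, s ≤ y ∧ ¬ C y ∧ ∀ x, s ≤ x → x < y → C x := by
    intro s
    have hex : ∃ y, s ≤ y ∧ ¬ C y :=
      ⟨max s N, le_max_left _ _, fun h => by have := hC _ h; omega⟩
    refine ⟨Nat.find hex, (Nat.find_spec hex).1, (Nat.find_spec hex).2, fun x h1 h2 => ?_⟩
    by_contra h3
    exact Nat.find_min hex h2 ⟨h1, h3⟩
  choose L hL1 hL2 hL3 using hL
  let a : ℕ → ℕ := fun l =>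
    Nat.rec (motive := fun _ => ℕ) (L (W 0)) (fun l r => L (max (W (l + 1)) (r + t l))) l
  have a0 : a 0 = L (W 0) := rfl
  have aS : ∀ l, a (l + 1) = L (max (W (l + 1)) (a l + t l)) := fun l => rfl
  have aW : ∀ l, W l ≤ a l := by
    rintro (_ | l)
    · exact a0 ▸ hL1 _
    · rw [aS]; exact (le_max_left _ _).trans (hL1 _)
  have at' : ∀ l, a l + t l ≤ a (l + 1) := fun l => by
    rw [aS]; exact (le_max_right _ _).trans (hL1 _)
  have aC : ∀ l, ¬ C (a l) := by
    rintro (_ | l)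
    · exact a0 ▸ hL2 _
    · rw [aS]; exact hL2 _
  have fill : ∀ l x, W l ≤ x → (∀ i, i + 1 = l → a i + t i ≤ x) → x < a l → C x := by
    rintro (_ | l) x h1 h2 h3
    · exact hL3 _ x h1 (a0 ▸ h3)
    · exact hL3 _ x (max_le h1 (h2 l rfl)) (aS l ▸ h3)
  clear_value a
  have hp : ∃ p, p < d ∧ E p < a p := by
    by_contra! h
    obtain ⟨l, _, hl⟩ := hcov a ⟨fun l hl => ⟨aW l, h l hl⟩, fun l _ => at' l⟩
    exact aC l hl
  obtain ⟨p, ⟨hpd, hpE⟩, hpmin⟩ : ∃ p, (p < d ∧ E p < a p) ∧ ∀ m, m < p → ¬ (m < d ∧ E m < a m) :=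
    ⟨_, Nat.find_spec hp, fun _ => Nat.find_min hp⟩
  -- `j` is the last level up to `p` at which the spread condition does not bind.
  let Q : ℕ → Prop := fun j => ∀ i, i + 1 = j → a i + t i ≤ W j
  have hQ0 : Q 0 := fun i hi => by omega
  have hj1 : Nat.findGreatest Q p ≤ p := Nat.findGreatest_le p
  have hj2 : Q (Nat.findGreatest Q p) := Nat.findGreatest_spec (Nat.zero_le p) hQ0
  have hj3 : ∀ k, Nat.findGreatest Q p < k → k ≤ p → ¬ Q k :=
    fun k h1 h2 => Nat.findGreatest_is_greatest h1 h2
  set j := Nat.findGreatest Q p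
  refine ⟨j, p, a, ⟨hj1, hpd, ?_, ?_, fun l _ _ => at' l⟩, ?_⟩
  · intro l h1 h2
    by_contra! h
    refine hj3 (l + 1) (by omega) (by omega) fun i hi => ?_
    obtain rfl : i = l := by omega
    omega
  · intro l h1 h2
    have := hpmin l h2
    by_contra! h
    exact this ⟨by omega, h⟩
  · rintro x ⟨l, hjl, hlp, hW, hE, hxa, hax⟩
    refine fill l x hW (fun i hi => ?_) ?_
    · by_cases hji : j ≤ i
      · exact hax i hi hji
      · obtain rfl : l = j := by omega
        exact (hj2 i hi).trans hW
    · by_cases hl : l < p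
      · exact hxa hl
      · obtain rfl : l = p := by omega
        omega

/-! ### Squarefree monomials -/

/-- The squarefree monomial with support `C`. -/
def sqfreeMon (K : Type) [Field K] {n : ℕ} (C : Finset (Fin n)) : MvPolynomial (Fin n) K :=
  ∏ k ∈ C, X k

/-- The exponent vector of the squarefree monomial with support `C`. -/
def sqfreeExp {n : ℕ} (C : Finset (Fin n)) : Fin n →₀ ℕ := ∑ k ∈ C, Finsupp.single k 1

lemma sqfreeMon_eq (K : Type) [Field K] {n : ℕ} (C : Finset (Fin n)) :
    sqfreeMon K C = monomial (sqfreeExp C) 1 := by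
  simp only [sqfreeMon, sqfreeExp, monomial_sum_one]
  rfl

lemma sqfreeExp_apply {n : ℕ} (C : Finset (Fin n)) (k : Fin n) :
    sqfreeExp C k = if k ∈ C then 1 else 0 := by
  simp [sqfreeExp, Finsupp.finsetSum_apply, Finsupp.single_apply]

lemma sqfreeExp_le_iff {n : ℕ} (C : Finset (Fin n)) (m : Fin n →₀ ℕ) :
    sqfreeExp C ≤ m ↔ C ⊆ m.support := by
  rw [Finsupp.le_def]
  constructor
  · intro h k hk
    have := h k
    rw [sqfreeExp_apply, if_pos hk] at this
    rw [Finsupp.mem_support_iff]; omega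
  · intro h k
    rw [sqfreeExp_apply]
    split_ifs with hk
    · have := Finsupp.mem_support_iff.1 (h hk); omega
    · omega

lemma support_sqfreeExp {n : ℕ} (C : Finset (Fin n)) : (sqfreeExp C).support = C := by
  ext k; simp [sqfreeExp_apply]

lemma mem_span_sqfreeMon (K : Type) [Field K] {n : ℕ} (𝒢 : Set (Finset (Fin n)))
    (f : MvPolynomial (Fin n) K) :
    f ∈ Ideal.span (sqfreeMon K '' 𝒢) ↔ ∀ m ∈ f.support, ∃ C ∈ 𝒢, C ⊆ m.support := by
  have : sqfreeMon K '' 𝒢 = (fun s => monomial s (1 : K)) '' (sqfreeExp '' 𝒢) := by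
    rw [Set.image_image]
    exact Set.image_congr fun C _ => sqfreeMon_eq K C
  rw [this, mem_ideal_span_monomial_image]
  simp [sqfreeExp_le_iff]

lemma mem_alexDual (K : Type) [Field K] (n d : ℕ) (V : Fin d → Finset (Fin n)) (t : ℕ → ℕ)
    (f : MvPolynomial (Fin n) K) :
    f ∈ alexDual K n d V t ↔
      ∀ m ∈ f.support, ∀ e, IsSpreadEdge n d V t e → ∃ j, e j ∈ m.support := by
  have hr : ∀ e : SpreadEdges n d V t,
      (Set.range fun j : Fin d => (X (e.1 j) : MvPolynomial (Fin n) K)) =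
        X '' Set.range e.1 := fun e => by
    rw [← Set.range_comp]; rfl
  simp only [alexDual, Ideal.mem_iInf, hr, mem_ideal_span_X_image]
  constructor
  · intro h m hm e he
    obtain ⟨_, ⟨j, rfl⟩, hj⟩ := h ⟨e, he⟩ m hm
    exact ⟨j, Finsupp.mem_support_iff.2 hj⟩
  · intro h e m hm
    obtain ⟨j, hj⟩ := h m hm e.1 e.2
    exact ⟨_, ⟨j, rfl⟩, Finsupp.mem_support_iff.1 hj⟩

/-- Reduction to combinatorics: a family of minimal covers (minimality being witnessed by private
edges) such that every cover contains a member of the family gives the minimal generators of the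
Alexander dual. -/
lemma minimal_generators_of_covers (K : Type) [Field K] (n d : ℕ) (V : Fin d → Finset (Fin n))
    (t : ℕ → ℕ) (𝒢 : Set (Finset (Fin n)))
    (hcov : ∀ C ∈ 𝒢, ∀ e, IsSpreadEdge n d V t e → ∃ j, e j ∈ C)
    (hmin : ∀ C ∈ 𝒢, ∀ x ∈ C, ∃ e, IsSpreadEdge n d V t e ∧ ∀ j, e j ∈ C → e j = x)
    (hall : ∀ D : Finset (Fin n), (∀ e, IsSpreadEdge n d V t e → ∃ j, e j ∈ D) →
      ∃ C ∈ 𝒢, C ⊆ D) :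
    Ideal.span (sqfreeMon K '' 𝒢) = alexDual K n d V t ∧
      ∀ u ∈ sqfreeMon K '' 𝒢, u ∉ Ideal.span (sqfreeMon K '' 𝒢 \ {u}) := by
  constructor
  · ext f
    rw [mem_span_sqfreeMon, mem_alexDual]
    refine forall₂_congr fun m _ => ⟨?_, hall _⟩
    rintro ⟨C, hC, hCm⟩ e he
    obtain ⟨j, hj⟩ := hcov C hC e he
    exact ⟨j, hCm hj⟩
  · rintro _ ⟨C, hC, rfl⟩ hmem
    have hsub : sqfreeMon K '' 𝒢 \ {sqfreeMon K C} ⊆ sqfreeMon K '' (𝒢 \ {C}) := by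
      rintro _ ⟨⟨D, hD, rfl⟩, hne⟩
      exact ⟨D, ⟨hD, fun h => hne (by rw [Set.mem_singleton_iff.1 h]; rfl)⟩, rfl⟩
    have := (mem_span_sqfreeMon K _ _).1 (Ideal.span_mono hsub hmem) (sqfreeExp C)
      (by classical rw [sqfreeMon_eq, support_monomial]; simp)
    obtain ⟨D, ⟨hD, hDC⟩, hle⟩ := this
    rw [support_sqfreeExp] at hle
    refine hDC (Set.mem_singleton_iff.2 (hle.antisymm fun x hx => ?_))
    obtain ⟨e, he, hex⟩ := hmin C hC x hx
    obtain ⟨j, hj⟩ := hcov D hD e he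
    exact hex j (hle hj) ▸ hj

/-! ### The listed monomials -/

/-- A function on `Fin d` extended by `0` to the natural numbers. -/
def extend {d : ℕ} (f : Fin d → ℕ) (l : ℕ) : ℕ := if h : l < d then f ⟨l, h⟩ else 0

lemma extend_of_lt {d : ℕ} (f : Fin d → ℕ) {l : ℕ} (h : l < d) : extend f l = f ⟨l, h⟩ := dif_pos h

@[simp] lemma extend_val {d : ℕ} (f : Fin d → ℕ) (l : Fin d) : extend f l = f l :=
  extend_of_lt f l.2

/-- The left endpoints of the blocks. -/
def leftEnd {n d : ℕ} (w : Fin d → Fin n) : ℕ → ℕ := extend fun l => (w l : ℕ)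

/-- The right endpoints of the blocks. The hypotheses of the theorem permit `w l + mj l > n` for
the last block, which then consists of all vertices from `w l` on; hence the minimum. -/
def rightEnd {n d : ℕ} (w : Fin d → Fin n) (mj : Fin d → ℕ) : ℕ → ℕ :=
  extend fun l => min ((w l : ℕ) + mj l) n - 1

/-- `InGen` as a finite set of vertices. -/
def genSet {n d : ℕ} (w : Fin d → Fin n) (mj : Fin d → ℕ) (t : ℕ → ℕ) (j p : ℕ) (a : ℕ → ℕ) :
    Finset (Fin n) :=
  open Classical in
  Finset.univ.filter fun x : Fin n => InGen (leftEnd w) (rightEnd w mj) t j p a x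

section
variable {n d : ℕ} {V : Fin d → Finset (Fin n)} {t : ℕ → ℕ} {w : Fin d → Fin n} {mj : Fin d → ℕ}

lemma mem_genSet {j p : ℕ} {a : ℕ → ℕ} {x : Fin n} :
    x ∈ genSet w mj t j p a ↔ InGen (leftEnd w) (rightEnd w mj) t j p a x := by
  classical simp [genSet]

lemma mem_block (hm : ∀ j, 0 < mj j)
    (hint : ∀ (j : Fin d) (x : Fin n),
      x ∈ V j ↔ (w j : ℕ) ≤ (x : ℕ) ∧ (x : ℕ) < (w j : ℕ) + mj j) (l : Fin d) (x : Fin n) :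
    x ∈ V l ↔ leftEnd w l ≤ x ∧ (x : ℕ) ≤ rightEnd w mj l := by
  rw [hint, leftEnd, rightEnd, extend_val, extend_val]
  have := x.2
  have := hm l
  omega

lemma leftEnd_le_rightEnd (hm : ∀ j, 0 < mj j) (l : Fin d) :
    leftEnd w l ≤ rightEnd w mj l ∧ rightEnd w mj l < n := by
  rw [leftEnd, rightEnd, extend_val, extend_val]
  have := (w l).2
  have := hm l
  omega

lemma natEdge_extend (hm : ∀ j, 0 < mj j)
    (hint : ∀ (j : Fin d) (x : Fin n),
      x ∈ V j ↔ (w j : ℕ) ≤ (x : ℕ) ∧ (x : ℕ) < (w j : ℕ) + mj j)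
    {e : Fin d → Fin n} (he : IsSpreadEdge n d V t e) :
    NatEdge d (leftEnd w) (rightEnd w mj) t (extend fun l => (e l : ℕ)) := by
  constructor
  · intro l hl
    rw [extend_of_lt _ hl]
    exact (mem_block hm hint ⟨l, hl⟩ _).1 (he.1 ⟨l, hl⟩)
  · intro l hl
    rw [extend_of_lt _ hl, extend_of_lt _ (Nat.lt_of_succ_lt hl)]
    exact he.2 l hl

lemma exists_spreadEdge (hm : ∀ j, 0 < mj j)
    (hint : ∀ (j : Fin d) (x : Fin n),
      x ∈ V j ↔ (w j : ℕ) ≤ (x : ℕ) ∧ (x : ℕ) < (w j : ℕ) + mj j)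
    {e : ℕ → ℕ} (he : NatEdge d (leftEnd w) (rightEnd w mj) t e) :
    ∃ e' : Fin d → Fin n, IsSpreadEdge n d V t e' ∧ ∀ l : Fin d, (e' l : ℕ) = e l := by
  refine ⟨fun l => ⟨e l, ((he.1 l l.2).2).trans_lt (leftEnd_le_rightEnd hm l).2⟩,
    ⟨fun l => ?_, fun l hl => he.2 l hl⟩, fun l => rfl⟩
  exact (mem_block hm hint l _).2 (he.1 l l.2)

lemma blocks (hV : ∀ i j : Fin d, i < j → ∀ p ∈ V i, ∀ q ∈ V j, (p : ℕ) < (q : ℕ))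
    (hiso : ∀ (j : Fin d), ∀ v ∈ V j, ∃ e, IsSpreadEdge n d V t e ∧ e j = v)
    (hm : ∀ j, 0 < mj j)
    (hint : ∀ (j : Fin d) (x : Fin n),
      x ∈ V j ↔ (w j : ℕ) ≤ (x : ℕ) ∧ (x : ℕ) < (w j : ℕ) + mj j) :
    Blocks d (leftEnd w) (rightEnd w mj) t := by
  have hb := mem_block hm hint
  have hlr := leftEnd_le_rightEnd (w := w) hm
  have hL : ∀ l : Fin d, ∃ x ∈ V l, (x : ℕ) = leftEnd w l := fun l =>
    ⟨⟨leftEnd w l, (hlr l).1.trans_lt (hlr l).2⟩, (hb l _).2 ⟨le_rfl, (hlr l).1⟩, rfl⟩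
  have hR : ∀ l : Fin d, ∃ x ∈ V l, (x : ℕ) = rightEnd w mj l := fun l =>
    ⟨⟨rightEnd w mj l, (hlr l).2⟩, (hb l _).2 ⟨(hlr l).1, le_rfl⟩, rfl⟩
  refine ⟨fun l hl => (hlr ⟨l, hl⟩).1, fun l hl => ?_, fun l hl => ?_, fun i j hij hj => ?_⟩
  · obtain ⟨x, hx, hxl⟩ := hL ⟨l + 1, hl⟩
    obtain ⟨e, he, rfl⟩ := hiso _ x hx
    have h1 := he.2 l hl
    have h2 := ((hb _ _).1 (he.1 ⟨l, Nat.lt_of_succ_lt hl⟩)).1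
    simp only at h2 hxl
    omega
  · obtain ⟨x, hx, hxl⟩ := hR ⟨l, Nat.lt_of_succ_lt hl⟩
    obtain ⟨e, he, rfl⟩ := hiso _ x hx
    have h1 := he.2 l hl
    have h2 := ((hb _ _).1 (he.1 ⟨l + 1, hl⟩)).2
    simp only at h2 hxl
    omega
  · obtain ⟨x, hx, hxl⟩ := hR ⟨i, hij.trans hj⟩
    obtain ⟨y, hy, hyl⟩ := hL ⟨j, hj⟩
    have := hV ⟨i, hij.trans hj⟩ ⟨j, hj⟩ hij x hx y hy
    simp only at hxl hyl
    omega

/-- Only the last block can be cut off by `n`. -/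
lemma rightEnd_add_one (hm : ∀ j, 0 < mj j) (B : Blocks d (leftEnd w) (rightEnd w mj) t)
    (l : Fin d) (h : (l : ℕ) + 1 < d) : rightEnd w mj l + 1 = (w l : ℕ) + mj l := by
  have h1 := B.lt l (l + 1) (by omega) h
  have h2 := leftEnd_le_rightEnd (w := w) hm ⟨l + 1, h⟩
  simp only at h2
  have h3 := hm l
  have h4 := (w l).2
  have h5 : rightEnd w mj l = min ((w l : ℕ) + mj l) n - 1 := extend_val _ l
  omega

/-- The exact division in `dualGens`, with the quotient in the form `genSet`. -/
lemma sqfreeMon_genSet_mul (K : Type) [Field K] (hm : ∀ j, 0 < mj j)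
    (hint : ∀ (j : Fin d) (x : Fin n),
      x ∈ V j ↔ (w j : ℕ) ≤ (x : ℕ) ∧ (x : ℕ) < (w j : ℕ) + mj j)
    (B : Blocks d (leftEnd w) (rightEnd w mj) t) {j p : Fin d}
    {a : ℕ → ℕ} (G : GenData d (leftEnd w) (rightEnd w mj) t j p a) (q q' : Fin d → ℕ)
    (hq : ∀ l : Fin d, j ≤ l → l < p → a l + q l + 1 = (w l : ℕ) + mj l)
    (hq' : ∀ (l : ℕ) (h : l + 1 < d), (j : ℕ) ≤ l → l + 1 ≤ (p : ℕ) →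
      (w ⟨l + 1, h⟩ : ℕ) + q' ⟨l + 1, h⟩ + 1 = a l + t l) :
    sqfreeMon K (genSet w mj t j p a) *
      ((∏ i ∈ Finset.univ.filter (fun i : Fin d => j ≤ i ∧ i < p), vTop K n d w mj q i) *
        (∏ i ∈ Finset.univ.filter (fun i : Fin d => j < i ∧ i ≤ p), vBot K n d w q' i)) =
      ∏ i ∈ Finset.univ.filter (fun i : Fin d => j ≤ i ∧ i ≤ p), ∏ k ∈ V i, X k := by
  classical
  have pd := G.pd
  have hb := mem_block hm hint
  -- The generator is the product over the blocks `j, …, p` of its parts in these blocks.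
  have hsplit : sqfreeMon K (genSet w mj t j p a) =
      ∏ i ∈ Finset.univ.filter (fun i : Fin d => j ≤ i ∧ i ≤ p),
        ∏ k ∈ (V i).filter (fun k => k ∈ genSet w mj t j p a), X k := by
    rw [sqfreeMon, ← Finset.prod_biUnion]
    · refine Finset.prod_congr ?_ fun _ _ => rfl
      ext x
      simp only [Finset.mem_biUnion, Finset.mem_filter, Finset.mem_univ, true_and]
      constructor
      · intro hx
        obtain ⟨l, h1, h2, h3, h4, -⟩ := mem_genSet.1 hx
        exact ⟨⟨l, by omega⟩, ⟨h1, h2⟩, (hb _ _).2 ⟨h3, h4⟩, hx⟩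
      · rintro ⟨_, _, _, hx⟩
        exact hx
    · intro i _ i' _ hne
      refine Finset.disjoint_left.2 fun x hx hx' => hne ?_
      have h1 := (hb _ _).1 (Finset.mem_filter.1 hx).1
      have h2 := (hb _ _).1 (Finset.mem_filter.1 hx').1
      exact Fin.ext (B.level_unique i.2 i'.2 h1.1 h1.2 h2.1 h2.2)
  rw [hsplit]
  simp only [Finset.prod_filter, ← Finset.prod_mul_distrib, vTop, vBot]
  refine Finset.prod_congr rfl fun i _ => ?_
  by_cases hi : j ≤ i ∧ i ≤ p
  swap
  · rw [if_neg hi, if_neg (fun h => hi ⟨h.1, h.2.le⟩), if_neg (fun h => hi ⟨h.1.le, h.2⟩),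
      if_neg hi]
    simp
  rw [if_pos hi, if_pos hi]
  obtain ⟨hji, hip⟩ := hi
  have hlr := leftEnd_le_rightEnd (w := w) hm i
  have hWi : leftEnd w i = (w i : ℕ) := extend_val _ i
  -- Membership in the generator, for a vertex of block `i`.
  have hgen : ∀ x ∈ V i, x ∈ genSet w mj t j p a ↔
      (i < p → (x : ℕ) < a i) ∧ (j < i → (w i : ℕ) + q' i < x) := by
    intro x hx
    have hx' := (hb _ _).1 hx
    rw [mem_genSet]
    constructor
    · rintro ⟨l, h1, h2, h3, h4, h5, h6⟩
      obtain rfl := B.level_unique i.2 (by omega) hx'.1 hx'.2 h3 h4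
      refine ⟨h5, fun hlt => ?_⟩
      obtain ⟨k, hk⟩ : ∃ k, k + 1 = (i : ℕ) := ⟨i - 1, by have := Fin.lt_def.1 hlt; omega⟩
      have hjk : (j : ℕ) ≤ k := by have := Fin.lt_def.1 hlt; omega
      have e1 := hq' k (by omega) hjk (by omega)
      have e2 := h6 k hk hjk
      have e3 : (⟨k + 1, by omega⟩ : Fin d) = i := Fin.ext hk
      rw [e3] at e1
      omega
    · rintro ⟨h5, h6⟩
      refine ⟨i, hji, hip, hx'.1, hx'.2, h5, fun k hk hjk => ?_⟩
      have hlt : j < i := Fin.lt_def.2 (by omega)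
      have e1 := hq' k (by omega) hjk (by have := Fin.le_def.1 hip; omega)
      have e2 := h6 hlt
      have e3 : (⟨k + 1, by omega⟩ : Fin d) = i := Fin.ext hk
      rw [e3] at e1
      omega
  -- The removed parts lie in block `i` and are disjoint.
  have htop : i < p → leftEnd w i ≤ a i ∧ a i + q i + 1 = (w i : ℕ) + mj i ∧
      rightEnd w mj i + 1 = (w i : ℕ) + mj i := fun hlt => by
    have hlt' := Fin.lt_def.1 hlt
    have h1 := G.lo i hji hlt
    have h2 := B.left i (by omega)
    exact ⟨by omega, hq i hji hlt, rightEnd_add_one hm B i (by omega)⟩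
  have hbot : j < i → (w i : ℕ) + q' i ≤ rightEnd w mj i ∧ (i < p → (w i : ℕ) + q' i < a i) :=
    fun hlt => by
    have hlt' := Fin.lt_def.1 hlt
    have hip' := Fin.le_def.1 hip
    obtain ⟨k, hk⟩ : ∃ k, k + 1 = (i : ℕ) := ⟨i - 1, by omega⟩
    have e1 := hq' k (by omega) (by omega) (by omega)
    have e3 : (⟨k + 1, by omega⟩ : Fin d) = i := Fin.ext hk
    rw [e3] at e1
    have h1 := G.hi k (by omega) (by omega)
    have h2 := B.right k (by omega)
    rw [hk] at h2
    refine ⟨by omega, fun h => ?_⟩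
    have h3 := G.step k (by omega) (by rw [hk]; exact h)
    rw [hk] at h3
    omega
  have hV' : ∀ f : Fin n → MvPolynomial (Fin n) K,
      ∏ x ∈ V i, f x = ∏ x : Fin n, if x ∈ V i then f x else 1 := fun f => by
    rw [← Finset.prod_filter]; simp
  rw [hV', hV']
  have hT : (if j ≤ i ∧ i < p then ∏ x : Fin n,
        if (w i : ℕ) + mj i ≤ (x : ℕ) + 1 + q i ∧ (x : ℕ) < (w i : ℕ) + mj i
          then (X x : MvPolynomial (Fin n) K) else 1 else 1) =
      ∏ x : Fin n, if i < p ∧ x ∈ V i ∧ a i ≤ x then X x else 1 := by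
    by_cases h : i < p
    · rw [if_pos ⟨hji, h⟩]
      refine Finset.prod_congr rfl fun x _ => if_congr ?_ rfl rfl
      have := htop h
      rw [hb]
      simp only [h, true_and]
      omega
    · simp [h]
  have hB : (if j < i ∧ i ≤ p then ∏ x : Fin n,
        if (w i : ℕ) ≤ (x : ℕ) ∧ (x : ℕ) ≤ (w i : ℕ) + q' i
          then (X x : MvPolynomial (Fin n) K) else 1 else 1) =
      ∏ x : Fin n, if j < i ∧ x ∈ V i ∧ (x : ℕ) ≤ (w i : ℕ) + q' i then X x else 1 := by
    by_cases h : j < i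
    · rw [if_pos ⟨h, hip⟩]
      refine Finset.prod_congr rfl fun x _ => if_congr ?_ rfl rfl
      have := hbot h
      rw [hb]
      simp only [h, true_and]
      omega
    · simp [h]
  rw [hT, hB, ← Finset.prod_mul_distrib, ← Finset.prod_mul_distrib]
  refine Finset.prod_congr rfl fun x _ => ?_
  by_cases hx : x ∈ V i
  swap
  · simp [hx]
  have hg := hgen x hx
  simp only [hx, true_and, if_true]
  by_cases c1 : i < p ∧ a i ≤ x
  · have c2 : ¬ (j < i ∧ (x : ℕ) ≤ (w i : ℕ) + q' i) := fun h => by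
      have := (hbot h.1).2 c1.1
      omega
    have c3 : x ∉ genSet w mj t j p a := fun h => by
      have := (hg.1 h).1 c1.1
      omega
    rw [if_pos c1, if_neg c2, if_neg c3]
    ring
  · by_cases c2 : j < i ∧ (x : ℕ) ≤ (w i : ℕ) + q' i
    · have c3 : x ∉ genSet w mj t j p a := fun h => by
        have := (hg.1 h).2 c2.1
        omega
      rw [if_neg c1, if_pos c2, if_neg c3]
      ring
    · have c3 : x ∈ genSet w mj t j p a :=
        hg.2 ⟨fun h => by by_contra! h'; exact c1 ⟨h, h'⟩,
          fun h => by by_contra! h'; exact c2 ⟨h, h'⟩⟩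
      rw [if_neg c1, if_neg c2, if_pos c3]
      ring

/-- Generators of type (i) are the case `j = p`, in which there are no thresholds. -/
lemma genSet_self (hm : ∀ j, 0 < mj j)
    (hint : ∀ (j : Fin d) (x : Fin n),
      x ∈ V j ↔ (w j : ℕ) ≤ (x : ℕ) ∧ (x : ℕ) < (w j : ℕ) + mj j) (i : Fin d) (a : ℕ → ℕ) :
    genSet w mj t i i a = V i := by
  ext x
  rw [mem_genSet, mem_block hm hint]
  constructor
  · rintro ⟨l, h1, h2, h3, h4, -⟩
    obtain rfl : (i : ℕ) = l := by omega
    exact ⟨h3, h4⟩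
  · rintro ⟨h1, h2⟩
    exact ⟨i, le_rfl, le_rfl, h1, h2, fun h => by omega, fun k hk h => by omega⟩

lemma vTop_mul_vBot_ne_zero (K : Type) [Field K] (j p : Fin d) (q q' : Fin d → ℕ) :
    ((∏ i ∈ Finset.univ.filter (fun i : Fin d => j ≤ i ∧ i < p), vTop K n d w mj q i) *
      (∏ i ∈ Finset.univ.filter (fun i : Fin d => j < i ∧ i ≤ p), vBot K n d w q' i)) ≠ 0 := by
  simp only [vTop, vBot]
  exact mul_ne_zero
    (Finset.prod_ne_zero_iff.2 fun _ _ => Finset.prod_ne_zero_iff.2 fun _ _ => X_ne_zero _)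
    (Finset.prod_ne_zero_iff.2 fun _ _ => Finset.prod_ne_zero_iff.2 fun _ _ => X_ne_zero _)

/-- The dictionary between the parameters `q, q'` and the thresholds `a`. -/
lemma dualGens_eq (K : Type) [Field K] (hm : ∀ j, 0 < mj j)
    (hint : ∀ (j : Fin d) (x : Fin n),
      x ∈ V j ↔ (w j : ℕ) ≤ (x : ℕ) ∧ (x : ℕ) < (w j : ℕ) + mj j)
    (B : Blocks d (leftEnd w) (rightEnd w mj) t) :
    dualGens K n d V t w mj = sqfreeMon K '' {C | ∃ j p a,
      GenData d (leftEnd w) (rightEnd w mj) t j p a ∧ C = genSet w mj t j p a} := by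
  have hW : ∀ (l : ℕ) (h : l < d), leftEnd w l = (w ⟨l, h⟩ : ℕ) := fun l h => extend_of_lt _ h
  have hE : ∀ (l : ℕ) (h : l + 1 < d), rightEnd w mj l + 1 =
      (w ⟨l, Nat.lt_of_succ_lt h⟩ : ℕ) + mj ⟨l, Nat.lt_of_succ_lt h⟩ := fun l h =>
    rightEnd_add_one hm B ⟨l, Nat.lt_of_succ_lt h⟩ h
  ext u
  constructor
  · rintro (⟨i, rfl⟩ | ⟨j, p, hjp, q, q', h1, h2, hu⟩)
    · refine ⟨V i, ⟨i, i, 0, ⟨le_rfl, i.2, ?_, ?_, ?_⟩, (genSet_self hm hint i 0).symm⟩, rfl⟩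
      all_goals intro l _ _; omega
    · have hjp' := Fin.lt_def.1 hjp
      have pd := p.2
      -- `q l + 1 < mj l` follows from (2), as `w l + t l ≤ w (l + 1)`.
      have hqm : ∀ (l : ℕ) (h : l + 1 < d), (j : ℕ) ≤ l → l + 1 ≤ (p : ℕ) →
          q ⟨l, Nat.lt_of_succ_lt h⟩ + 2 ≤ mj ⟨l, Nat.lt_of_succ_lt h⟩ := by
        intro l h hl hl'
        have e1 := h2 l h hl hl'
        have e2 := B.left l h
        rw [hW l (by omega), hW (l + 1) h] at e2
        omega
      set a : ℕ → ℕ := extend fun l => (w l : ℕ) + mj l - 1 - q l with ha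
      have ha' : ∀ (l : ℕ) (h : l + 1 < d), (j : ℕ) ≤ l → l + 1 ≤ (p : ℕ) →
          a l + q ⟨l, Nat.lt_of_succ_lt h⟩ + 1 =
            (w ⟨l, Nat.lt_of_succ_lt h⟩ : ℕ) + mj ⟨l, Nat.lt_of_succ_lt h⟩ := by
        intro l h hl hl'
        have := hqm l h hl hl'
        rw [ha, extend_of_lt _ (Nat.lt_of_succ_lt h)]
        omega
      have G : GenData d (leftEnd w) (rightEnd w mj) t j p a := by
        refine ⟨hjp'.le, pd, fun l hl hl' => ?_, fun l hl hl' => ?_, fun l hl hl' => ?_⟩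
        · have e1 := h2 l (by omega) hl hl'
          have e2 := ha' l (by omega) hl hl'
          rw [hW (l + 1) (by omega)]
          omega
        · have e2 := ha' l (by omega) hl hl'
          have e3 := hE l (by omega)
          omega
        · have e1 := h2 l (by omega) hl (by omega)
          have e2 := ha' l (by omega) hl (by omega)
          have e3 := ha' (l + 1) (by omega) (by omega) (by omega)
          have e4 := h1 ⟨l + 1, by omega⟩ (Fin.lt_def.2 (by simp only; omega)) (Fin.lt_def.2 hl')
          omega
      refine ⟨_, ⟨j, p, a, G, rfl⟩, ?_⟩
      refine mul_right_cancel₀ (vTop_mul_vBot_ne_zero K j p q q')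
        ((sqfreeMon_genSet_mul K hm hint B G q q' ?_ ?_).trans hu.symm)
      · intro l hl hl'
        have := Fin.lt_def.1 hl'
        exact ha' l (by omega) hl hl'
      · intro l h hl hl'
        have e1 := h2 l h hl hl'
        have e2 := ha' l h hl hl'
        omega
  · rintro ⟨_, ⟨j, p, a, G, rfl⟩, rfl⟩
    have pd := G.pd
    have hjp := G.jp
    rcases hjp.eq_or_lt with rfl | hlt
    · left
      exact ⟨⟨j, pd⟩, by rw [← genSet_self (t := t) hm hint ⟨j, pd⟩ a]; rfl⟩
    · right
      have hq : ∀ (l : ℕ) (h : l + 1 < d), j ≤ l → l + 1 ≤ p →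
          a l + 1 ≤ (w ⟨l, Nat.lt_of_succ_lt h⟩ : ℕ) + mj ⟨l, Nat.lt_of_succ_lt h⟩ := by
        intro l h hl hl'
        have e1 := hE l h
        have e2 := G.hi l hl hl'
        omega
      have hq' : ∀ (l : ℕ) (h : l + 1 < d), j ≤ l → l + 1 ≤ p →
          (w ⟨l + 1, h⟩ : ℕ) + 1 ≤ a l + t l := by
        intro l h hl hl'
        have e1 := G.lo l hl hl'
        rwa [hW (l + 1) h] at e1
      refine ⟨⟨j, by omega⟩, ⟨p, pd⟩, hlt, fun l => (w l : ℕ) + mj l - 1 - a l,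
        fun l => a (l - 1) + t (l - 1) - 1 - w l, ?_, ?_, ?_⟩
      · intro l hl hl'
        have hl := Fin.lt_def.1 hl
        have hl' := Fin.lt_def.1 hl'
        simp only at hl hl'
        obtain ⟨k, hk⟩ : ∃ k, (l : ℕ) = k + 1 := ⟨l - 1, by omega⟩
        obtain ⟨l, hld⟩ := l
        obtain rfl : l = k + 1 := hk
        simp only at hl hl'
        have e1 := hq (k + 1) (by omega) (by omega) (by omega)
        have e2 := hq' k (by omega) (by omega) (by omega)
        have e3 := G.step k (by omega) (by omega)
        simp only [Nat.add_sub_cancel]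
        omega
      · intro l h hl hl'
        have e1 := hq l h hl hl'
        have e2 := hq' l h hl hl'
        simp only [Nat.add_sub_cancel]
        omega
      · refine sqfreeMon_genSet_mul K hm hint B (j := ⟨j, by omega⟩) (p := ⟨p, pd⟩) G _ _ ?_ ?_
        · intro l hl hl'
          have hl' := Fin.lt_def.1 hl'
          simp only at hl'
          have e1 := hq l (by omega) hl hl'
          simp only [Fin.eta] at e1 ⊢
          omega
        · intro l h hl hl'
          have e2 := hq' l h hl hl'
          simp only [Nat.add_sub_cancel]
          omega

end

/-- **Theorem.**  If each part is an integer interval `V_j = [i_j, i_j + n_j - 1]`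
(`w j` the left endpoint `i_j`, `mj j = n_j`), then the monomials listed in `dualGens` are
precisely the minimal monomial generators of the Alexander dual `I(K_V^𝐭)^∨`: they generate
`I(K_V^𝐭)^∨`, and none of them is redundant. -/
theorem alexDual_minimal_generators
    (K : Type) [Field K] (n d : ℕ) (hd : 0 < d)
    (V : Fin d → Finset (Fin n)) (t : ℕ → ℕ)
    (ht : ∀ i, 1 ≤ t i)
    (hV : ∀ i j : Fin d, i < j → ∀ p ∈ V i, ∀ q ∈ V j, (p : ℕ) < (q : ℕ))
    (hne : ∀ j, (V j).Nonempty)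
    (hiso : ∀ (j : Fin d), ∀ v ∈ V j, ∃ e, IsSpreadEdge n d V t e ∧ e j = v)
    (w : Fin d → Fin n) (mj : Fin d → ℕ) (hm : ∀ j, 0 < mj j)
    (hint : ∀ (j : Fin d) (x : Fin n),
      x ∈ V j ↔ (w j : ℕ) ≤ (x : ℕ) ∧ (x : ℕ) < (w j : ℕ) + mj j) :
    Ideal.span (dualGens K n d V t w mj) = alexDual K n d V t ∧
      ∀ u ∈ dualGens K n d V t w mj,
        u ∉ Ideal.span (dualGens K n d V t w mj \ {u}) := by
  have B := blocks hV hiso hm hint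
  rw [dualGens_eq K hm hint B]
  refine minimal_generators_of_covers K n d V t _ ?_ ?_ ?_
  · rintro _ ⟨j, p, a, G, rfl⟩ e he
    obtain ⟨l, hl, h⟩ := InGen.meets G (natEdge_extend hm hint he)
    rw [extend_of_lt _ hl] at h
    exact ⟨⟨l, hl⟩, mem_genSet.2 h⟩
  · rintro _ ⟨j, p, a, G, rfl⟩ x hx
    obtain ⟨e, he, h⟩ := InGen.exists_private_edge ht B G (mem_genSet.1 hx)
    obtain ⟨e', he', heq⟩ := exists_spreadEdge hm hint he
    refine ⟨e', he', fun l hl => Fin.ext ?_⟩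
    have hl := mem_genSet.1 hl
    rw [heq] at hl ⊢
    exact h l l.2 hl
  · intro D hD
    obtain ⟨j, p, a, G, h⟩ := exists_gen_le (d := d) (W := leftEnd w) (E := rightEnd w mj)
      (t := t) (fun x => ∃ y ∈ D, (y : ℕ) = x) n (by rintro _ ⟨y, _, rfl⟩; exact y.2) (by
        intro e he
        obtain ⟨e', he', heq⟩ := exists_spreadEdge hm hint he
        obtain ⟨l, hl⟩ := hD e' he'
        exact ⟨l, l.2, e' l, hl, heq l⟩)
    refine ⟨_, ⟨j, p, a, G, rfl⟩, fun x hx => ?_⟩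
    obtain ⟨y, hy, hyx⟩ := h x (mem_genSet.1 hx)
    exact Fin.ext hyx ▸ hy

end
end
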